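/- arXiv:math/0702749 — 2 statements merged into one kernel-verified Lean document; each statement's English description precedes it below -/
import Mathlib

section
/- Let K be a number field whose ring of integers 𝒪 = 𝓞_K has infinitely many units (i.e. the unit group (𝓞_K)ˣ is infinite). Let T be a simplicial tree and let X be a metric space admitting a quasi-isometry to T. Then every action of SL(2, 𝓞_K) by isometries on X has a bounded orbit; that is, for every such action and every x ∈ X, the set {g·x : g ∈ SL(2,𝓞_K)} is bounded. -/
open NumberField

/-!
The Rips graph of a quasi-tree turns an isometric action of a group `G` into a hyperbolic length
function `ℓ` on `G` with a bottleneck property, for which Serre's lemma on groups of elliptic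
isometries of a tree survives coarsely: if `S` is bounded and `ℓ (h²) ≤ ℓ h + c` for all `h` in the
group generated by `S`, then that group is bounded.

For `SL(2, 𝓞 K)`, conjugation by the diagonal matrix of a unit of infinite order forces the
elementary matrices to have translation length zero, so they are bounded. Every `g` has a power
which is, in the manner of the Carter–Keller proof of bounded generation, a product of a bounded
number of elementary matrices, so `ℓ (g²) ≤ ℓ g + c` for all `g`. Finally, a Euclidean descent with
finitely many denominators generates the group by finitely many one-parameter unipotent groups, the
upper triangular matrices and a finite set, all of which are bounded.
-/

section LengthFunctions

variable {G : Type*} [Group G] {ℓ : GroupSeminorm G} {δ C c : ℝ}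

/-- The Gromov product `(g | h)` based at the identity, for the left-invariant pseudometric
`(g, h) => ℓ (g⁻¹ * h)` attached to a length function `ℓ`. -/
noncomputable def gromovProduct (ℓ : GroupSeminorm G) (g h : G) : ℝ :=
  (ℓ g + ℓ h - ℓ (g⁻¹ * h)) / 2

/-- Gromov's `δ`-hyperbolicity of the left-invariant pseudometric attached to `ℓ`. -/
def IsGromovHyperbolic (ℓ : GroupSeminorm G) (δ : ℝ) : Prop :=
  ∀ g h k, min (gromovProduct ℓ g h) (gromovProduct ℓ h k) - δ ≤ gromovProduct ℓ g k

/-- Manning's bottleneck property, in the only form needed here: a path in the group that leads from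
`1` to `g` by steps of length at most `L` has to pass near the midpoint of `1` and `g`. -/
def HasMidpointSplitting (ℓ : GroupSeminorm G) (C : ℝ) : Prop :=
  ∀ (L : ℝ) (s : List G), 0 ≤ L → (∀ x ∈ s, ℓ x ≤ L) →
    ∃ s₁ s₂ : List G, s = s₁ ++ s₂ ∧ ℓ s₁.prod ≤ ℓ s.prod / 2 + C + L ∧
      ℓ s₂.prod ≤ ℓ s.prod / 2 + C + L

theorem fg_range_of_module_finite {A : Type*} [AddCommGroup A] [Module.Finite ℤ A]
    (e : Multiplicative A →* G) : e.range.FG := by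
  have : AddGroup.FG A := Module.Finite.iff_addGroup_fg.1 inferInstance
  exact (Group.fg_iff_subgroup_fg _).1 inferInstance

theorem length_mul_mul_le (ℓ : GroupSeminorm G) (a b c : G) : ℓ (a * b * c) ≤ ℓ a + ℓ b + ℓ c :=
  (map_mul_le_add ℓ (a * b) c).trans (by gcongr; exact map_mul_le_add ℓ a b)

theorem length_conj_le (ℓ : GroupSeminorm G) (g u : G) : ℓ (g * u * g⁻¹) ≤ ℓ u + 2 * ℓ g := by
  have h := length_mul_mul_le ℓ g u g⁻¹
  rw [map_inv_eq_map] at h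
  linarith

theorem gromovProduct_comm (ℓ : GroupSeminorm G) (g h : G) :
    gromovProduct ℓ g h = gromovProduct ℓ h g := by
  have : ℓ (g⁻¹ * h) = ℓ (h⁻¹ * g) := by rw [← map_inv_eq_map, mul_inv_rev, inv_inv]
  rw [gromovProduct, gromovProduct, this, add_comm]

theorem gromovProduct_inv_left (ℓ : GroupSeminorm G) (g h : G) :
    gromovProduct ℓ g⁻¹ h = (ℓ g + ℓ h - ℓ (g * h)) / 2 := by
  rw [gromovProduct, inv_inv, map_inv_eq_map]

theorem gromovProduct_inv_self (ℓ : GroupSeminorm G) (g : G) :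
    gromovProduct ℓ g⁻¹ g = ℓ g - ℓ (g ^ 2) / 2 := by
  rw [gromovProduct_inv_left, pow_two]
  ring

namespace IsGromovHyperbolic

variable (hℓ : IsGromovHyperbolic ℓ δ)
include hℓ

theorem nonneg : 0 ≤ δ := by
  simpa [gromovProduct] using hℓ 1 1 1

theorem four_point (g h k : G) :
    ℓ h + ℓ (g⁻¹ * k) ≤ max (ℓ g + ℓ (h⁻¹ * k)) (ℓ k + ℓ (g⁻¹ * h)) + 2 * δ := by
  have hyp := sub_le_iff_le_add.1 (hℓ g h k)
  simp only [gromovProduct] at hyp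
  rcases min_le_iff.1 hyp with h' | h'
  · linarith [le_max_right (ℓ g + ℓ (h⁻¹ * k)) (ℓ k + ℓ (g⁻¹ * h))]
  · linarith [le_max_left (ℓ g + ℓ (h⁻¹ * k)) (ℓ k + ℓ (g⁻¹ * h))]

theorem gromovProduct_right_le {g h k : G} {a : ℝ} (hgk : gromovProduct ℓ g k ≤ a)
    (hgh : a + δ < gromovProduct ℓ g h) : gromovProduct ℓ h k ≤ a + δ :=
  (min_le_iff.1 (sub_le_iff_le_add.1 ((hℓ g h k).trans hgk))).resolve_left hgh.not_ge

theorem gromovProduct_left_le {g h k : G} {a : ℝ} (hgk : gromovProduct ℓ g k ≤ a)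
    (hhk : a + δ < gromovProduct ℓ h k) : gromovProduct ℓ g h ≤ a + δ :=
  (min_le_iff.1 (sub_le_iff_le_add.1 ((hℓ g h k).trans hgk))).resolve_right hhk.not_ge

theorem length_pow_add_one_le {h : G} (hh : ℓ h + 2 * δ + 1 ≤ ℓ (h ^ 2)) {n : ℕ} (hn : 1 ≤ n) :
    ℓ (h ^ n) + 1 ≤ ℓ (h ^ (n + 1)) := by
  induction n, hn using Nat.le_induction with
  | base =>
    rw [pow_one]
    linarith [hℓ.nonneg]
  | succ n _ ih =>
    have four := hℓ.four_point h (h ^ 2) (h ^ (n + 2))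
    have e₁ : h⁻¹ * h ^ (n + 2) = h ^ (n + 1) := by rw [pow_succ' h (n + 1), inv_mul_cancel_left]
    have e₂ : (h ^ 2)⁻¹ * h ^ (n + 2) = h ^ n := by rw [add_comm, pow_add, inv_mul_cancel_left]
    have e₃ : h⁻¹ * h ^ 2 = h := by rw [pow_two, inv_mul_cancel_left]
    rw [e₁, e₂, e₃, ← sub_le_iff_le_add, le_max_iff] at four
    rcases four with four | four <;> linarith

theorem natCast_le_length_pow_succ {h : G} (hh : ℓ h + 2 * δ + 1 ≤ ℓ (h ^ 2)) (n : ℕ) :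
    (n : ℝ) ≤ ℓ (h ^ (n + 1)) := by
  induction n with
  | zero => exact Nat.cast_zero.trans_le (apply_nonneg ℓ _)
  | succ n ih =>
    push_cast
    linarith [hℓ.length_pow_add_one_le hh n.succ_pos]

/-- An element with a short power is not loxodromic, so squaring it barely adds to its length. -/
theorem length_sq_le_of_length_pow_lt {h : G} {n : ℕ} (hn : ℓ (h ^ (n + 1)) < n) :
    ℓ (h ^ 2) ≤ ℓ h + (2 * δ + 1) := by
  by_contra! hlt
  exact hn.not_ge (hℓ.natCast_le_length_pow_succ (by linarith) n)

/-- Chasing Gromov products along `k⁻¹, k'` → `k, k'` → `k, k'⁻¹` → `k, (kk')⁻¹` → `kk', (kk')⁻¹`: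
each product is at most `δ` more than the previous one unless `k k'` is short, and the last one is
about `ℓ (k k') / 2`. -/
theorem length_mul_le_of_length_sq_le {k k' : G} {E : ℝ} (hE : 0 ≤ E) (hc : 0 ≤ c)
    (hk : ℓ k ≤ ℓ (k * k') / 2 + E) (hk' : ℓ k' ≤ ℓ (k * k') / 2 + E)
    (hsq : ℓ (k ^ 2) ≤ ℓ k + c) (hsq' : ℓ (k' ^ 2) ≤ ℓ k' + c)
    (hsq_mul : ℓ ((k * k') ^ 2) ≤ ℓ (k * k') + c) :
    ℓ (k * k') ≤ 6 * E + 16 * δ + 2 * c := by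
  by_contra! hlong
  have hδ := hℓ.nonneg
  have hmul := map_mul_le_add ℓ k k'
  have h₀ : gromovProduct ℓ k⁻¹ k' ≤ E := by
    rw [gromovProduct_inv_left]; linarith
  have h₁ : gromovProduct ℓ k k' ≤ E + δ := by
    refine hℓ.gromovProduct_right_le h₀ ?_
    rw [gromovProduct_inv_self]; linarith
  have h₂ : gromovProduct ℓ k k'⁻¹ ≤ E + δ + δ := by
    refine hℓ.gromovProduct_left_le h₁ ?_
    rw [gromovProduct_inv_self]; linarith
  have h₃ : gromovProduct ℓ k (k * k')⁻¹ ≤ E + δ + δ + δ := by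
    refine hℓ.gromovProduct_left_le h₂ ?_
    rw [gromovProduct_inv_left, mul_inv_cancel_right, map_inv_eq_map]; linarith
  have h₄ : gromovProduct ℓ (k * k') (k * k')⁻¹ ≤ E + δ + δ + δ + δ := by
    refine hℓ.gromovProduct_right_le h₃ ?_
    rw [gromovProduct, inv_mul_cancel_left]; linarith
  rw [gromovProduct_comm, gromovProduct_inv_self] at h₄
  linarith

/-- A coarse form of Serre's lemma that a group generated by finitely many elements fixes a point
of a tree as soon as all its elements are elliptic. -/
theorem bddAbove_length_closure (hsplit : HasMidpointSplitting ℓ C) {S : Set G}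
    (hS : BddAbove (ℓ '' S)) (hsq : ∀ h ∈ Subgroup.closure S, ℓ (h ^ 2) ≤ ℓ h + c) :
    BddAbove (ℓ '' Subgroup.closure S) := by
  obtain ⟨L, hL⟩ := hS
  have hSL : ∀ x, x ∈ S ∨ x⁻¹ ∈ S → ℓ x ≤ |L| := by
    rintro x (hx | hx)
    · exact (hL ⟨x, hx, rfl⟩).trans (le_abs_self L)
    · exact (map_inv_eq_map ℓ x ▸ hL ⟨x⁻¹, hx, rfl⟩).trans (le_abs_self L)
  refine ⟨6 * (|C| + |L|) + 16 * δ + 2 * |c|, ?_⟩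
  rintro _ ⟨h, hh, rfl⟩
  obtain ⟨s, hs, rfl⟩ : ∃ s : List G, (∀ x ∈ s, x ∈ S ∨ x⁻¹ ∈ S) ∧ s.prod = h := by
    rw [SetLike.mem_coe, ← Subgroup.mem_toSubmonoid, Subgroup.closure_toSubmonoid] at hh
    exact Submonoid.exists_list_of_mem_closure hh
  obtain ⟨s₁, s₂, rfl, h₁, h₂⟩ := hsplit |L| s (abs_nonneg L) fun x hx => hSL x (hs x hx)
  have prod_mem : ∀ t : List G, (∀ x ∈ t, x ∈ s₁ ++ s₂) → t.prod ∈ Subgroup.closure S :=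
    fun t ht => Subgroup.list_prod_mem _ fun x hx => (hs x (ht x hx)).elim
      (fun hx => Subgroup.subset_closure hx)
      (fun hx => inv_mem_iff.1 (Subgroup.subset_closure hx))
  have hsq_abs : ∀ h ∈ Subgroup.closure S, ℓ (h ^ 2) ≤ ℓ h + |c| :=
    fun h hh => (hsq h hh).trans (by gcongr; exact le_abs_self c)
  rw [List.prod_append] at hh h₁ h₂ ⊢
  have hC := le_abs_self C
  exact hℓ.length_mul_le_of_length_sq_le (by positivity) (abs_nonneg c) (by linarith) (by linarith)
    (hsq_abs _ (prod_mem s₁ fun _ => List.mem_append_left _))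
    (hsq_abs _ (prod_mem s₂ fun _ => List.mem_append_right _)) (hsq_abs _ hh)

theorem bddAbove_length_of_fg (hsplit : HasMidpointSplitting ℓ C) {H : Subgroup G} (hH : H.FG)
    (hsq : ∀ h ∈ H, ℓ (h ^ 2) ≤ ℓ h + c) : BddAbove (ℓ '' H) := by
  obtain ⟨S, rfl⟩ := hH
  exact hℓ.bddAbove_length_closure hsplit (S.finite_toSet.image ℓ).bddAbove hsq

end IsGromovHyperbolic

theorem subadditive_length_pow (ℓ : GroupSeminorm G) (g : G) : Subadditive fun n => ℓ (g ^ n) := by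
  intro m n
  simp only [pow_add]
  exact map_mul_le_add ℓ _ _

/-- The stable translation length `lim ℓ (g ^ n) / n` of `g`. -/
noncomputable def translationLength (ℓ : GroupSeminorm G) (g : G) : ℝ :=
  (subadditive_length_pow ℓ g).lim

open Filter Topology

theorem tendsto_length_pow_div (ℓ : GroupSeminorm G) (g : G) :
    Tendsto (fun n : ℕ => ℓ (g ^ n) / n) atTop (𝓝 (translationLength ℓ g)) := by
  refine (subadditive_length_pow ℓ g).tendsto_lim ⟨0, ?_⟩
  rintro _ ⟨n, rfl⟩
  positivity

theorem translationLength_nonneg (ℓ : GroupSeminorm G) (g : G) : 0 ≤ translationLength ℓ g :=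
  ge_of_tendsto' (tendsto_length_pow_div ℓ g) fun n => by positivity

theorem translationLength_mul_le (ℓ : GroupSeminorm G) {u v : G} (huv : Commute u v) :
    translationLength ℓ (u * v) ≤ translationLength ℓ u + translationLength ℓ v := by
  refine le_of_tendsto_of_tendsto' (tendsto_length_pow_div ℓ (u * v))
    ((tendsto_length_pow_div ℓ u).add (tendsto_length_pow_div ℓ v)) fun n => ?_
  rw [← add_div, huv.mul_pow]
  gcongr
  exact map_mul_le_add ℓ _ _

theorem translationLength_inv (ℓ : GroupSeminorm G) (u : G) :
    translationLength ℓ u⁻¹ = translationLength ℓ u := by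
  refine tendsto_nhds_unique (tendsto_length_pow_div ℓ u⁻¹) ?_
  simpa only [inv_pow, map_inv_eq_map] using tendsto_length_pow_div ℓ u

theorem translationLength_conj_le (ℓ : GroupSeminorm G) (g u : G) :
    translationLength ℓ (g * u * g⁻¹) ≤ translationLength ℓ u := by
  have hlim := (tendsto_length_pow_div ℓ u).add (tendsto_const_div_atTop_nhds_zero_nat (2 * ℓ g))
  rw [add_zero] at hlim
  refine le_of_tendsto_of_tendsto' (tendsto_length_pow_div ℓ _) hlim fun n => ?_
  rw [← add_div, conj_pow]
  gcongr
  exact length_conj_le ℓ g _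

theorem translationLength_conj (ℓ : GroupSeminorm G) (g u : G) :
    translationLength ℓ (g * u * g⁻¹) = translationLength ℓ u := by
  refine (translationLength_conj_le ℓ g u).antisymm ?_
  simpa [mul_assoc] using translationLength_conj_le ℓ g⁻¹ (g * u * g⁻¹)

theorem translationLength_pow (ℓ : GroupSeminorm G) (u : G) {m : ℕ} (hm : m ≠ 0) :
    translationLength ℓ (u ^ m) = m * translationLength ℓ u := by
  have hsub : Tendsto (fun n : ℕ => m * n) atTop atTop :=
    tendsto_id.const_mul_atTop' (Nat.pos_of_ne_zero hm)
  refine tendsto_nhds_unique (tendsto_length_pow_div ℓ (u ^ m))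
    ((((tendsto_length_pow_div ℓ u).comp hsub).const_mul (m : ℝ)).congr fun n => ?_)
  simp only [Function.comp_apply, pow_mul]
  push_cast
  rw [mul_div_assoc', mul_div_mul_left _ _ (Nat.cast_ne_zero.2 hm)]

namespace IsGromovHyperbolic

variable (hℓ : IsGromovHyperbolic ℓ δ)
include hℓ

theorem translationLength_mul_add_le {u v : G} (huv : Commute u v) :
    translationLength ℓ (u * v) + translationLength ℓ (u⁻¹ * v) ≤
      2 * max (translationLength ℓ u) (translationLength ℓ v) := by
  have hlim := (((tendsto_length_pow_div ℓ u).max (tendsto_length_pow_div ℓ v)).const_mul 2).add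
    (tendsto_const_div_atTop_nhds_zero_nat (2 * δ))
  rw [add_zero] at hlim
  refine le_of_tendsto_of_tendsto' ((tendsto_length_pow_div ℓ (u * v)).add
    (tendsto_length_pow_div ℓ (u⁻¹ * v))) hlim fun n => ?_
  have four := hℓ.four_point (u ^ n) (u ^ n * v ^ n) (v ^ n)
  have e : (u ^ n * v ^ n)⁻¹ * v ^ n = (u ^ n)⁻¹ := by
    rw [(huv.pow_pow n n).eq, mul_inv_rev, inv_mul_cancel_right]
  rw [e, inv_mul_cancel_left, map_inv_eq_map, ← two_mul, ← two_mul,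
    ← mul_max_of_nonneg _ _ zero_le_two] at four
  rw [huv.mul_pow, huv.inv_left.mul_pow, inv_pow, ← add_div, max_div_div_right n.cast_nonneg,
    mul_div_assoc', ← add_div]
  gcongr

/-- Two commuting elements with the same translation length translate along a common axis, in the
same direction or in opposite ones. -/
theorem translationLength_mul_eq_zero_or {u v : G} (huv : Commute u v)
    (heq : translationLength ℓ u = translationLength ℓ v) :
    translationLength ℓ (u * v) = 0 ∨ translationLength ℓ (u⁻¹ * v) = 0 := by
  have hcomm : Commute (u * v) (u⁻¹ * v) :=
    ((Commute.refl u).inv_right.mul_right huv).mul_left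
      (huv.symm.inv_right.mul_right (Commute.refl v))
  have e₁ : u * v * (u⁻¹ * v) = v ^ 2 := by
    rw [huv.eq, mul_assoc, mul_inv_cancel_left, pow_two]
  have e₂ : (u * v)⁻¹ * (u⁻¹ * v) = (u ^ 2)⁻¹ := by
    rw [huv.eq, huv.inv_left.eq, mul_inv_rev, mul_assoc, inv_mul_cancel_left, pow_two, mul_inv_rev]
  have hsum := hℓ.translationLength_mul_add_le huv
  have hsum' := hℓ.translationLength_mul_add_le hcomm
  rw [e₁, e₂, translationLength_inv, translationLength_pow ℓ _ two_ne_zero,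
    translationLength_pow ℓ _ two_ne_zero, heq] at hsum'
  rw [heq, max_self] at hsum
  push_cast at hsum'
  have h₁ := translationLength_nonneg ℓ (u * v)
  have h₂ := translationLength_nonneg ℓ (u⁻¹ * v)
  rcases le_total (translationLength ℓ (u * v)) (translationLength ℓ (u⁻¹ * v)) with h | h
  · rw [max_eq_right h] at hsum'
    exact Or.inl (by linarith)
  · rw [max_eq_left h] at hsum'
    exact Or.inr (by linarith)

theorem length_sq_le_of_translationLength_eq_zero {h : G} (hh : translationLength ℓ h = 0) :
    ℓ (h ^ 2) ≤ ℓ h + (2 * δ + 1) := by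
  have hev : ∀ᶠ n : ℕ in atTop, ℓ (h ^ n) / n < 1 / 2 :=
    (tendsto_length_pow_div ℓ h).eventually (gt_mem_nhds (by rw [hh]; norm_num))
  obtain ⟨n, hn, hn₁⟩ := ((tendsto_add_atTop_nat 1).eventually hev |>.and
    (eventually_ge_atTop 1)).exists
  refine hℓ.length_sq_le_of_length_pow_lt (n := n) ?_
  have : (1 : ℝ) ≤ n := by exact_mod_cast hn₁
  rw [div_lt_iff₀ (by positivity)] at hn
  push_cast at hn
  linarith

section AdditiveFamily

variable {R : Type*} [CommRing R] {e : Multiplicative R →* G} {η : R} {h : G}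

open Multiplicative (ofAdd)

/-- `e x` and its conjugate `e (η x)` have the same translation length, so `e ((1 ± η) x)` has
translation length zero for one of the signs; conjugating again removes the ambiguity. -/
theorem translationLength_ofAdd_sq_sub_one_mul
    (hη : ∀ x, h * e (ofAdd x) * h⁻¹ = e (ofAdd (η * x))) (x : R) :
    translationLength ℓ (e (ofAdd ((η ^ 2 - 1) * x))) = 0 := by
  let τ : R → ℝ := fun y => translationLength ℓ (e (ofAdd y))
  have τ_mul : ∀ y, τ (η * y) = τ y := fun y => by
    simp only [τ, ← hη, translationLength_conj]
  have τ_neg : ∀ y, τ (-y) = τ y := fun y => by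
    simp only [τ, ofAdd_neg, map_inv, translationLength_inv]
  have comm : ∀ y z, Commute (e (ofAdd y)) (e (ofAdd z)) := fun y z => (Commute.all _ _).map e
  have τ_add : ∀ y z, τ y = 0 → τ z = 0 → τ (y + z) = 0 := fun y z hy hz => by
    refine le_antisymm ?_ (translationLength_nonneg ℓ _)
    simpa only [τ, ofAdd_add, map_mul, hy, hz, add_zero] using
      (translationLength_mul_le ℓ (comm y z)).trans_eq (congrArg₂ (· + ·) hy hz)
  change τ ((η ^ 2 - 1) * x) = 0
  rcases hℓ.translationLength_mul_eq_zero_or (comm x (η * x)) (τ_mul x).symm with hx | hx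
  · rw [← map_mul, ← ofAdd_add] at hx
    rw [show (η ^ 2 - 1) * x = η * (x + η * x) + -(x + η * x) by ring]
    exact τ_add _ _ ((τ_mul _).trans hx) ((τ_neg _).trans hx)
  · rw [← map_inv, ← ofAdd_neg, ← map_mul, ← ofAdd_add] at hx
    rw [show (η ^ 2 - 1) * x = η * (-x + η * x) + (-x + η * x) by ring]
    exact τ_add _ _ ((τ_mul _).trans hx) hx

theorem translationLength_ofAdd_eq_zero
    (hη : ∀ x, h * e (ofAdd x) * h⁻¹ = e (ofAdd (η * x))) {m : ℕ} (hm : m ≠ 0)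
    (hdvd : η ^ 2 - 1 ∣ (m : R)) (x : R) : translationLength ℓ (e (ofAdd x)) = 0 := by
  obtain ⟨y, hy⟩ := hdvd
  have hzero := hℓ.translationLength_ofAdd_sq_sub_one_mul hη (y * x)
  rw [← mul_assoc, ← hy, ← nsmul_eq_mul, ofAdd_nsmul, map_pow, translationLength_pow ℓ _ hm]
    at hzero
  exact (mul_eq_zero.1 hzero).resolve_left (Nat.cast_ne_zero.2 hm)

theorem bddAbove_length_ofAdd (hsplit : HasMidpointSplitting ℓ C) [Module.Finite ℤ R]
    (hη : ∀ x, h * e (ofAdd x) * h⁻¹ = e (ofAdd (η * x))) {m : ℕ} (hm : m ≠ 0)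
    (hdvd : η ^ 2 - 1 ∣ (m : R)) : BddAbove (Set.range fun x => ℓ (e (ofAdd x))) := by
  refine (hℓ.bddAbove_length_of_fg hsplit (fg_range_of_module_finite e) (c := 2 * δ + 1) ?_).mono ?_
  · rintro _ ⟨x, rfl⟩
    exact hℓ.length_sq_le_of_translationLength_eq_zero
      (hℓ.translationLength_ofAdd_eq_zero hη hm hdvd x.toAdd)
  · rintro _ ⟨x, rfl⟩
    exact ⟨_, ⟨ofAdd x, rfl⟩, rfl⟩

end AdditiveFamily

end IsGromovHyperbolic

end LengthFunctions

section TreeLikeGraphs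

variable {V : Type*} {T : SimpleGraph V} {X : Type*} {Γ : SimpleGraph X} {a b c o z : X}

/-- `c` lies on a geodesic from `a` to `b` in the graph metric. -/
def OnGeodesic (Γ : SimpleGraph X) (a c b : X) : Prop :=
  Γ.dist a c + Γ.dist c b = Γ.dist a b

theorem onGeodesic_left (Γ : SimpleGraph X) (a b : X) : OnGeodesic Γ a a b := by
  simp [OnGeodesic]

theorem onGeodesic_right (Γ : SimpleGraph X) (a b : X) : OnGeodesic Γ a b b := by
  simp [OnGeodesic]

theorem onGeodesic_of_mem_support (hΓ : Γ.Connected) {p : Γ.Walk a b}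
    (hp : p.length = Γ.dist a b) (hc : c ∈ p.support) : OnGeodesic Γ a c b := by
  classical
  refine le_antisymm ?_ hΓ.dist_triangle
  rw [← hp, ← p.take_spec hc, SimpleGraph.Walk.length_append]
  exact add_le_add (SimpleGraph.dist_le _) (SimpleGraph.dist_le _)

theorem OnGeodesic.or_of_isTree (hT : T.IsTree) {a b c : V} (h : OnGeodesic T a c b) (o : V) :
    OnGeodesic T a c o ∨ OnGeodesic T o c b := by
  classical
  have hconn := hT.connected
  obtain ⟨p, hp⟩ := hconn.exists_walk_length_eq_dist a o
  obtain ⟨r, hr⟩ := hconn.exists_walk_length_eq_dist o b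
  obtain ⟨p', hp'⟩ := hconn.exists_walk_length_eq_dist a c
  obtain ⟨r', hr'⟩ := hconn.exists_walk_length_eq_dist c b
  have hpath : (p'.append r').IsPath :=
    SimpleGraph.Walk.isPath_of_length_eq_dist _ <| by
      rw [SimpleGraph.Walk.length_append, hp', hr', h]
  have heq : p'.append r' = (p.append r).bypass :=
    congrArg Subtype.val <| (hT.isAcyclic.subsingleton_path _ _).elim
      ⟨_, hpath⟩ ⟨_, SimpleGraph.Walk.bypass_isPath _⟩
  have hmem : c ∈ (p'.append r').support :=
    (SimpleGraph.Walk.mem_support_append_iff _ _).2 (Or.inl p'.end_mem_support)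
  rw [heq] at hmem
  rcases (SimpleGraph.Walk.mem_support_append_iff _ _).1
    (SimpleGraph.Walk.support_bypass_subset_support _ hmem) with hc | hc
  · exact Or.inl (onGeodesic_of_mem_support hconn hp hc)
  · exact Or.inr (onGeodesic_of_mem_support hconn hr hc)

theorem OnGeodesic.exists_step_of_isTree (hT : T.IsTree) {f : ℕ → V} {c : V} {n : ℕ}
    (h : OnGeodesic T (f 0) c (f (n + 1))) : ∃ i ≤ n, OnGeodesic T (f i) c (f (i + 1)) := by
  induction n with
  | zero => exact ⟨0, le_rfl, h⟩
  | succ n ih =>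
    rcases h.or_of_isTree hT (f (n + 1)) with h | h
    · obtain ⟨i, hi, hstep⟩ := ih h
      exact ⟨i, hi.trans n.le_succ, hstep⟩
    · exact ⟨n + 1, le_rfl, h⟩

theorem exists_adjacent_of_zero_of_not {P : ℕ → Prop} {n : ℕ} (h₀ : P 0) (hn : ¬ P n) :
    ∃ j < n, P j ∧ ¬ P (j + 1) := by
  by_contra! hstep
  have hall : ∀ i ≤ n, P i := fun i => by
    induction i with
    | zero => exact fun _ => h₀
    | succ i ih => exact fun hi => hstep i hi (ih (Nat.le_of_succ_le hi))
  exact hn (hall n le_rfl)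

theorem exists_approx_median_of_isTree (hT : T.IsTree) (a b o : V) :
    ∃ c c', OnGeodesic T a c b ∧ OnGeodesic T a c o ∧ OnGeodesic T o c' b ∧ T.dist c' c ≤ 1 := by
  obtain ⟨p, hp⟩ := hT.connected.exists_walk_length_eq_dist a b
  have hgeod : ∀ i, OnGeodesic T a (p.getVert i) b := fun i =>
    onGeodesic_of_mem_support hT.connected hp (p.getVert_mem_support i)
  by_cases hb : OnGeodesic T a b o
  · exact ⟨b, b, onGeodesic_right T a b, hb, onGeodesic_right T o b, by simp⟩
  · obtain ⟨j, hj, hcj, hcj'⟩ : ∃ j < p.length, OnGeodesic T a (p.getVert j) o ∧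
        ¬ OnGeodesic T a (p.getVert (j + 1)) o :=
      exists_adjacent_of_zero_of_not (by rw [p.getVert_zero]; exact onGeodesic_left T a o)
        (by rwa [p.getVert_length])
    exact ⟨_, _, hgeod j, hcj, ((hgeod (j + 1)).or_of_isTree hT o).resolve_left hcj',
      (SimpleGraph.dist_eq_one_iff_adj.2 (p.adj_getVert_succ hj).symm).le⟩

theorem exists_onGeodesic_midpoint (hΓ : Γ.Connected) (a b : X) :
    ∃ m, OnGeodesic Γ a m b ∧ 2 * Γ.dist a m ≤ Γ.dist a b + 1 ∧
      2 * Γ.dist m b ≤ Γ.dist a b + 1 := by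
  obtain ⟨p, hp⟩ := hΓ.exists_walk_length_eq_dist a b
  have htake := SimpleGraph.dist_le (p.take (p.length / 2))
  have hdrop := SimpleGraph.dist_le (p.drop (p.length / 2))
  rw [SimpleGraph.Walk.take_length] at htake
  rw [SimpleGraph.Walk.drop_length] at hdrop
  exact ⟨_, onGeodesic_of_mem_support hΓ hp (p.getVert_mem_support (p.length / 2)),
    by omega, by omega⟩

theorem dist_apply_iso {W : Type*} {Δ : SimpleGraph W} (f : Γ ≃g Δ) (hΓ : Γ.Connected) (a b : X) :
    Δ.dist (f a) (f b) = Γ.dist a b := by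
  have hΔ : Δ.Connected := f.connected_iff.1 hΓ
  refine le_antisymm ?_ ?_
  · obtain ⟨p, hp⟩ := hΓ.exists_walk_length_eq_dist a b
    exact hp ▸ (p.length_map f.toHom) ▸ SimpleGraph.dist_le _
  · obtain ⟨p, hp⟩ := hΔ.exists_walk_length_eq_dist (f a) (f b)
    have := SimpleGraph.dist_le (p.map f.symm.toHom)
    simpa [hp] using this

/-- The Gromov product `(a | b)_o` for the graph metric. -/
noncomputable def graphGromovProduct (Γ : SimpleGraph X) (o a b : X) : ℝ :=
  (Γ.dist o a + Γ.dist o b - Γ.dist a b) / 2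

theorem graphGromovProduct_le_dist (hΓ : Γ.Connected) (h : OnGeodesic Γ a z b) (o : X) :
    graphGromovProduct Γ o a b ≤ Γ.dist o z := by
  have h' : (Γ.dist a z : ℝ) + Γ.dist z b = Γ.dist a b := mod_cast h
  have hoa : (Γ.dist o a : ℝ) ≤ Γ.dist o z + Γ.dist a z := by
    rw [Γ.dist_comm (u := a)]; exact_mod_cast hΓ.dist_triangle
  have hob : (Γ.dist o b : ℝ) ≤ Γ.dist o z + Γ.dist z b := mod_cast hΓ.dist_triangle
  rw [graphGromovProduct]
  linarith

theorem dist_le_graphGromovProduct_add (hΓ : Γ.Connected) {z₁ z₂ : X} {k : ℕ}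
    (h₁ : OnGeodesic Γ a z₁ o) (h₂ : OnGeodesic Γ o z₂ b) (hz₁ : Γ.dist z₁ z ≤ k)
    (hz₂ : Γ.dist z₂ z ≤ k) : Γ.dist o z ≤ graphGromovProduct Γ o a b + 2 * k := by
  have hoz₁ := hΓ.dist_triangle (u := o) (v := z₁) (w := z)
  have hoz₂ := hΓ.dist_triangle (u := o) (v := z₂) (w := z)
  have haz := hΓ.dist_triangle (u := a) (v := z₁) (w := z)
  have hzb := hΓ.dist_triangle (u := z) (v := z₂) (w := b)
  have hab := hΓ.dist_triangle (u := a) (v := z) (w := b)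
  rw [OnGeodesic, Γ.dist_comm (u := z₁) (v := o), Γ.dist_comm (u := a) (v := o)] at h₁
  rw [Γ.dist_comm (u := z) (v := z₂)] at hzb
  rw [OnGeodesic] at h₂
  have key : 2 * Γ.dist o z + Γ.dist a b ≤ Γ.dist o a + Γ.dist o b + 4 * k := by omega
  have key' : 2 * (Γ.dist o z : ℝ) + Γ.dist a b ≤ Γ.dist o a + Γ.dist o b + 4 * k := mod_cast key
  rw [graphGromovProduct]
  linarith

theorem dist_le_graphGromovProduct_add_dist (hΓ : Γ.Connected) (o a b : X) :
    Γ.dist o a ≤ graphGromovProduct Γ o a b + Γ.dist a b := by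
  have h : (Γ.dist o a : ℝ) ≤ Γ.dist o b + Γ.dist a b := by
    rw [Γ.dist_comm (u := a)]; exact_mod_cast hΓ.dist_triangle
  rw [graphGromovProduct]
  linarith

/-- A connected graph with a coarse embedding `q` into a tree. The additive constant `1` in the
lower bound comes from the geodesics of `T` being lifted step by step to walks in `Γ`. -/
structure IsTreeModel (Γ : SimpleGraph X) (T : SimpleGraph V) (q : X → V) (lam : ℕ) : Prop where
  isTree : T.IsTree
  connected : Γ.Connected
  dist_le_of_adj : ∀ a b, Γ.Adj a b → T.dist (q a) (q b) ≤ lam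
  dist_le_dist_add_one : ∀ a b, Γ.dist a b ≤ T.dist (q a) (q b) + 1

namespace IsTreeModel

variable {q : X → V} {lam : ℕ} (H : IsTreeModel Γ T q lam)
include H

theorem exists_onGeodesic_dist_le {v : V} (h : OnGeodesic T (q a) v (q b)) :
    ∃ z, OnGeodesic Γ a z b ∧ T.dist (q z) v ≤ lam := by
  obtain ⟨p, hp⟩ := H.connected.exists_walk_length_eq_dist a b
  obtain ⟨i, -, hv⟩ := OnGeodesic.exists_step_of_isTree H.isTree
    (f := fun i => q (p.getVert i)) (c := v) (n := p.length)
    (by simpa [p.getVert_of_length_le (Nat.le_succ _)] using h)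
  refine ⟨p.getVert i, onGeodesic_of_mem_support H.connected hp (p.getVert_mem_support i), ?_⟩
  have hstep : T.dist (q (p.getVert i)) (q (p.getVert (i + 1))) ≤ lam := by
    rcases lt_or_ge i p.length with hi | hi
    · exact H.dist_le_of_adj _ _ (p.adj_getVert_succ hi)
    · rw [p.getVert_of_length_le hi, p.getVert_of_length_le (Nat.le_succ_of_le hi),
        SimpleGraph.dist_self]
      exact Nat.zero_le lam
  exact (Nat.le_of_add_right_le hv.le).trans hstep

theorem dist_le_of_dist_le {k : ℕ} {v : V} (ha : T.dist (q a) v ≤ k) (hb : T.dist (q b) v ≤ k) :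
    Γ.dist a b ≤ 2 * k + 1 := by
  have hlow := H.dist_le_dist_add_one a b
  have htri := H.isTree.connected.dist_triangle (u := q a) (v := v) (w := q b)
  rw [T.dist_comm (u := v)] at htri
  omega

/-- In a tree some step of the path `f` passes through the median of `f 0`, `f (n + 1)` and `o`. -/
theorem exists_graphGromovProduct_le (o : X) (f : ℕ → X) (n : ℕ) :
    ∃ i ≤ n, graphGromovProduct Γ o (f i) (f (i + 1)) ≤
      graphGromovProduct Γ o (f 0) (f (n + 1)) + (4 * lam + 6) := by
  obtain ⟨c, c', hc, hco, hc', hcc'⟩ :=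
    exists_approx_median_of_isTree H.isTree (q (f 0)) (q (f (n + 1))) (q o)
  obtain ⟨i, hi, hci⟩ := OnGeodesic.exists_step_of_isTree H.isTree (f := fun i => q (f i)) hc
  obtain ⟨z, hz, hzc⟩ := H.exists_onGeodesic_dist_le hci
  obtain ⟨z₁, hz₁, hz₁c⟩ := H.exists_onGeodesic_dist_le hco
  obtain ⟨z₂, hz₂, hz₂c'⟩ := H.exists_onGeodesic_dist_le hc'
  have hz₂c : T.dist (q z₂) c ≤ lam + 1 :=
    H.isTree.connected.dist_triangle.trans (add_le_add hz₂c' hcc')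
  have hz₁z := H.dist_le_of_dist_le (hz₁c.trans lam.le_succ) (hzc.trans lam.le_succ)
  have hz₂z := H.dist_le_of_dist_le hz₂c (hzc.trans lam.le_succ)
  refine ⟨i, hi, (graphGromovProduct_le_dist H.connected hz o).trans ?_⟩
  have hlow := dist_le_graphGromovProduct_add H.connected hz₁ hz₂ hz₁z hz₂z
  push_cast at hlow
  linarith

end IsTreeModel

theorem exists_walk_length_le_of_coarselyDense {q : X → V} {C : ℝ} (hT : T.Connected)
    (hdense : ∀ v, ∃ x, (T.dist v (q x) : ℝ) ≤ C)
    (hadj : ∀ a b, (T.dist (q a) (q b) : ℝ) ≤ 2 * C + 1 → a ≠ b → Γ.Adj a b) {v w : V}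
    (p : T.Walk v w) {a b : X} (ha : (T.dist v (q a) : ℝ) ≤ C) (hb : (T.dist w (q b) : ℝ) ≤ C) :
    ∃ p' : Γ.Walk a b, p'.length ≤ p.length + 1 := by
  have hwalk : ∀ a b, (T.dist (q a) (q b) : ℝ) ≤ 2 * C + 1 → ∃ p : Γ.Walk a b, p.length ≤ 1 := by
    intro a b h
    rcases eq_or_ne a b with rfl | hab
    · exact ⟨.nil, Nat.zero_le 1⟩
    · exact ⟨.cons (hadj a b h hab) .nil, le_rfl⟩
  have htri : ∀ {u v w : V}, (T.dist u w : ℝ) ≤ T.dist v u + T.dist v w := fun {u v w} => by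
    rw [T.dist_comm (u := v) (v := u)]; exact_mod_cast hT.dist_triangle
  induction p generalizing a with
  | nil => exact hwalk a b (by linarith [htri.trans (add_le_add ha hb)])
  | @cons v v' w h p ih =>
    obtain ⟨c, hc⟩ := hdense v'
    obtain ⟨p', hp'⟩ := ih hc hb
    have hvv' : (T.dist v' v : ℝ) = 1 := mod_cast SimpleGraph.dist_eq_one_iff_adj.2 h.symm
    have hvc : (T.dist v (q c) : ℝ) ≤ 1 + C := htri.trans (add_le_add hvv'.le hc)
    obtain ⟨p'', hp''⟩ := hwalk a c (by linarith [htri.trans (add_le_add ha hvc)])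
    exact ⟨p''.append p', by simp only [SimpleGraph.Walk.length_append,
      SimpleGraph.Walk.length_cons]; omega⟩

section Orbit

variable {G : Type*} [Group G] {φ : G →* (Γ ≃g Γ)} {x : X}

/-- The displacement of the base point `x` under an action on a graph by automorphisms. -/
noncomputable def orbitLength (hΓ : Γ.Connected) (φ : G →* (Γ ≃g Γ)) (x : X) :
    GroupSeminorm G where
  toFun g := Γ.dist x (φ g x)
  map_one' := by simp
  mul_le' g h := by
    rw [map_mul, RelIso.mul_apply, ← dist_apply_iso (φ g) hΓ x (φ h x)]
    exact_mod_cast hΓ.dist_triangle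
  inv' g := by
    rw [map_inv, ← dist_apply_iso (φ g) hΓ x, RelIso.apply_inv_self, Γ.dist_comm]

theorem orbitLength_apply (hΓ : Γ.Connected) (φ : G →* (Γ ≃g Γ)) (x : X) (g : G) :
    orbitLength hΓ φ x g = Γ.dist x (φ g x) := rfl

theorem orbitLength_inv_mul (hΓ : Γ.Connected) (φ : G →* (Γ ≃g Γ)) (x : X) (g h : G) :
    orbitLength hΓ φ x (g⁻¹ * h) = Γ.dist (φ g x) (φ h x) := by
  rw [orbitLength_apply, ← dist_apply_iso (φ g) hΓ, map_mul, map_inv, RelIso.mul_apply,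
    RelIso.apply_inv_self]

theorem gromovProduct_orbitLength (hΓ : Γ.Connected) (φ : G →* (Γ ≃g Γ)) (x : X) (g h : G) :
    gromovProduct (orbitLength hΓ φ x) g h = graphGromovProduct Γ x (φ g x) (φ h x) := by
  rw [gromovProduct, orbitLength_inv_mul, orbitLength_apply, orbitLength_apply, graphGromovProduct]

namespace IsTreeModel

variable {q : X → V} {lam : ℕ} (H : IsTreeModel Γ T q lam)

theorem isGromovHyperbolic_orbitLength (φ : G →* (Γ ≃g Γ)) (x : X) :
    IsGromovHyperbolic (orbitLength H.connected φ x) (4 * lam + 6) := by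
  intro g h k
  simp only [gromovProduct_orbitLength]
  obtain ⟨i, hi, hmin⟩ := H.exists_graphGromovProduct_le x
    (fun i => [φ g x, φ h x, φ k x].getD i x) 1
  refine sub_le_iff_le_add.2 (le_trans ?_ hmin)
  interval_cases i
  · exact min_le_left _ _
  · exact min_le_right _ _

theorem exists_dist_take_prod_le {m : X} {L : ℝ} {s : List G} (hL : 0 ≤ L)
    (hs : ∀ g ∈ s, orbitLength H.connected φ x g ≤ L) (hm : OnGeodesic Γ x m (φ s.prod x)) :
    ∃ i, Γ.dist m (φ (s.take i).prod x) ≤ L + (4 * lam + 6) := by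
  obtain ⟨i, -, hi⟩ :=
    H.exists_graphGromovProduct_le m (fun i => φ (s.take i).prod x) s.length
  have hstep : Γ.dist (φ (s.take i).prod x) (φ (s.take (i + 1)).prod x) ≤ L := by
    rw [← orbitLength_inv_mul H.connected]
    rcases lt_or_ge i s.length with hlt | hge
    · rw [List.prod_take_succ _ _ hlt, inv_mul_cancel_left]
      exact hs _ (List.getElem_mem hlt)
    · rw [List.take_of_length_le hge, List.take_of_length_le (Nat.le_succ_of_le hge),
        inv_mul_cancel, map_one_eq_zero]
      exact hL
  have hzero := graphGromovProduct_le_dist H.connected hm m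
  rw [SimpleGraph.dist_self, Nat.cast_zero] at hzero
  simp only [List.take_zero, List.prod_nil, map_one, RelIso.one_apply,
    List.take_of_length_le (Nat.le_succ s.length)] at hi
  have hfar := dist_le_graphGromovProduct_add_dist H.connected m
    (φ (s.take i).prod x) (φ (s.take (i + 1)).prod x)
  exact ⟨i, by linarith⟩

theorem hasMidpointSplitting_orbitLength (φ : G →* (Γ ≃g Γ)) (x : X) :
    HasMidpointSplitting (orbitLength H.connected φ x) (4 * lam + 7) := by
  intro L s hL hs
  obtain ⟨m, hm, hxm, hmy⟩ := exists_onGeodesic_midpoint H.connected x (φ s.prod x)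
  obtain ⟨i, hi⟩ := H.exists_dist_take_prod_le hL hs hm
  have hxm' : 2 * (Γ.dist x m : ℝ) ≤ Γ.dist x (φ s.prod x) + 1 := mod_cast hxm
  have hmy' : 2 * (Γ.dist m (φ s.prod x) : ℝ) ≤ Γ.dist x (φ s.prod x) + 1 := mod_cast hmy
  have hdrop : (s.drop i).prod = (s.take i).prod⁻¹ * s.prod := by
    rw [← List.prod_take_mul_prod_drop s i, inv_mul_cancel_left]
  refine ⟨s.take i, s.drop i, (List.take_append_drop i s).symm, ?_, ?_⟩
  · have htri : (Γ.dist x (φ (s.take i).prod x) : ℝ) ≤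
        Γ.dist x m + Γ.dist m (φ (s.take i).prod x) := mod_cast H.connected.dist_triangle
    simp only [orbitLength_apply]
    linarith
  · have htri : (Γ.dist (φ (s.take i).prod x) (φ s.prod x) : ℝ) ≤
        Γ.dist m (φ (s.take i).prod x) + Γ.dist m (φ s.prod x) := by
      rw [Γ.dist_comm (u := m) (v := φ (s.take i).prod x)]
      exact_mod_cast H.connected.dist_triangle
    rw [hdrop, orbitLength_inv_mul, orbitLength_apply]
    linarith

end IsTreeModel

end Orbit

end TreeLikeGraphs

section RipsGraph

variable {X : Type*} [PseudoMetricSpace X] {r : ℝ} {V : Type*} {T : SimpleGraph V} {q : X → V}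

/-- The Rips graph of `X` at scale `r`: distinct points at distance at most `r` are joined. -/
def ripsGraph (X : Type*) [PseudoMetricSpace X] (r : ℝ) : SimpleGraph X where
  Adj a b := a ≠ b ∧ dist a b ≤ r
  symm := ⟨fun a b h => ⟨h.1.symm, dist_comm a b ▸ h.2⟩⟩
  loopless := ⟨fun _ h => h.1 rfl⟩

/-- Isometries act on the Rips graph. -/
def ripsGraphHom (X : Type*) [PseudoMetricSpace X] (r : ℝ) :
    (X ≃ᵢ X) →* (ripsGraph X r ≃g ripsGraph X r) where
  toFun f := ⟨f.toEquiv, by simp [ripsGraph, f.dist_eq]⟩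
  map_one' := rfl
  map_mul' _ _ := rfl

theorem dist_le_mul_ripsGraph_dist (hconn : (ripsGraph X r).Connected) (a b : X) :
    dist a b ≤ r * (ripsGraph X r).dist a b := by
  obtain ⟨p, hp⟩ := hconn.exists_walk_length_eq_dist a b
  rw [← hp]
  clear hp
  induction p with
  | nil => simp
  | cons h p ih =>
    rw [SimpleGraph.Walk.length_cons, Nat.cast_succ, mul_add_one, add_comm]
    exact (dist_triangle _ _ _).trans (add_le_add h.2 ih)

theorem exists_isTreeModel_ripsGraph [Nonempty X] (hT : T.IsTree) {K C : ℝ} (hK : 0 < K)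
    (hlower : ∀ a b, dist a b / K - C ≤ T.dist (q a) (q b))
    (hupper : ∀ a b, T.dist (q a) (q b) ≤ K * dist a b + C)
    (hdense : ∀ v, ∃ x, (T.dist v (q x) : ℝ) ≤ C) :
    ∃ r lam, IsTreeModel (ripsGraph X r) T q lam := by
  let r := K * (3 * C + 1)
  obtain ⟨lam, hlam⟩ := exists_nat_ge (K * r + C)
  have hadj : ∀ a b, (T.dist (q a) (q b) : ℝ) ≤ 2 * C + 1 → a ≠ b → (ripsGraph X r).Adj a b := by
    refine fun a b h hab => ⟨hab, ?_⟩
    rw [← div_le_iff₀' hK]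
    linarith [hlower a b]
  have hself : ∀ a, (T.dist (q a) (q a) : ℝ) ≤ C := fun a => by
    obtain ⟨x, hx⟩ := hdense (q a)
    simpa using (Nat.cast_nonneg _).trans hx
  have hwalk : ∀ a b, ∃ p : (ripsGraph X r).Walk a b, p.length ≤ T.dist (q a) (q b) + 1 := by
    intro a b
    obtain ⟨p, hp⟩ := hT.connected.exists_walk_length_eq_dist (q a) (q b)
    exact hp ▸ exists_walk_length_le_of_coarselyDense hT.connected hdense hadj p (hself a) (hself b)
  refine ⟨r, lam, hT, ⟨fun a b => ⟨(hwalk a b).choose⟩⟩, fun a b hab => ?_, fun a b => ?_⟩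
  · have : (T.dist (q a) (q b) : ℝ) ≤ lam :=
      (hupper a b).trans (hlam.trans' (by gcongr; exact hab.2))
    exact_mod_cast this
  · obtain ⟨p, hp⟩ := hwalk a b
    exact (SimpleGraph.dist_le p).trans hp

end RipsGraph

section Divisibility

variable {R : Type*} [CommRing R]

theorem isUnit_quotientMk_of_isCoprime {a b : R} (h : IsCoprime a b) :
    IsUnit (Ideal.Quotient.mk (Ideal.span {b}) a) := by
  obtain ⟨x, y, hxy⟩ := h
  have hinv : Ideal.Quotient.mk (Ideal.span {b}) (a * x) = 1 := by
    rw [← map_one (Ideal.Quotient.mk (Ideal.span {b})), Ideal.Quotient.eq,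
      Ideal.mem_span_singleton]
    exact ⟨-y, by linear_combination hxy⟩
  exact IsUnit.of_mul_eq_one _ ((map_mul _ _ _).symm.trans hinv)

theorem isCoprime_of_dvd_sub {a b c : R} (h : c ∣ a - b) (hb : IsCoprime b c) :
    IsCoprime a c := by
  obtain ⟨k, hk⟩ := h
  obtain rfl : a = b + c * k := by linear_combination hk
  exact hb.add_mul_left_left k

theorem dvd_mul_sub_one {a x y : R} (hx : a ∣ x - 1) (hy : a ∣ y - 1) : a ∣ x * y - 1 := by
  rw [show x * y - 1 = (x - 1) * y + (y - 1) by ring]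
  exact dvd_add (hx.mul_right y) hy

theorem isCoprime_unit_left (u : Rˣ) (x : R) : IsCoprime (u : R) x :=
  isCoprime_one_left.of_isCoprime_of_dvd_left u.isUnit.dvd

theorem sub_one_dvd_geom_sum_sub_natCast (x : R) (n : ℕ) :
    x - 1 ∣ ∑ i ∈ Finset.range n, x ^ i - n := by
  have hsum : ∑ i ∈ Finset.range n, x ^ i - (n : R) = ∑ i ∈ Finset.range n, (x ^ i - 1) := by
    simp
  rw [hsum]
  exact Finset.dvd_sum fun i _ => sub_one_dvd_pow_sub_one x i

theorem geom_sum_mul_range (x : R) (a b : ℕ) :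
    ∑ i ∈ Finset.range (a * b), x ^ i
      = (∑ i ∈ Finset.range a, x ^ i) * ∑ i ∈ Finset.range b, (x ^ a) ^ i := by
  induction b with
  | zero => simp
  | succ b ih =>
    rw [Nat.mul_succ, Finset.sum_range_add, ih, Finset.sum_range_succ, mul_add, ← pow_mul,
      Finset.mul_sum, Finset.sum_mul]
    simp only [pow_add, mul_comm]

theorem exists_pow_natCast_pow_sub_one_eq_mul {x : R} {n : ℕ} (hx : (n : R) ^ 2 ∣ x - 1) (j : ℕ) :
    ∃ w : R, x ^ n ^ j - 1 = n ^ j * (x - 1) * w ∧ (n : R) ∣ w - 1 := by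
  induction j with
  | zero => exact ⟨1, by simp, by simp⟩
  | succ j ih =>
    obtain ⟨w, hw, hw1⟩ := ih
    have hdvd : (n : R) ^ 2 ∣ ∑ i ∈ Finset.range n, (x ^ n ^ j) ^ i - n :=
      hx.trans ((sub_one_dvd_pow_sub_one x _).trans (sub_one_dvd_geom_sum_sub_natCast _ n))
    obtain ⟨s, hs⟩ := hdvd
    refine ⟨w * (1 + n * s), ?_, dvd_mul_sub_one hw1 ⟨s, by ring⟩⟩
    rw [pow_succ n j, pow_mul, ← mul_geom_sum, hw]
    linear_combination n ^ j * (x - 1) * w * hs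

theorem exists_dvd_sub_mul_and_dvd_sub_one {d f n : R} (hdf : IsCoprime d f)
    (hdn : IsCoprime d n) (y : R) : ∃ x, d ∣ y - f * x ∧ n ∣ x - 1 := by
  obtain ⟨p, s, hps⟩ := hdf
  obtain ⟨α, β, hab⟩ := hdn
  exact ⟨s * y * (β * n) + α * d,
    ⟨p * y + s * f * y * α - f * α, by linear_combination (-y) * hps - y * s * f * hab⟩,
    ⟨s * y * β - β, by linear_combination hab⟩⟩

end Divisibility

section FiniteQuotients

variable {R : Type*} [CommRing R] [Ring.HasFiniteQuotients R]

theorem finite_quotient_span_singleton {x : R} (hx : x ≠ 0) : Finite (R ⧸ Ideal.span {x}) :=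
  Ring.HasFiniteQuotients.finiteQuotient (by simpa using hx)

theorem exists_natCast_dvd {x : R} (hx : x ≠ 0) : ∃ n : ℕ, n ≠ 0 ∧ x ∣ (n : R) := by
  have := finite_quotient_span_singleton hx
  refine ⟨Nat.card (R ⧸ Ideal.span {x}), Nat.card_pos.ne', ?_⟩
  rw [← Ideal.Quotient.eq_zero_iff_dvd, map_natCast]
  simpa using card_nsmul_eq_zero' (x := (1 : R ⧸ Ideal.span {x}))

theorem exists_natCast_dvd_of_isCoprime {x : R} (hx : x ≠ 0) {n : ℕ}
    (hn : IsCoprime (n : R) x) : ∃ r : ℕ, r.Coprime n ∧ x ∣ (r : R) := by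
  have := finite_quotient_span_singleton hx
  have := Fintype.ofFinite (R ⧸ Ideal.span {x})
  refine ⟨Fintype.card (R ⧸ Ideal.span {x}), Nat.coprime_of_dvd fun p hp hpr hpn => ?_, ?_⟩
  · have : Fact p.Prime := ⟨hp⟩
    have hunit : IsUnit (n : R ⧸ Ideal.span {x}) := by
      simpa using isUnit_quotientMk_of_isCoprime hn
    exact not_isUnit_prime_of_dvd_card hpr
      (isUnit_of_dvd_unit (Nat.cast_dvd_cast hpn) hunit)
  · rw [← Ideal.Quotient.eq_zero_iff_dvd, map_natCast, Nat.cast_card_eq_zero]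

theorem exists_dvd_pow_sub_one {x : R} (hx : x ≠ 0) :
    ∃ n : ℕ, n ≠ 0 ∧ ∀ y, IsCoprime y x → x ∣ y ^ n - 1 := by
  have := finite_quotient_span_singleton hx
  refine ⟨Nat.card (R ⧸ Ideal.span {x})ˣ, Nat.card_pos.ne', fun y hy => ?_⟩
  obtain ⟨w, hw⟩ := isUnit_quotientMk_of_isCoprime hy
  rw [← Ideal.mem_span_singleton, ← Ideal.Quotient.eq, map_pow, ← hw,
    ← Units.val_pow_eq_pow_val, pow_card_eq_one', Units.val_one, map_one]

theorem exists_dvd_pow_natCast_pow_sub_one {x : R} (hx : x ≠ 0) (u : Rˣ) {n : ℕ} (hn : 1 < n) :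
    ∃ a p : ℕ, n ∣ p + 1 ∧ ∀ j, a ≤ j → x ∣ ((u : R) ^ n ^ j) ^ p - 1 := by
  have := finite_quotient_span_singleton hx
  obtain ⟨a, b, hab, heq⟩ : ∃ a b : ℕ, a < b ∧
      Ideal.Quotient.mk (Ideal.span {x}) ((u : R) ^ n ^ a)
        = Ideal.Quotient.mk (Ideal.span {x}) ((u : R) ^ n ^ b) := by
    obtain ⟨a, b, hne, heq⟩ := Finite.exists_ne_map_eq_of_infinite
      fun j : ℕ => Ideal.Quotient.mk (Ideal.span {x}) ((u : R) ^ n ^ j)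
    rcases hne.lt_or_gt with hlt | hlt
    exacts [⟨a, b, hlt, heq⟩, ⟨b, a, hlt, heq.symm⟩]
  have hpos : 1 ≤ n ^ (b - a) := Nat.one_le_pow _ _ (by lia)
  refine ⟨a, n ^ (b - a) - 1, ?_, fun j hj => ?_⟩
  · rw [Nat.sub_add_cancel hpos]
    exact dvd_pow_self n (by lia)
  have hbase : x ∣ ((u : R) ^ n ^ a) ^ (n ^ (b - a) - 1) - 1 := by
    have hmul : (u : R) ^ n ^ a * (((u : R) ^ n ^ a) ^ (n ^ (b - a) - 1) - 1)
        = (u : R) ^ n ^ b - (u : R) ^ n ^ a := by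
      rw [mul_sub, ← pow_succ', Nat.sub_add_cancel hpos, ← pow_mul, ← pow_add,
        Nat.add_sub_cancel' hab.le, mul_one]
    refine ((u.isUnit.pow (n ^ a)).dvd_mul_left).1 ?_
    rw [hmul, ← Ideal.mem_span_singleton, ← Ideal.Quotient.eq, heq]
  refine hbase.trans ?_
  rw [← pow_mul, ← pow_mul]
  exact dvd_pow_sub_one_of_dvd (mul_dvd_mul_right (pow_dvd_pow n hj) _)

end FiniteQuotients

section Units

variable {R : Type*} [CommRing R] [Ring.HasFiniteQuotients R]

/-- The exponent is `p ^ 2 * r ^ φ n`, where `x ∣ ((u ^ n ^ j) ^ p - 1)`, `x ∣ r`, and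
`p`, `r` are prime to `n`. -/
theorem exists_geom_sum_dvd {x : R} (hx : x ≠ 0) (u : Rˣ) {n : ℕ} (hn : 1 < n)
    (hu : (n : R) ∣ u - 1) (hnx : IsCoprime (n : R) x) :
    ∃ a N : ℕ, ∀ j, a ≤ j → x ∣ ∑ i ∈ Finset.range N, ((u : R) ^ n ^ j) ^ i ∧
      (n : R) ∣ ∑ i ∈ Finset.range N, ((u : R) ^ n ^ j) ^ i - 1 := by
  obtain ⟨a, p, hp, hxp⟩ := exists_dvd_pow_natCast_pow_sub_one hx u hn
  obtain ⟨r, hr, hxr⟩ := exists_natCast_dvd_of_isCoprime hx hnx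
  have hr_pow : (n : R) ∣ (r : R) ^ n.totient - 1 := by
    have hint : (n : ℤ) ∣ (r : ℤ) ^ n.totient - 1 := by
      simpa using (Nat.modEq_iff_dvd.1 (Nat.ModEq.pow_totient hr).symm)
    simpa using map_dvd (Int.castRingHom R) hint
  have hp_sq : (n : R) ∣ (p : R) ^ 2 - 1 := by
    have hcast : (n : R) ∣ p + 1 := by simpa using Nat.cast_dvd_cast (α := R) hp
    rw [show (p : R) ^ 2 - 1 = (p + 1) * (p - 1) by ring]
    exact hcast.mul_right _
  refine ⟨a, p * (p * r ^ n.totient), fun j hj => ⟨?_, ?_⟩⟩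
  · rw [geom_sum_mul_range]
    refine Dvd.dvd.mul_left ?_ _
    have hcast : x ∣ ((p * r ^ n.totient : ℕ) : R) := by
      push_cast
      exact (dvd_pow hxr (Nat.totient_pos.2 (by lia)).ne').mul_left _
    exact (dvd_sub_left hcast).1
      ((hxp j hj).trans (sub_one_dvd_geom_sum_sub_natCast _ _))
  · have hN : (n : R) ∣ ((p * (p * r ^ n.totient) : ℕ) : R) - 1 := by
      convert dvd_mul_sub_one hp_sq hr_pow using 2
      push_cast
      ring
    have hsum := (hu.trans (sub_one_dvd_pow_sub_one (u : R) (n ^ j))).trans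
      (sub_one_dvd_geom_sum_sub_natCast _ (p * (p * r ^ n.totient)))
    simpa using dvd_add hsum hN

theorem exists_pow_sq_sub_one_eq_mul {u : Rˣ} {n : ℕ} (hn0 : n ≠ 0)
    (hn : ¬ IsUnit (n : R)) (hu : (n : R) ^ 2 ∣ u - 1) {d : R} (hdn : IsCoprime d (n : R))
    (hdu : IsCoprime d ((u : R) ^ 2 - 1)) (y : R) :
    ∃ (e z : R) (v : Rˣ), d ∣ y - e ∧ (n : R) ∣ e ∧ (v : R) ^ 2 - 1 = e * z ∧
      (n : R) ∣ z - 1 := by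
  have hn1 : 1 < n := (Nat.two_le_iff n).2 ⟨hn0, by rintro rfl; simp at hn⟩
  have hnu : (n : R) ∣ (u : R) ^ 2 - 1 :=
    ((dvd_pow_self _ two_ne_zero).trans hu).trans (sub_one_dvd_pow_sub_one _ 2)
  have hd0 : d ≠ 0 := by
    rintro rfl
    exact hn (isCoprime_zero_left.1 hdn)
  obtain ⟨x, hx, hx1⟩ := exists_dvd_sub_mul_and_dvd_sub_one hdu hdn y
  have hx0 : x ≠ 0 := by
    rintro rfl
    exact hn (isUnit_of_dvd_one (by simpa using hx1))
  obtain ⟨a, N, hN⟩ := exists_geom_sum_dvd hx0 (u ^ 2) hn1 (by simpa using hnu)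
    (isCoprime_of_dvd_sub hx1 isCoprime_one_left).symm
  obtain ⟨φ, hφ0, hφ⟩ := exists_dvd_pow_sub_one hd0
  obtain ⟨w, hw, hw1⟩ := exists_pow_natCast_pow_sub_one_eq_mul
    (hu.trans (sub_one_dvd_pow_sub_one (u : R) 2)) (φ * a)
  obtain ⟨⟨s, hs⟩, hs1⟩ := hN (φ * a) (Nat.le_mul_of_pos_left _ (Nat.pos_of_ne_zero hφ0))
  have hnd : d ∣ (n : R) ^ (φ * a) - 1 :=
    (hφ _ hdn.symm).trans (pow_one_sub_dvd_pow_mul_sub_one _ _ _)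
  refine ⟨n ^ (φ * a) * ((u : R) ^ 2 - 1) * x, w * s, u ^ (n ^ (φ * a) * N), ?_,
    (hnu.mul_left _).mul_right _, ?_, ?_⟩
  · convert dvd_sub hx (hnd.mul_right (((u : R) ^ 2 - 1) * x)) using 1
    ring
  · rw [Units.val_pow_eq_pow_val, ← pow_mul, mul_comm _ 2, ← mul_assoc, pow_mul, pow_mul,
      ← geom_sum_mul, hw]
    push_cast at hs
    rw [hs]
    ring
  · have hsplit : w * s - 1 = (w * (x * s) - 1) - w * s * (x - 1) := by ring
    rw [hsplit]
    exact dvd_sub (dvd_mul_sub_one hw1 (hs ▸ hs1)) (hx1.mul_left _)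

theorem exists_unit_sq_sub_one_eq_mul [IsDomain R] [CharZero R] (h2 : ¬ IsUnit (2 : R)) {u : Rˣ}
    (hu : ¬ IsOfFinOrder u) {c : R} (hc : c ≠ 0) :
    ∃ F : R, F ≠ 0 ∧ ∀ d b : R, IsCoprime d F → ∃ (e z : R) (v : Rˣ), d ∣ b - c * e ∧ c ∣ e ∧
      (v : R) ^ 2 - 1 = e * z ∧ c ∣ z - 1 := by
  obtain ⟨m, hm0, hcm⟩ := exists_natCast_dvd hc
  have hn0 : ((2 * m : ℕ) : R) ≠ 0 := by exact_mod_cast (by lia : 2 * m ≠ 0)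
  have hcn : c ∣ ((2 * m : ℕ) : R) := by simpa using hcm.mul_left 2
  have hn : ¬ IsUnit ((2 * m : ℕ) : R) := fun h => h2 (isUnit_of_dvd_unit (by simp) h)
  obtain ⟨k, hk0, hk⟩ := exists_dvd_pow_sub_one (pow_ne_zero 2 hn0)
  have huk : (((2 * m : ℕ) : R)) ^ 2 ∣ ((u ^ k : Rˣ) : R) - 1 := by
    simpa using hk u (isCoprime_unit_left u _)
  have huk2 : ((u ^ k : Rˣ) : R) ^ 2 ≠ 1 := fun h =>
    hu (isOfFinOrder_iff_pow_eq_one.2 ⟨k * 2, by lia, by rw [pow_mul]; exact Units.ext h⟩)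
  refine ⟨((2 * m : ℕ) : R) * (((u ^ k : Rˣ) : R) ^ 2 - 1),
    mul_ne_zero hn0 (sub_ne_zero.2 huk2), fun d b hd => ?_⟩
  have hdn := hd.of_mul_right_left
  obtain ⟨p, s, hps⟩ := hdn.of_isCoprime_of_dvd_right hcn
  obtain ⟨e, z, v, hde, hne, hv, hz⟩ :=
    exists_pow_sq_sub_one_eq_mul (by lia) hn huk hdn hd.of_mul_right_right (s * b)
  refine ⟨e, z, v, ?_, hcn.trans hne, hv, hcn.trans hz⟩
  rw [show b - c * e = d * (p * b) + c * (s * b - e) by linear_combination -b * hps]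
  exact dvd_add (dvd_mul_right _ _) (hde.mul_left _)

end Units

section Artinian

theorem exists_isUnit_add_mul {B : Type*} [CommRing B] [Finite (MaximalSpectrum B)] {a b : B}
    (h : IsCoprime a b) : ∃ t, IsUnit (a + t * b) := by
  classical
  obtain ⟨t, ht⟩ := Ideal.pi_quotient_surjective
    (fun I _ hIJ => I.isCoprime_of_ne hIJ)
    fun I : MaximalSpectrum B => if a ∈ I.asIdeal then 1 else 0
  refine ⟨t, by_contra fun hunit => ?_⟩
  obtain ⟨I, hI, hmem⟩ := exists_max_ideal_of_mem_nonunits hunit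
  have htI := ht ⟨I, hI⟩
  by_cases ha : a ∈ I
  · have hb : b ∈ I := by
      have htb : t * b ∈ I := (I.add_mem_iff_right ha).1 hmem
      refine (hI.isPrime.mem_or_mem htb).resolve_left fun htI' => hI.ne_top ?_
      rw [Ideal.eq_top_iff_one, ← Ideal.Quotient.eq_zero_iff_mem, map_one]
      simpa [ha, Ideal.Quotient.eq_zero_iff_mem.2 htI'] using htI.symm
    obtain ⟨x, y, hxy⟩ := h
    exact hI.ne_top ((Ideal.eq_top_iff_one I).2
      (hxy ▸ I.add_mem (I.mul_mem_left x ha) (I.mul_mem_left y hb)))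
  · refine ha ((I.add_mem_iff_left (I.mul_mem_right b ?_)).1 hmem)
    simpa [ha, Ideal.Quotient.eq_zero_iff_mem] using htI

theorem exists_isUnit_sq_eq_one_add {B : Type*} [CommRing B] (h2 : IsUnit (2 : B)) {r : B}
    (hr : IsNilpotent r) : ∃ y, IsUnit y ∧ y ^ 2 = 1 + r := by
  obtain ⟨y, ⟨hy, hroot⟩, -⟩ := Polynomial.existsUnique_nilpotent_sub_and_aeval_eq_zero
    (P := Polynomial.X ^ 2 - Polynomial.C (1 + r)) (x := (1 : B))
    (by simpa using hr.neg) (by simpa [one_add_one_eq_two] using h2)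
  refine ⟨y, ?_, by simpa [sub_eq_zero] using hroot⟩
  simpa using hy.neg.isUnit_one_add

theorem exists_sq_add_mul_sq_eq_of_field {k : Type*} [Field k] [Finite k] (h2 : (2 : k) ≠ 0)
    {α : k} (hα : α ≠ 0) (Q : k) : ∃ p q : k, p ^ 2 + α * q ^ 2 = Q := by
  have := Fintype.ofFinite k
  have hodd : Fintype.card k % 2 = 1 :=
    FiniteField.odd_card_of_char_ne_two fun h => h2 (by
      exact_mod_cast h ▸ ringChar.Nat.cast_ringChar (R := k))
  obtain ⟨p, q, hpq⟩ := FiniteField.exists_root_sum_quadratic (R := k)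
    (f := Polynomial.X ^ 2 - Polynomial.C Q) (g := Polynomial.C α * Polynomial.X ^ 2)
    (Polynomial.degree_X_pow_sub_C (by norm_num) _)
    (Polynomial.degree_C_mul_X_pow 2 hα) hodd
  simp only [Polynomial.eval_sub, Polynomial.eval_pow, Polynomial.eval_X, Polynomial.eval_C,
    Polynomial.eval_mul] at hpq
  exact ⟨p, q, by linear_combination hpq⟩

theorem exists_sq_add_mul_sq_sub_isNilpotent {B : Type*} [CommRing B] [Finite B]
    (h2 : IsUnit (2 : B)) {α : B} (hα : IsUnit α) (Q : B) :
    ∃ p q : B, IsNilpotent (p ^ 2 + α * q ^ 2 - Q) := by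
  have hlocal (I : MaximalSpectrum B) :
      ∃ p q : B ⧸ I.asIdeal, p ^ 2 + Ideal.Quotient.mk _ α * q ^ 2 = Ideal.Quotient.mk _ Q := by
    have := Finite.of_surjective _ (Ideal.Quotient.mk_surjective (I := I.asIdeal))
    let _ := Ideal.Quotient.field I.asIdeal
    exact exists_sq_add_mul_sq_eq_of_field
      (by exact_mod_cast (h2.map (Ideal.Quotient.mk I.asIdeal)).ne_zero)
      (hα.map (Ideal.Quotient.mk I.asIdeal)).ne_zero _
  choose p q hpq using hlocal
  have hcop : Pairwise fun I J : MaximalSpectrum B => IsCoprime I.asIdeal J.asIdeal :=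
    fun I _ hIJ => I.isCoprime_of_ne hIJ
  obtain ⟨p', hp'⟩ := Ideal.pi_quotient_surjective hcop p
  obtain ⟨q', hq'⟩ := Ideal.pi_quotient_surjective hcop q
  refine ⟨p', q', ?_⟩
  rw [← mem_nilradical, IsArtinianRing.nilradical_eq_iInf, Ideal.mem_iInf]
  intro I
  rw [← Ideal.Quotient.eq, map_add, map_mul, map_pow, map_pow, hp', hq', hpq]

theorem exists_sq_add_mul_sq_eq {B : Type*} [CommRing B] [Finite B] (h2 : IsUnit (2 : B))
    {α Q : B} (hα : IsUnit α) (hQ : IsUnit Q) : ∃ p q : B, p ^ 2 + α * q ^ 2 = Q := by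
  obtain ⟨p, q, hnil⟩ := exists_sq_add_mul_sq_sub_isNilpotent h2 hα Q
  obtain ⟨Qinv, hQinv⟩ := hQ.exists_right_inv
  obtain ⟨y, hy, hysq⟩ := exists_isUnit_sq_eq_one_add h2
    ((Commute.all Qinv _).isNilpotent_mul_left hnil)
  obtain ⟨yinv, hyinv⟩ := hy.exists_right_inv
  have hscale : p ^ 2 + α * q ^ 2 = Q * y ^ 2 := by
    linear_combination -Q * hysq - (p ^ 2 + α * q ^ 2 - Q) * hQinv
  refine ⟨yinv * p, yinv * q, ?_⟩
  linear_combination yinv ^ 2 * hscale + Q * (1 + y * yinv) * hyinv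

end Artinian

section FiniteQuotients

variable {R : Type*} [CommRing R] [Ring.HasFiniteQuotients R]

theorem exists_isCoprime_add_mul {a b c : R} (hc : c ≠ 0) {x y z : R}
    (h : x * a + y * b + z * c = 1) : ∃ t, IsCoprime (a + t * b) c := by
  have := finite_quotient_span_singleton hc
  have hab : IsCoprime (Ideal.Quotient.mk (Ideal.span {c}) a)
      (Ideal.Quotient.mk (Ideal.span {c}) b) :=
    ⟨Ideal.Quotient.mk _ x, Ideal.Quotient.mk _ y, by
      simpa using congrArg (Ideal.Quotient.mk (Ideal.span {c})) h⟩
  obtain ⟨t, ht⟩ := exists_isUnit_add_mul hab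
  obtain ⟨t, rfl⟩ := Ideal.Quotient.mk_surjective t
  obtain ⟨s, hs⟩ := ht.exists_right_inv
  obtain ⟨s, rfl⟩ := Ideal.Quotient.mk_surjective s
  rw [← map_mul, ← map_add, ← map_mul, ← map_one (Ideal.Quotient.mk (Ideal.span {c})),
    Ideal.Quotient.eq, Ideal.mem_span_singleton] at hs
  obtain ⟨k, hk⟩ := hs
  exact ⟨t, s, -k, by linear_combination hk⟩

theorem exists_isCoprime_add_mul_of_isCoprime {a b c : R} (hc : c ≠ 0) (h : IsCoprime a b) :
    ∃ t, IsCoprime (a + t * b) c := by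
  obtain ⟨x, y, hxy⟩ := h
  exact exists_isCoprime_add_mul hc (x := x) (y := y) (z := 0) (by linear_combination hxy)

theorem exists_isCoprime_dvd_sq_add_mul_sq_sub {A α Q : R} (hA : A ≠ 0) (h2 : IsCoprime 2 A)
    (hα : IsCoprime α A) (hQ : IsCoprime Q A) :
    ∃ p q : R, IsCoprime p q ∧ A ∣ p ^ 2 + α * q ^ 2 - Q := by
  have := finite_quotient_span_singleton hA
  obtain ⟨p, q, hpq⟩ := exists_sq_add_mul_sq_eq
    (by exact_mod_cast isUnit_quotientMk_of_isCoprime h2)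
    (isUnit_quotientMk_of_isCoprime hα) (isUnit_quotientMk_of_isCoprime hQ)
  obtain ⟨p, rfl⟩ := Ideal.Quotient.mk_surjective p
  obtain ⟨q, hq, hq0⟩ : ∃ q' : R, Ideal.Quotient.mk (Ideal.span {A}) q' = q ∧ q' ≠ 0 := by
    obtain ⟨q, rfl⟩ := Ideal.Quotient.mk_surjective q
    rcases eq_or_ne q 0 with rfl | hq0
    exacts [⟨A, by simp, hA⟩, ⟨q, rfl, hq0⟩]
  obtain ⟨k, hk⟩ : A ∣ p ^ 2 + α * q ^ 2 - Q := by
    rw [← Ideal.mem_span_singleton, ← Ideal.Quotient.eq, ← hpq, ← hq]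
    simp only [map_add, map_mul, map_pow]
  obtain ⟨x, y, hxy⟩ := hQ
  obtain ⟨t, ht⟩ := exists_isCoprime_add_mul (a := p) (b := A) hq0 (x := x * p)
    (y := y - x * k) (z := x * α * q) (by linear_combination hxy + x * hk)
  exact ⟨p + t * A, q, ht, k + 2 * p * t + t ^ 2 * A, by linear_combination hk⟩

end FiniteQuotients

section SpecialLinearTwo

open Matrix.SpecialLinearGroup
open scoped MatrixGroups

variable {R : Type*} [CommRing R]

/-- The elementary matrix with `x` in the upper right corner. -/
def upper (x : R) : SL(2, R) := transvection zero_ne_one x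

/-- The elementary matrix with `x` in the lower left corner. -/
def lower (x : R) : SL(2, R) := transvection one_ne_zero x

/-- The diagonal matrix with entries `v` and `v⁻¹`. -/
def unitDiag (v : Rˣ) : SL(2, R) := ⟨!![(v : R), 0; 0, ((v⁻¹ : Rˣ) : R)], by simp⟩

/-- The Weyl element, which exchanges the two families of elementary matrices by conjugation. -/
def weyl (R : Type*) [CommRing R] : SL(2, R) := ⟨!![0, -1; 1, 0], by simp⟩

@[simp]
theorem coe_upper (x : R) : (upper x : Matrix (Fin 2) (Fin 2) R) = !![1, x; 0, 1] := by
  ext i j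
  fin_cases i <;> fin_cases j <;> simp [upper, transvection_coe]

@[simp]
theorem coe_lower (x : R) : (lower x : Matrix (Fin 2) (Fin 2) R) = !![1, 0; x, 1] := by
  ext i j
  fin_cases i <;> fin_cases j <;> simp [lower, transvection_coe]

@[simp]
theorem coe_unitDiag (v : Rˣ) :
    (unitDiag v : Matrix (Fin 2) (Fin 2) R) = !![(v : R), 0; 0, ((v⁻¹ : Rˣ) : R)] :=
  rfl

@[simp]
theorem coe_weyl : (weyl R : Matrix (Fin 2) (Fin 2) R) = !![0, -1; 1, 0] :=
  rfl

theorem upper_inv (x : R) : (upper x)⁻¹ = upper (-x) :=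
  transvection_inv _ x

theorem lower_inv (x : R) : (lower x)⁻¹ = lower (-x) :=
  transvection_inv _ x

theorem SL2_mul_apply (g h : SL(2, R)) (i j : Fin 2) :
    (g * h) i j = g i 0 * h 0 j + g i 1 * h 1 j := by
  rw [coe_mul, Matrix.mul_apply, Fin.sum_univ_two]

theorem SL2_det (g : SL(2, R)) : g 0 0 * g 1 1 - g 0 1 * g 1 0 = 1 := by
  rw [← Matrix.det_fin_two, det_coe]

theorem SL2_ext {g h : SL(2, R)} (h00 : g 0 0 = h 0 0) (h01 : g 0 1 = h 0 1)
    (h10 : g 1 0 = h 1 0) (h11 : g 1 1 = h 1 1) : g = h := by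
  ext i j
  fin_cases i <;> fin_cases j <;> assumption

theorem mul_upper_apply_zero (g : SL(2, R)) (x : R) (i : Fin 2) : (g * upper x) i 0 = g i 0 := by
  simp [SL2_mul_apply]

theorem mul_upper_apply_one (g : SL(2, R)) (x : R) (i : Fin 2) :
    (g * upper x) i 1 = g i 0 * x + g i 1 := by
  simp [SL2_mul_apply]

theorem mul_lower_apply_zero (g : SL(2, R)) (x : R) (i : Fin 2) :
    (g * lower x) i 0 = g i 0 + g i 1 * x := by
  simp [SL2_mul_apply]

theorem mul_lower_apply_one (g : SL(2, R)) (x : R) (i : Fin 2) : (g * lower x) i 1 = g i 1 := by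
  simp [SL2_mul_apply]

theorem exists_eq_lower_mul {g h : SL(2, R)} (h0 : g 0 0 = h 0 0) (h1 : g 0 1 = h 0 1) :
    ∃ x, g = lower x * h := by
  have dg := SL2_det g
  have dh := SL2_det h
  rw [h0, h1] at dg
  refine ⟨g 1 0 * h 1 1 - g 1 1 * h 1 0, SL2_ext ?_ ?_ ?_ ?_⟩ <;>
    simp [SL2_mul_apply, h0, h1]
  · linear_combination (-g 1 0) * dh + h 1 0 * dg
  · linear_combination (-g 1 1) * dh + h 1 1 * dg

theorem weyl_eq_upper_mul_lower_mul_upper :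
    weyl R = upper (-1) * lower 1 * upper (-1) := by
  apply SL2_ext <;> simp [SL2_mul_apply]

theorem unitDiag_eq_upper_mul_lower_mul_upper_mul_weyl (v : Rˣ) :
    unitDiag v = upper (v : R) * lower (-((v⁻¹ : Rˣ) : R)) * upper (v : R) * weyl R := by
  apply SL2_ext <;> simp [SL2_mul_apply]

theorem exists_pow_entries_eq (g : SL(2, R)) (n : ℕ) : ∃ x y : R,
    (g ^ n) 0 0 = x * g 0 0 + y ∧ (g ^ n) 0 1 = x * g 0 1 ∧
      (g ^ n) 1 0 = x * g 1 0 ∧ (g ^ n) 1 1 = x * g 1 1 + y := by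
  have hd := SL2_det g
  induction n with
  | zero => exact ⟨0, 1, by simp⟩
  | succ n ih =>
    obtain ⟨x, y, h00, h01, h10, h11⟩ := ih
    refine ⟨x * (g 0 0 + g 1 1) + y, -x, ?_, ?_, ?_, ?_⟩ <;>
      rw [pow_succ, SL2_mul_apply] <;> simp only [h00, h01, h10, h11]
    · linear_combination -x * hd
    · ring
    · ring
    · linear_combination -x * hd

theorem dvd_pow_apply_zero_zero_sub (g : SL(2, R)) (n : ℕ) :
    g 0 1 ∣ (g ^ n) 0 0 - g 0 0 ^ n := by
  induction n with
  | zero => simp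
  | succ n ih =>
    obtain ⟨s, hs⟩ := ih
    obtain ⟨x, y, -, h01, -, -⟩ := exists_pow_entries_eq g n
    refine ⟨g 0 0 * s + x * g 1 0, ?_⟩
    rw [pow_succ, SL2_mul_apply, h01]
    linear_combination g 0 0 * hs

/-- The length function `ℓ` is at most `B` on all elementary matrices. -/
structure IsBoundedOnTransvections (ℓ : GroupSeminorm SL(2, R)) (B : ℝ) : Prop where
  upper_le : ∀ x, ℓ (upper x) ≤ B
  lower_le : ∀ x, ℓ (lower x) ≤ B

namespace IsBoundedOnTransvections

variable {ℓ : GroupSeminorm SL(2, R)} {B : ℝ} (H : IsBoundedOnTransvections ℓ B)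
include H

theorem bound_nonneg : 0 ≤ B :=
  (apply_nonneg ℓ _).trans (H.upper_le 0)

theorem length_mul_upper_le (g : SL(2, R)) (x : R) : ℓ (g * upper x) ≤ ℓ g + B :=
  (map_mul_le_add ℓ g _).trans (by gcongr; exact H.upper_le x)

theorem length_le_mul_upper (g : SL(2, R)) (x : R) : ℓ g ≤ ℓ (g * upper x) + B := by
  simpa [← upper_inv] using H.length_mul_upper_le (g * upper x) (-x)

theorem length_mul_lower_le (g : SL(2, R)) (x : R) : ℓ (g * lower x) ≤ ℓ g + B :=
  (map_mul_le_add ℓ g _).trans (by gcongr; exact H.lower_le x)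

theorem length_le_mul_lower (g : SL(2, R)) (x : R) : ℓ g ≤ ℓ (g * lower x) + B := by
  simpa [← lower_inv] using H.length_mul_lower_le (g * lower x) (-x)

theorem length_le_of_row_eq {g h : SL(2, R)} (h0 : g 0 0 = h 0 0) (h1 : g 0 1 = h 0 1) :
    ℓ g ≤ ℓ h + B := by
  obtain ⟨x, rfl⟩ := exists_eq_lower_mul h0 h1
  linarith [map_mul_le_add ℓ (lower x) h, H.lower_le x]

theorem length_weyl_le : ℓ (weyl R) ≤ 3 * B := by
  rw [weyl_eq_upper_mul_lower_mul_upper]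
  linarith [length_mul_mul_le ℓ (upper (-1)) (lower 1) (upper (-1)), H.upper_le (-1), H.lower_le 1]

theorem length_unitDiag_le (v : Rˣ) : ℓ (unitDiag v) ≤ 6 * B := by
  rw [unitDiag_eq_upper_mul_lower_mul_upper_mul_weyl]
  set w : R := ((v⁻¹ : Rˣ) : R)
  linarith [map_mul_le_add ℓ (upper (v : R) * lower (-w) * upper (v : R)) (weyl R),
    length_mul_mul_le ℓ (upper (v : R)) (lower (-w)) (upper (v : R)), H.upper_le (v : R),
    H.lower_le (-w), H.length_weyl_le]

theorem length_le_of_isUnit {g : SL(2, R)} (hg : IsUnit (g 0 0)) : ℓ g ≤ 8 * B := by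
  obtain ⟨v, hv⟩ := hg
  have clear_corner := H.length_le_mul_upper g (-((v⁻¹ : Rˣ) : R) * g 0 1)
  have row_eq := H.length_le_of_row_eq (g := g * upper (-((v⁻¹ : Rˣ) : R) * g 0 1))
    (h := unitDiag v) (by simp [mul_upper_apply_zero, hv])
    (by simp [mul_upper_apply_one, ← hv])
  linarith [H.length_unitDiag_le v]

theorem length_le_of_unit_sq_mul_sub {g h : SL(2, R)} (v : Rˣ) (k : R)
    (h0 : h 0 0 = (v : R) ^ 2 * g 0 0 - k * g 0 1) (h1 : h 0 1 = g 0 1) : ℓ g ≤ ℓ h + 14 * B := by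
  have scaled : ℓ g ≤ ℓ (unitDiag v * g * unitDiag v) + 12 * B := by
    have := length_mul_mul_le ℓ (unitDiag v)⁻¹ (unitDiag v * g * unitDiag v) (unitDiag v)⁻¹
    rw [map_inv_eq_map, show (unitDiag v)⁻¹ * (unitDiag v * g * unitDiag v) * (unitDiag v)⁻¹ = g by
      group] at this
    linarith [H.length_unitDiag_le v]
  have row_eq : ℓ (unitDiag v * g * unitDiag v * lower (-k)) ≤ ℓ h + B := by
    refine H.length_le_of_row_eq ?_ ?_
    · rw [mul_lower_apply_zero, h0]
      simp only [SL2_mul_apply, coe_unitDiag, Matrix.of_apply, Matrix.cons_val',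
        Matrix.cons_val_zero, Matrix.cons_val_fin_one, Matrix.cons_val_one, zero_mul, add_zero,
        mul_zero, zero_add, mul_neg]
      linear_combination -(k * g 0 1) * v.mul_inv
    · rw [mul_lower_apply_one, h1]
      simp only [SL2_mul_apply, coe_unitDiag, Matrix.of_apply, Matrix.cons_val',
        Matrix.cons_val_zero, Matrix.cons_val_fin_one, Matrix.cons_val_one, zero_mul, add_zero,
        mul_zero, zero_add]
      linear_combination g 0 1 * v.mul_inv
  linarith [H.length_le_mul_lower (unitDiag v * g * unitDiag v) (-k)]

/-- The matrix `S` is conjugate to `[[S₁₁ - c S₀₁, c e], [-S₀₁, S₀₀ + c S₀₁]]`. Its first row and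
that of a conjugate of `T` have the same right entry, and their left entries differ by `e`, which a
unit `v` with `v² ≡ 1 mod e` absorbs. -/
theorem length_le_of_entries {S T : SL(2, R)} {c e z : R} {v : Rˣ} (h00 : S 0 0 = T 0 0)
    (h11 : S 1 1 = T 1 1) (h01 : T 0 1 = c ^ 2 * S 0 1) (h10 : S 1 0 = c ^ 2 * T 1 0)
    (he : e = S 0 0 - S 1 1 + c * S 0 1 - c * T 1 0) (hv : (v : R) ^ 2 - 1 = e * z)
    (hc : c ∣ z * (S 1 1 - c * S 0 1) - 1) : ℓ S ≤ ℓ T + 24 * B := by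
  obtain ⟨k, hk⟩ := hc
  let V := upper c * weyl R
  let S' : SL(2, R) := V * S * V⁻¹
  let T' : SL(2, R) := upper (-c) * T * upper c
  have S'_row0 : S' 0 0 = S 1 1 - c * S 0 1 := by
    simp only [S', V, SL2_mul_apply, coe_upper, coe_weyl, coe_inv, mul_inv_rev,
      Matrix.adjugate_fin_two_of, Matrix.of_apply, Matrix.cons_val', Matrix.cons_val_zero,
      Matrix.cons_val_fin_one, Matrix.cons_val_one, mul_zero, mul_one, zero_add, mul_neg, add_zero,
      neg_mul, one_mul, neg_neg, neg_zero, neg_add_rev]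
    ring
  have S'_row1 : S' 0 1 = c * e := by
    simp only [S', V, SL2_mul_apply, coe_upper, coe_weyl, coe_inv, mul_inv_rev,
      Matrix.adjugate_fin_two_of, Matrix.of_apply, Matrix.cons_val', Matrix.cons_val_zero,
      Matrix.cons_val_fin_one, Matrix.cons_val_one, mul_zero, mul_one, zero_add, mul_neg, add_zero,
      neg_mul, one_mul, neg_neg, neg_zero, zero_mul]
    linear_combination -h10 - c * he
  have T'_row0 : T' 0 0 = (v : R) ^ 2 * S' 0 0 - k * S' 0 1 := by
    simp only [T', S'_row0, S'_row1, SL2_mul_apply, coe_upper, Matrix.of_apply, Matrix.cons_val',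
      Matrix.cons_val_zero, Matrix.cons_val_fin_one, Matrix.cons_val_one, one_mul, neg_mul,
      mul_one, mul_zero, add_zero]
    linear_combination -h00 - he - (S 1 1 - c * S 0 1) * hv - e * hk
  have T'_row1 : T' 0 1 = S' 0 1 := by
    simp only [T', S'_row1, SL2_mul_apply, coe_upper, Matrix.of_apply, Matrix.cons_val',
      Matrix.cons_val_zero, Matrix.cons_val_fin_one, Matrix.cons_val_one, one_mul, neg_mul,
      mul_one]
    linear_combination -c * h00 + c * h11 + h01 - c * he
  have S_le : ℓ S ≤ ℓ S' + 8 * B := by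
    have hV := length_conj_le ℓ V⁻¹ S'
    rw [map_inv_eq_map, inv_inv, show V⁻¹ * S' * V = S by simp only [S']; group] at hV
    linarith [map_mul_le_add ℓ (upper c) (weyl R), H.upper_le c, H.length_weyl_le]
  have T'_le : ℓ T' ≤ ℓ T + 2 * B := by
    linarith [length_mul_mul_le ℓ (upper (-c)) T (upper c), H.upper_le c, H.upper_le (-c)]
  linarith [H.length_le_of_unit_sq_mul_sub v k T'_row0 T'_row1]

end IsBoundedOnTransvections

theorem exists_ne_zero_dvd_sq_add [Ring.HasFiniteQuotients R] {A α Q : R}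
    (hA : ¬ IsUnit A) (hA0 : A ≠ 0) (h2 : IsCoprime 2 A) (hα : IsCoprime α A) (hQ : IsCoprime Q A) :
    ∃ c : R, c ≠ 0 ∧ ∃ r, Q + r * A ∣ c ^ 2 + α := by
  obtain ⟨p, q, hpq, r, hr⟩ := exists_isCoprime_dvd_sq_add_mul_sq_sub hA0 h2 hα hQ
  obtain ⟨N, hN⟩ : ∃ N, N = p ^ 2 + α * q ^ 2 := ⟨_, rfl⟩
  have N_eq : N = Q + r * A := by rw [hN]; linear_combination hr
  have hqN : IsCoprime q N := by
    rw [hN, pow_two q, mul_left_comm]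
    exact (hpq.symm.pow_right (n := 2)).add_mul_left_right _
  have hN0 : N ≠ 0 := fun h => hA <| by
    have : A ∣ Q := ⟨-r, by linear_combination h - N_eq⟩
    exact hQ.isUnit_of_dvd' this dvd_rfl
  obtain ⟨c, hc0, x, hx⟩ : ∃ c, c ≠ 0 ∧ N ∣ c * q - p := by
    obtain ⟨a, b, hab⟩ := hqN
    by_cases hap : a * p = 0
    · exact ⟨N, hN0, q - p * b, by linear_combination p * hab - q * hap⟩
    · exact ⟨a * p, hap, -b * p, by linear_combination p * hab⟩
  refine ⟨c, hc0, r, N_eq ▸ (hqN.symm.pow_right (n := 2)).dvd_of_dvd_mul_left ?_⟩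
  exact ⟨1 + x * (c * q + p), by linear_combination (c * q + p) * hx - hN⟩

theorem exists_same_row_entries_of_dvd [IsDomain R] {S : SL(2, R)} {c e : R} (hc : c ≠ 0)
    (h00 : c ∣ S 0 0 - 1) (hce : c ∣ e)
    (hdvd : S 0 0 + c * S 0 1 ∣ -S 1 0 + c * (S 0 0 - S 1 1) + c ^ 2 * S 0 1 - c * e) :
    ∃ S' T : SL(2, R), S' 0 0 = S 0 0 ∧ S' 0 1 = S 0 1 ∧ T 0 0 = S 0 0 ∧
      T 0 1 = c ^ 2 * S 0 1 ∧ S' 1 1 = T 1 1 ∧ S' 1 0 = c ^ 2 * T 1 0 ∧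
      e = S' 0 0 - S' 1 1 + c * S' 0 1 - c * T 1 0 ∧ c ∣ S' 1 1 - 1 := by
  obtain ⟨τ, hτ⟩ := hdvd
  obtain ⟨k₁, hk₁⟩ := h00
  obtain ⟨e', he'⟩ := hce
  have hS := SL2_det S
  set P := S 0 0
  set β := S 0 1
  obtain ⟨m, hm⟩ : ∃ m, m = S 1 0 + τ * P := ⟨_, rfl⟩
  obtain ⟨d, hd⟩ : ∃ d, d = S 1 1 + τ * β := ⟨_, rfl⟩
  have det_eq : P * d - β * m = 1 := by rw [hm, hd]; linear_combination hS
  have hce : -m + c * (P - d) + c ^ 2 * β = c * e := by rw [hm, hd]; linear_combination hτ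
  obtain ⟨k₂, hk₂⟩ : c ∣ m := ⟨P - d + c * β - e, by linear_combination -hce⟩
  obtain ⟨k₃, hk₃⟩ : c ∣ d - 1 :=
    ⟨β * k₂ - k₁ * d, by linear_combination det_eq + β * hk₂ - d * hk₁⟩
  obtain ⟨m', hm'⟩ : c ^ 2 ∣ m :=
    ⟨k₁ - k₃ + β - e', by linear_combination -hce + c * hk₁ - c * hk₃ - c * he'⟩
  have he : e = P - d + c * β - c * m' := by
    apply mul_left_cancel₀ hc
    linear_combination -hce - hm'
  refine ⟨⟨!![P, β; m, d], ?_⟩, ⟨!![P, c ^ 2 * β; m', d], ?_⟩, rfl, rfl, rfl, rfl, rfl, hm', he,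
    k₃, hk₃⟩
  · rw [Matrix.det_fin_two_of, det_eq]
  · rw [Matrix.det_fin_two_of]
    linear_combination det_eq + β * hm'

namespace IsBoundedOnTransvections

variable [IsDomain R] [CharZero R] [Ring.HasFiniteQuotients R] {ℓ : GroupSeminorm SL(2, R)} {B : ℝ}
  (H : IsBoundedOnTransvections ℓ B) (h2 : ¬ IsUnit (2 : R)) {u : Rˣ} (hu : ¬ IsOfFinOrder u)
include H h2 hu

/-- The congruence needed by `length_le_of_entries` only has to be solved modulo `g₀₀ + c g₀₁`, once
that element is prime to the modulus `F` of `exists_unit_sq_sub_one_eq_mul`. -/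
theorem length_le_of_sq_mul_of_isCoprime {c : R} (hc : c ≠ 0) : ∃ F : R, F ≠ 0 ∧
    ∀ g h : SL(2, R), c ∣ g 0 0 - 1 → h 0 0 = g 0 0 → h 0 1 = c ^ 2 * g 0 1 →
      IsCoprime (g 0 0 + c * g 0 1) F → ℓ g ≤ ℓ h + 26 * B := by
  obtain ⟨F, hF0, hF⟩ := exists_unit_sq_sub_one_eq_mul h2 hu hc
  refine ⟨F, hF0, fun g h hg h0 h1 hcop => ?_⟩
  obtain ⟨e, z, v, hdvd, hce, hv, hz⟩ :=
    hF _ (-g 1 0 + c * (g 0 0 - g 1 1) + c ^ 2 * g 0 1) hcop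
  obtain ⟨S, T, hS0, hS1, hT0, hT1, h11, h10, he, hS11⟩ :=
    exists_same_row_entries_of_dvd hc hg hce hdvd
  have hzS : c ∣ z * (S 1 1 - c * S 0 1) - 1 := by
    obtain ⟨z', hz'⟩ := hz
    obtain ⟨k, hk⟩ := hS11
    exact ⟨z' * (S 1 1 - c * S 0 1) + k - S 0 1,
      by linear_combination (S 1 1 - c * S 0 1) * hz' + hk⟩
  have core := H.length_le_of_entries (hS0.trans hT0.symm) h11 (by rw [hT1, hS1]) h10 he hv hzS
  linarith [H.length_le_of_row_eq hS0.symm hS1.symm,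
    H.length_le_of_row_eq (hT0.trans h0.symm) (hT1.trans h1.symm)]

theorem length_le_of_sq_mul {c : R} (hc : c ≠ 0) {g h : SL(2, R)} (hg : c ∣ g 0 0 - 1)
    (h0 : h 0 0 = g 0 0) (h1 : h 0 1 = c ^ 2 * g 0 1) : ℓ g ≤ ℓ h + 28 * B := by
  obtain ⟨F, hF0, hF⟩ := H.length_le_of_sq_mul_of_isCoprime h2 hu hc
  have hcop : IsCoprime (g 0 0 + c * g 0 1) (c ^ 2 * g 0 1) := by
    have hgc : IsCoprime (g 0 0) c := isCoprime_of_dvd_sub hg isCoprime_one_left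
    exact (hgc.add_mul_left_left _).pow_right.mul_right
      ((isCoprime_row g 0).add_mul_right_left c)
  obtain ⟨t, ht⟩ := exists_isCoprime_add_mul_of_isCoprime hF0 hcop
  have bound := hF (g * lower (c ^ 2 * t)) (h * lower t)
    (by
      rw [mul_lower_apply_zero, add_sub_right_comm]
      exact dvd_add hg ⟨g 0 1 * (c * t), by ring⟩)
    (by rw [mul_lower_apply_zero, mul_lower_apply_zero, h0, h1]; ring)
    (by rw [mul_lower_apply_one, mul_lower_apply_one, h1])
    (by
      rw [mul_lower_apply_zero, mul_lower_apply_one]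
      convert ht using 1
      ring)
  linarith [H.length_le_mul_lower g (c ^ 2 * t), H.length_mul_lower_le h t]

theorem length_le_of_dvd_sub_one_of_isCoprime_two {κ : R} {g h : SL(2, R)} (hκ : κ ∣ g 0 0 - 1)
    (hg2 : IsCoprime 2 (g 0 0)) (h0 : g 0 0 = h 0 0) (h1 : g 0 1 = κ * h 0 1) :
    ℓ g ≤ ℓ h + 33 * B := by
  by_cases hunit : IsUnit (g 0 0)
  · linarith [H.length_le_of_isUnit hunit, apply_nonneg ℓ h, H.bound_nonneg]
  obtain ⟨α, hα⟩ := hκ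
  have hA0 : g 0 0 ≠ 0 := fun h0 => h2 (isCoprime_zero_right.1 (h0 ▸ hg2))
  obtain ⟨c, hc0, r, L, hL⟩ := exists_ne_zero_dvd_sq_add hunit hA0 hg2 (α := α) (Q := h 0 1)
    ⟨-κ, 1, by linear_combination hα⟩ (h0 ▸ (isCoprime_row h 0).symm)
  set Q := h 0 1 + r * g 0 0
  have reduced := H.length_le_of_sq_mul h2 hu hc0
    (g := g * upper (κ * r) * lower (-L)) (h := h * upper r * lower (-(κ * L)) * upper (-Q))
    ⟨-κ * c, by
      simp only [mul_lower_apply_zero, mul_upper_apply_zero, mul_upper_apply_one, h1]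
      linear_combination hα + κ * hL⟩
    (by
      simp only [mul_lower_apply_zero, mul_upper_apply_zero, mul_upper_apply_one, h1, h0]
      ring)
    (by
      simp only [mul_lower_apply_zero, mul_lower_apply_one, mul_upper_apply_zero,
        mul_upper_apply_one, h1, ← h0]
      linear_combination -Q * hα - κ * Q * hL)
  linarith [H.length_le_mul_upper g (κ * r), H.length_le_mul_lower (g * upper (κ * r)) (-L),
    H.length_mul_upper_le h r, H.length_mul_lower_le (h * upper r) (-(κ * L)),
    H.length_mul_upper_le (h * upper r * lower (-(κ * L))) (-Q)]

theorem length_le_of_dvd_sub_one {κ : R} {g h : SL(2, R)} (hκ : κ ∣ g 0 0 - 1)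
    (h0 : g 0 0 = h 0 0) (h1 : g 0 1 = κ * h 0 1) : ℓ g ≤ ℓ h + 35 * B := by
  obtain ⟨s, hs⟩ := exists_isCoprime_add_mul_of_isCoprime (two_ne_zero (α := R)) (isCoprime_row g 0)
  have reduced := H.length_le_of_dvd_sub_one_of_isCoprime_two h2 hu (κ := κ)
    (g := g * lower s) (h := h * lower (κ * s))
    (by
      rw [mul_lower_apply_zero, add_sub_right_comm, h1]
      exact dvd_add hκ ⟨h 0 1 * s, by ring⟩)
    (by
      rw [mul_lower_apply_zero, mul_comm (g 0 1)]
      exact hs.symm)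
    (by rw [mul_lower_apply_zero, mul_lower_apply_zero, h0, h1]; ring)
    (by rw [mul_lower_apply_one, mul_lower_apply_one, h1])
  linarith [H.length_le_mul_lower g s, H.length_mul_lower_le h (κ * s)]

theorem length_le_of_dvd_add_one {κ : R} {g h : SL(2, R)} (hκ : κ ∣ g 0 0 + 1)
    (h0 : g 0 0 = h 0 0) (h1 : g 0 1 = κ * h 0 1) : ℓ g ≤ ℓ h + 47 * B := by
  have negated := H.length_le_of_dvd_sub_one h2 hu (κ := κ)
    (g := unitDiag (-1) * g) (h := unitDiag (-1) * h)
    (by simpa [SL2_mul_apply, sub_eq_neg_add] using hκ.neg_right)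
    (by simp [SL2_mul_apply, h0]) (by simp [SL2_mul_apply, h1])
  have g_le := map_mul_le_add ℓ (unitDiag (-1))⁻¹ (unitDiag (-1) * g)
  rw [inv_mul_cancel_left, map_inv_eq_map] at g_le
  linarith [map_mul_le_add ℓ (unitDiag (-1)) h, H.length_unitDiag_le (-1)]

theorem length_sq_le {g : SL(2, R)} {x b : R} (h01 : g 0 1 = x * b) (hb : b ∣ g 0 0 - 1)
    (hx : x ∣ g 0 0 - g 1 1) : ℓ (g ^ 2) ≤ 92 * B := by
  have hdet := SL2_det g
  have hcop : IsCoprime (g 0 0) (x * b) := h01 ▸ isCoprime_row g 0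
  obtain ⟨g₁, g₁0, g₁1⟩ := (hcop.of_mul_right_right.pow_left (m := 2)).exists_SL2_row 0
  obtain ⟨g₂, g₂0, g₂1⟩ := (hcop.pow_left (m := 2)).exists_SL2_row 0
  have g₁_le : ℓ g₁ ≤ 9 * B := by
    obtain ⟨s, hs⟩ := hb
    have is_one : (g₁ * lower (-(s * (g 0 0 + 1)))) 0 0 = 1 := by
      rw [mul_lower_apply_zero, g₁0, g₁1]
      linear_combination (g 0 0 + 1) * hs
    linarith [H.length_le_mul_lower g₁ (-(s * (g 0 0 + 1))),
      H.length_le_of_isUnit (is_one ▸ isUnit_one)]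
  have g₂_le : ℓ g₂ ≤ ℓ g₁ + 35 * B := by
    refine H.length_le_of_dvd_sub_one h2 hu (κ := x) ?_ (g₂0.trans g₁0.symm) (by rw [g₂1, g₁1])
    obtain ⟨y, hy⟩ := hx
    refine ⟨g 0 0 * y + b * g 1 0, ?_⟩
    rw [g₂0]
    linear_combination g 0 0 * hy + hdet + g 1 0 * h01
  have sq_le : ℓ (g ^ 2) ≤ ℓ (g₂ * lower (g 1 0)) + 47 * B := by
    have sq0 : (g ^ 2) 0 0 = g 0 0 ^ 2 + g 0 1 * g 1 0 := by rw [pow_two, SL2_mul_apply]; ring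
    have sq1 : (g ^ 2) 0 1 = (g 0 0 + g 1 1) * g 0 1 := by rw [pow_two, SL2_mul_apply]; ring
    refine H.length_le_of_dvd_add_one h2 hu (κ := g 0 0 + g 1 1) ?_ ?_ ?_
    · exact ⟨g 0 0, by rw [sq0]; linear_combination -hdet⟩
    · rw [sq0, mul_lower_apply_zero, g₂0, g₂1, h01]
    · rw [sq1, mul_lower_apply_one, g₂1, h01]
  linarith [H.length_mul_lower_le g₂ (g 1 0)]

theorem exists_length_pow_le (g : SL(2, R)) : ∃ k : ℕ, k ≠ 0 ∧ ℓ (g ^ k) ≤ 92 * B := by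
  by_cases hb : g 0 1 = 0
  · have hdet := SL2_det g
    rw [hb, zero_mul, sub_zero] at hdet
    refine ⟨1, one_ne_zero, ?_⟩
    rw [pow_one]
    linarith [H.length_le_of_isUnit (.of_mul_eq_one _ hdet), H.bound_nonneg]
  obtain ⟨k, hk0, hk⟩ := exists_dvd_pow_sub_one hb
  obtain ⟨x, y, h00, h01, -, h11⟩ := exists_pow_entries_eq g k
  refine ⟨k * 2, mul_ne_zero hk0 two_ne_zero, ?_⟩
  rw [pow_mul]
  refine H.length_sq_le h2 hu h01 ?_ ⟨g 0 0 - g 1 1, by rw [h00, h11]; ring⟩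
  simpa using dvd_add (dvd_pow_apply_zero_zero_sub g k) (hk _ (isCoprime_row g 0))

end IsBoundedOnTransvections

end SpecialLinearTwo

section Transvections

open Matrix.SpecialLinearGroup Multiplicative
open scoped MatrixGroups

variable {R : Type*} [CommRing R]

/-- The determinant of the matrix with columns `v` and `w`. -/
def wedge (v w : Fin 2 → R) : R := v 0 * w 1 - v 1 * w 0

theorem SL2_smul_apply (g : SL(2, R)) (v : Fin 2 → R) (i : Fin 2) :
    (g • v) i = g i 0 * v 0 + g i 1 * v 1 := by
  rw [Matrix.SpecialLinearGroup.smul_def, Matrix.smul_eq_mulVec, Matrix.mulVec_eq_sum,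
    Fin.sum_univ_two]
  simp [mul_comm]

theorem wedge_smul_smul (g : SL(2, R)) (v w : Fin 2 → R) : wedge (g • v) (g • w) = wedge v w := by
  simp only [wedge, SL2_smul_apply]
  linear_combination (v 0 * w 1 - v 1 * w 0) * SL2_det g

theorem wedge_smul_right_eq (g : SL(2, R)) (v w : Fin 2 → R) :
    wedge v (g • w) = wedge (g⁻¹ • v) w := by
  rw [← wedge_smul_smul g (g⁻¹ • v), smul_inv_smul]

theorem wedge_const_smul_right (x : R) (v w : Fin 2 → R) : wedge v (x • w) = x * wedge v w := by
  simp only [wedge, Pi.smul_apply, smul_eq_mul]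
  ring

theorem wedge_self (v : Fin 2 → R) : wedge v v = 0 := by
  rw [wedge, mul_comm, sub_self]

theorem wedge_add_right (v w w' : Fin 2 → R) : wedge v (w + w') = wedge v w + wedge v w' := by
  simp only [wedge, Pi.add_apply]
  ring

theorem exists_wedge_ne_zero {w : Fin 2 → R} (hw : w ≠ 0) : ∃ z, wedge w z ≠ 0 := by
  contrapose! hw
  ext i
  fin_cases i
  · simpa [wedge] using hw ![0, 1]
  · simpa [wedge] using hw ![1, 0]

theorem wedge_eq_zero_trans [IsDomain R] {v w v' : Fin 2 → R} (hw : w ≠ 0) (hv : wedge v w = 0)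
    (hv' : wedge v' w = 0) : wedge v v' = 0 := by
  simp only [wedge] at hv hv' ⊢
  obtain ⟨i, hi⟩ := Function.ne_iff.1 hw
  refine mul_left_cancel₀ hi ?_
  fin_cases i
  · simp only [Fin.zero_eta]
    linear_combination v' 0 * hv - v 0 * hv'
  · simp only [Fin.mk_one]
    linear_combination v' 1 * hv - v 1 * hv'

/-- The matrix of the transvection `p => p + q (w ∧ p) w` with axis `w`. -/
def axialTransvection (w : Fin 2 → R) (q : R) : SL(2, R) :=
  ⟨!![1 - q * w 0 * w 1, q * w 0 ^ 2; -(q * w 1 ^ 2), 1 + q * w 0 * w 1],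
    by rw [Matrix.det_fin_two_of]; ring⟩

@[simp]
theorem coe_axialTransvection (w : Fin 2 → R) (q : R) :
    (axialTransvection w q : Matrix (Fin 2) (Fin 2) R) =
      !![1 - q * w 0 * w 1, q * w 0 ^ 2; -(q * w 1 ^ 2), 1 + q * w 0 * w 1] :=
  rfl

/-- The one-parameter group of transvections with axis `w`. -/
def unipotent (w : Fin 2 → R) : Multiplicative R →* SL(2, R) :=
  MonoidHom.mk' (fun q => axialTransvection w (toAdd q)) fun a b => by
    apply SL2_ext <;> simp [SL2_mul_apply] <;> ring

theorem unipotent_ofAdd (w : Fin 2 → R) (q : R) : unipotent w (ofAdd q) = axialTransvection w q :=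
  rfl

theorem unipotent_smul (w : Fin 2 → R) (q : R) (p : Fin 2 → R) :
    unipotent w (ofAdd q) • p = p + (q * wedge w p) • w := by
  ext i
  fin_cases i <;> simp [SL2_smul_apply, unipotent_ofAdd, wedge] <;> ring

theorem unipotent_eq_upper (x : R) : unipotent ![1, 0] (ofAdd x) = upper x := by
  apply SL2_ext <;> simp [unipotent_ofAdd]

theorem lower_eq_weyl_conj_upper (x : R) : lower x = weyl R * upper (-x) * (weyl R)⁻¹ := by
  apply SL2_ext <;> simp [SL2_mul_apply]

theorem unitDiag_conj_upper (v : Rˣ) (x : R) :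
    unitDiag v * upper x * (unitDiag v)⁻¹ = upper ((v : R) ^ 2 * x) := by
  apply SL2_ext <;> simp [SL2_mul_apply]
  ring

namespace IsGromovHyperbolic

variable {ℓ : GroupSeminorm SL(2, R)} {δ C : ℝ} (hℓ : IsGromovHyperbolic ℓ δ)
  [Ring.HasFiniteQuotients R] {u : Rˣ} (hu : ¬ IsOfFinOrder u)
include hℓ hu

theorem exists_isBoundedOnTransvections (hsplit : HasMidpointSplitting ℓ C) [Module.Finite ℤ R] :
    ∃ B, IsBoundedOnTransvections ℓ B := by
  have hη : ((u : R) ^ 2) ^ 2 - 1 ≠ 0 := fun h => hu <| isOfFinOrder_iff_pow_eq_one.2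
    ⟨4, by norm_num, Units.ext (by push_cast; linear_combination h)⟩
  obtain ⟨m, hm, hdvd⟩ := exists_natCast_dvd hη
  obtain ⟨B, hB⟩ := hℓ.bddAbove_length_ofAdd hsplit (e := unipotent ![1, 0]) (h := unitDiag u)
    (fun x => by simp only [unipotent_eq_upper, unitDiag_conj_upper]) hm hdvd
  have upper_le : ∀ x, ℓ (upper x) ≤ B := fun x => hB ⟨x, by simp only [unipotent_eq_upper]⟩
  refine ⟨B + 2 * ℓ (weyl R), fun x => ?_, fun x => ?_⟩
  · linarith [upper_le x, apply_nonneg ℓ (weyl R)]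
  · rw [lower_eq_weyl_conj_upper]
    linarith [length_conj_le ℓ (weyl R) (upper (-x)), upper_le (-x)]

theorem length_sq_le_of_isBoundedOnTransvections [IsDomain R] [CharZero R] {B : ℝ}
    (H : IsBoundedOnTransvections ℓ B) (h2 : ¬ IsUnit (2 : R)) (g : SL(2, R)) :
    ℓ (g ^ 2) ≤ ℓ g + (2 * δ + 1) := by
  obtain ⟨N, hN⟩ := exists_nat_gt (92 * B)
  obtain ⟨k, hk0, hk⟩ := H.exists_length_pow_le h2 hu (g ^ (N + 1))
  obtain ⟨n, hn⟩ : ∃ n, (N + 1) * k = n + 1 :=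
    Nat.exists_eq_succ_of_ne_zero (mul_ne_zero N.succ_ne_zero hk0)
  have hNn : N ≤ n := by
    have := Nat.le_mul_of_pos_right (N + 1) (Nat.pos_of_ne_zero hk0)
    lia
  rw [← pow_mul, hn] at hk
  exact hℓ.length_sq_le_of_length_pow_lt ((hk.trans_lt hN).trans_le (Nat.cast_le.2 hNn))

end IsGromovHyperbolic

end Transvections

section Generation

open Matrix.SpecialLinearGroup Multiplicative
open scoped MatrixGroups

variable {R : Type*} [CommRing R]

/-- The ideal generated by the coordinates of a vector. -/
def contentIdeal (v : Fin 2 → R) : Ideal R := Ideal.span {v 0, v 1}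

theorem apply_mem_contentIdeal (v : Fin 2 → R) (i : Fin 2) : v i ∈ contentIdeal v := by
  refine Ideal.subset_span ?_
  fin_cases i <;> simp

theorem contentIdeal_const_smul (x : R) (v : Fin 2 → R) :
    contentIdeal (x • v) = Ideal.span {x} * contentIdeal v := by
  rw [contentIdeal, contentIdeal, Ideal.span_mul_span', Set.singleton_mul, Set.image_pair]
  rfl

theorem contentIdeal_ne_bot {v : Fin 2 → R} (hv : v ≠ 0) : contentIdeal v ≠ ⊥ := by
  contrapose! hv
  ext i
  exact Ideal.mem_bot.1 (hv ▸ apply_mem_contentIdeal v i)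

theorem exists_mul_add_mul_eq_of_mem_contentIdeal_mul {v : Fin 2 → R} {J : Ideal R} {d : R}
    (hd : d ∈ contentIdeal v * J) : ∃ x ∈ J, ∃ y ∈ J, v 0 * x + v 1 * y = d := by
  rw [contentIdeal, Ideal.span_insert, Ideal.sup_mul, Submodule.mem_sup] at hd
  obtain ⟨y, hy, z, hz, hyz⟩ := hd
  obtain ⟨x₁, hx₁, rfl⟩ := Ideal.mem_span_singleton_mul.1 hy
  obtain ⟨x₂, hx₂, rfl⟩ := Ideal.mem_span_singleton_mul.1 hz
  exact ⟨x₁, hx₁, x₂, hx₂, hyz⟩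

/-- With `J` inverse to the common content up to the principal ideal `(d)`, solutions of
`p₀ x + p₁ y = d` and `q₀ x' + q₁ y' = d` in `J` complete `p` and `q` to matrices of determinant
`d`, and the quotient of these two matrices is integral. -/
theorem exists_smul_eq_of_contentIdeal_eq [IsDedekindDomain R] {p q : Fin 2 → R} (hp : p ≠ 0)
    (h : contentIdeal p = contentIdeal q) : ∃ s : SL(2, R), s • p = q := by
  obtain ⟨d, hd, hd0⟩ := Submodule.exists_mem_ne_zero_of_ne_bot (contentIdeal_ne_bot hp)
  obtain ⟨J, hJ⟩ := Ideal.dvd_iff_le.2 ((Ideal.span_singleton_le_iff_mem _).2 hd)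
  have hdJ : d ∈ contentIdeal p * J := hJ ▸ Ideal.mem_span_singleton_self d
  obtain ⟨x, hx, y, hy, hxy⟩ := exists_mul_add_mul_eq_of_mem_contentIdeal_mul hdJ
  obtain ⟨x', hx', y', hy', hxy'⟩ := exists_mul_add_mul_eq_of_mem_contentIdeal_mul (h ▸ hdJ)
  have hp_mul : ∀ i, ∀ z ∈ J, p i * z ∈ contentIdeal p * J :=
    fun i z hz => Ideal.mul_mem_mul (apply_mem_contentIdeal p i) hz
  have hq_mul : ∀ i, ∀ z ∈ J, q i * z ∈ contentIdeal p * J :=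
    fun i z hz => Ideal.mul_mem_mul (h ▸ apply_mem_contentIdeal q i) hz
  have dvd_of_mem : ∀ z ∈ contentIdeal p * J, d ∣ z :=
    fun z hz => Ideal.mem_span_singleton.1 (hJ ▸ hz)
  obtain ⟨a, ha⟩ := dvd_of_mem _ (add_mem (hq_mul 0 x hx) (hp_mul 1 y' hy'))
  obtain ⟨b, hb⟩ := dvd_of_mem _ (sub_mem (hq_mul 0 y hy) (hp_mul 0 y' hy'))
  obtain ⟨c, hc⟩ := dvd_of_mem _ (sub_mem (hq_mul 1 x hx) (hp_mul 1 x' hx'))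
  obtain ⟨e, he⟩ := dvd_of_mem _ (add_mem (hq_mul 1 y hy) (hp_mul 0 x' hx'))
  have hdet : a * e - b * c = 1 := by
    apply mul_left_cancel₀ (mul_ne_zero hd0 hd0)
    calc d * d * (a * e - b * c) = (d * a) * (d * e) - (d * b) * (d * c) := by ring
      _ = d * d * 1 := by
        rw [← ha, ← hb, ← hc, ← he]
        linear_combination (q 0 * x' + q 1 * y') * hxy + d * hxy'
  let s : SL(2, R) := ⟨!![a, b; c, e], by rw [Matrix.det_fin_two_of, hdet]⟩
  refine ⟨s, funext fun i => mul_left_cancel₀ hd0 ?_⟩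
  rw [SL2_smul_apply]
  fin_cases i <;> simp [s, -mul_eq_mul_left_iff]
  · linear_combination -p 0 * ha - p 1 * hb + q 0 * hxy
  · linear_combination -p 0 * hc - p 1 * he + q 1 * hxy

theorem exists_finite_minimal_representatives {α β : Type*} [Finite β] (cls : α → β) (f : α → ℕ) :
    ∃ W : Set α, W.Finite ∧ ∀ p, ∃ w ∈ W, cls w = cls p ∧ f w ≤ f p := by
  have hmin : ∀ c : Set.range cls, ∃ w, cls w = c ∧ ∀ p, cls p = c → f w ≤ f p := by
    rintro ⟨c, hc⟩
    obtain ⟨w, hw, hle⟩ := exists_minimalFor_of_wellFoundedLT (fun p => cls p = c) f hc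
    exact ⟨w, hw, fun p hp => (le_total (f w) (f p)).elim id (hle hp)⟩
  choose w hw hle using hmin
  exact ⟨Set.range w, Set.finite_range w,
    fun p => ⟨_, ⟨⟨cls p, p, rfl⟩, rfl⟩, hw _, hle _ p rfl⟩⟩

theorem exists_finite_remainders [Ring.HasFiniteQuotients R] {m : R} (hm : m ≠ 0) :
    ∃ Q : Set R, Q.Finite ∧ ∀ q, ∃ q₀ ∈ Q, ∃ q₁, q = m * q₁ + q₀ := by
  have := finite_quotient_span_singleton hm
  refine ⟨Set.range (Quotient.out : R ⧸ Ideal.span {m} → R), Set.finite_range _, fun q => ?_⟩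
  refine ⟨_, ⟨Ideal.Quotient.mk _ q, rfl⟩, ?_⟩
  obtain ⟨q₁, hq₁⟩ := Ideal.mem_span_singleton.1 <| Ideal.Quotient.mk_eq_mk_iff_sub_mem _ _ |>.1
    (Ideal.Quotient.mk_out (Ideal.Quotient.mk (Ideal.span {m}) q)).symm
  exact ⟨q₁, sub_eq_iff_eq_add.1 hq₁⟩

/-- The absolute value of the norm to `ℤ`, as a natural number. -/
noncomputable def elementNorm (x : R) : ℕ := (Algebra.norm ℤ x).natAbs

theorem elementNorm_mul (x y : R) : elementNorm (x * y) = elementNorm x * elementNorm y := by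
  rw [elementNorm, map_mul, Int.natAbs_mul, elementNorm, elementNorm]

theorem exists_mem_wedge_smul_eq_zero {K : Subgroup SL(2, R)} {W : Set (Fin 2 → R)}
    (hdescent : ∀ v, ∀ w ∈ W, wedge v w ≠ 0 → ∃ w' ∈ W, ∃ k ∈ K,
      elementNorm (wedge v (k • w')) < elementNorm (wedge v w))
    (v : Fin 2 → R) {w : Fin 2 → R} (hw : w ∈ W) :
    ∃ h ∈ K, ∃ w' ∈ W, wedge v (h • w') = 0 := by
  induction hn : elementNorm (wedge v w) using Nat.strong_induction_on generalizing v w with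
  | h n ih =>
    by_cases hvw : wedge v w = 0
    · exact ⟨1, one_mem K, w, hw, by rwa [one_smul]⟩
    · obtain ⟨w', hw', k, hk, hlt⟩ := hdescent v w hw hvw
      rw [wedge_smul_right_eq, hn] at hlt
      obtain ⟨h, hh, w'', hw'', hzero⟩ := ih _ hlt (k⁻¹ • v) hw' rfl
      exact ⟨k * h, mul_mem hk hh, w'', hw'', by rwa [mul_smul, wedge_smul_right_eq k]⟩

theorem exists_inv_mul_apply_one_zero_eq_zero [IsDomain R] {w : Fin 2 → R} (hw : w ≠ 0) :
    ∃ g₀ : SL(2, R), ∀ g : SL(2, R), wedge (g • ![1, 0]) w = 0 → (g₀⁻¹ * g) 1 0 = 0 := by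
  by_cases hex : ∃ g₀ : SL(2, R), wedge (g₀ • ![1, 0]) w = 0
  · obtain ⟨g₀, hg₀⟩ := hex
    refine ⟨g₀, fun g hg => ?_⟩
    have hpar := wedge_eq_zero_trans hw hg hg₀
    rw [wedge_smul_right_eq, ← mul_smul] at hpar
    simpa [wedge, SL2_smul_apply] using hpar
  · exact ⟨1, fun g hg => absurd ⟨g, hg⟩ hex⟩

theorem not_isUnit_two [CharZero R] [Module.Finite ℤ R] : ¬ IsUnit (2 : R) := by
  intro h
  have := Algebra.IsIntegral.isLocalHom ℤ R
  exact absurd (IsUnit.of_map (algebraMap ℤ R) 2 (by simpa using h)) (by decide)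

section Norm

variable [IsDedekindDomain R] [CharZero R] [Module.Finite ℤ R]

theorem elementNorm_pos {x : R} (hx : x ≠ 0) : 0 < elementNorm x :=
  Int.natAbs_pos.2 (Algebra.norm_ne_zero_iff.2 hx)

theorem exists_finite_contentIdeal_representatives [Finite (ClassGroup R)] :
    ∃ W : Set (Fin 2 → R), W.Finite ∧ (∀ w ∈ W, w ≠ 0) ∧ ∀ p ≠ 0, ∃ w ∈ W, ∃ x y : R,
      y ≠ 0 ∧ contentIdeal (y • w) = contentIdeal (x • p) ∧ elementNorm x ≤ elementNorm y := by
  obtain ⟨W, hW, hrep⟩ := exists_finite_minimal_representatives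
    (fun p : {p : Fin 2 → R // p ≠ 0} => ClassGroup.mk0
      ⟨contentIdeal p.1, mem_nonZeroDivisors_of_ne_zero (contentIdeal_ne_bot p.2)⟩)
    (fun p => Ideal.absNorm (contentIdeal p.1))
  refine ⟨Subtype.val '' W, hW.image _, fun _ ⟨w, _, hw⟩ => hw ▸ w.2, fun p hp => ?_⟩
  obtain ⟨w, hw, hclass, hle⟩ := hrep ⟨p, hp⟩
  obtain ⟨y, x, hy, -, hxy⟩ := ClassGroup.mk0_eq_mk0_iff.1 hclass
  refine ⟨w, ⟨w, hw, rfl⟩, x, y, hy, by rwa [contentIdeal_const_smul, contentIdeal_const_smul], ?_⟩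
  have hnorm := congrArg Ideal.absNorm hxy
  simp only [map_mul, Ideal.absNorm_span_singleton] at hnorm
  change elementNorm y * _ = elementNorm x * _ at hnorm
  have hpos : 0 < Ideal.absNorm (contentIdeal p) :=
    Nat.pos_of_ne_zero (Ideal.absNorm_eq_zero_iff.not.2 (contentIdeal_ne_bot hp))
  exact Nat.le_of_mul_le_mul_right (hnorm ▸ Nat.mul_le_mul_left _ hle) hpos

theorem exists_finite_wedge_representatives [Finite (ClassGroup R)] :
    ∃ W : Set (Fin 2 → R), W.Finite ∧ (∀ w ∈ W, w ≠ 0) ∧ ∀ p ≠ 0, ∃ w ∈ W, ∃ s : SL(2, R), ∀ v,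
      elementNorm (wedge v (s • w)) ≤ elementNorm (wedge v p) := by
  obtain ⟨W, hW, hW0, hrep⟩ := exists_finite_contentIdeal_representatives (R := R)
  refine ⟨W, hW, hW0, fun p hp => ?_⟩
  obtain ⟨w, hw, x, y, hy, hcontent, hle⟩ := hrep p hp
  obtain ⟨s, hs⟩ := exists_smul_eq_of_contentIdeal_eq (smul_ne_zero hy (hW0 w hw)) hcontent
  refine ⟨w, hw, s, fun v => Nat.le_of_mul_le_mul_left ?_ (elementNorm_pos hy)⟩
  calc elementNorm y * elementNorm (wedge v (s • w))
      = elementNorm x * elementNorm (wedge v p) := by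
        rw [← elementNorm_mul, ← elementNorm_mul, ← wedge_const_smul_right,
          ← wedge_const_smul_right, ← smul_comm s, hs]
    _ ≤ elementNorm y * elementNorm (wedge v p) := Nat.mul_le_mul_right _ hle

theorem exists_finite_approximation : ∃ F : Set R, F.Finite ∧ 0 ∉ F ∧ ∀ a b : R, b ≠ 0 →
    ∃ q, ∃ r ∈ F, elementNorm (r * a - q * b) < elementNorm b := by
  classical
  let bS := Module.Free.chooseBasis ℤ R
  refine ⟨(Int.cast : ℤ → R) '' ClassGroup.finsetApprox bS AbsoluteValue.absIsAdmissible,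
    (Finset.finite_toSet _).image _, ?_, fun a b hb => ?_⟩
  · rintro ⟨n, hn, hn0⟩
    rw [Int.cast_eq_zero.1 hn0] at hn
    exact ClassGroup.finsetApprox.zero_notMem _ _ hn
  · obtain ⟨q, r, hr, hlt⟩ :=
      ClassGroup.exists_mem_finset_approx' bS AbsoluteValue.absIsAdmissible a hb
    refine ⟨q, r, ⟨r, hr, rfl⟩, ?_⟩
    rw [zsmul_eq_mul] at hlt
    rwa [elementNorm, elementNorm, ← Nat.cast_lt (α := ℤ), Int.natCast_natAbs, Int.natCast_natAbs]

/-- Euclidean division with finitely many denominators `r`: the vector `r z - q w` has a smaller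
wedge product with `v` than `w` does, and a power of the unipotent with axis `w` reduces the
coefficient `q` modulo `r (w ∧ z)`. -/
theorem exists_finite_unipotent_wedge_lt {w : Fin 2 → R} (hw : w ≠ 0) :
    ∃ T : Set (Fin 2 → R), T.Finite ∧ 0 ∉ T ∧ ∀ v, wedge v w ≠ 0 → ∃ t ∈ T, ∃ q,
      elementNorm (wedge v (unipotent w (ofAdd q) • t)) < elementNorm (wedge v w) := by
  obtain ⟨z, hz⟩ := exists_wedge_ne_zero hw
  obtain ⟨F, hF, hF0, happrox⟩ := exists_finite_approximation (R := R)
  have hmod : ∀ r ∈ F, wedge w z * r ≠ 0 :=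
    fun r hr => mul_ne_zero hz (ne_of_mem_of_not_mem hr hF0)
  choose! Q hQ hQrem using fun r hr => exists_finite_remainders (hmod r hr)
  refine ⟨⋃ r ∈ F, (fun q₀ => r • z + q₀ • w) '' Q r, hF.biUnion fun r hr => (hQ r hr).image _,
    ?_, fun v hv => ?_⟩
  · simp only [Set.mem_iUnion, not_exists]
    rintro r hr ⟨q₀, -, ht⟩
    apply hmod r hr
    calc wedge w z * r = wedge w (r • z + q₀ • w) := by
          simp only [wedge_add_right, wedge_const_smul_right, wedge_self]
          ring
      _ = wedge w 0 := congrArg (wedge w) ht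
      _ = 0 := by simp [wedge]
  · obtain ⟨q, r, hr, hlt⟩ := happrox (wedge v z) (wedge v w) hv
    obtain ⟨q₀, hq₀, q₁, hq⟩ := hQrem r hr (-q)
    refine ⟨r • z + q₀ • w, Set.mem_biUnion hr ⟨q₀, hq₀, rfl⟩, q₁, ?_⟩
    convert hlt using 2
    rw [unipotent_smul]
    simp only [wedge_add_right, wedge_const_smul_right, wedge_self]
    linear_combination -wedge v w * hq

theorem exists_finite_wedge_lt [Finite (ClassGroup R)] :
    ∃ W : Set (Fin 2 → R), ∃ F : Set SL(2, R), W.Finite ∧ F.Finite ∧ W.Nonempty ∧ (∀ w ∈ W, w ≠ 0) ∧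
      ∀ v, ∀ w ∈ W, wedge v w ≠ 0 → ∃ w' ∈ W, ∃ s ∈ F, ∃ q,
        elementNorm (wedge v ((unipotent w (ofAdd q) * s) • w')) < elementNorm (wedge v w) := by
  obtain ⟨W, hW, hW0, hrep⟩ := exists_finite_wedge_representatives (R := R)
  choose! T hT hT0 hlt using fun w hw => exists_finite_unipotent_wedge_lt (hW0 w hw)
  choose! r hr s hs using hrep
  refine ⟨W, s '' ⋃ w ∈ W, T w, hW, (hW.biUnion hT).image s,
    ⟨r ![1, 0], hr _ (by simp)⟩, hW0, fun v w hw hvw => ?_⟩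
  obtain ⟨t, ht, q, htq⟩ := hlt w hw v hvw
  have ht0 : t ≠ 0 := ne_of_mem_of_not_mem ht (hT0 w hw)
  refine ⟨r t, hr t ht0, s t, ⟨t, Set.mem_biUnion hw ht, rfl⟩, q, lt_of_le_of_lt ?_ htq⟩
  rw [mul_smul, wedge_smul_right_eq, wedge_smul_right_eq _ _ t]
  exact hs t ht0 _

theorem exists_closure_unipotent_union_eq_top [Finite (ClassGroup R)] :
    ∃ W : Set (Fin 2 → R), ∃ F : Set SL(2, R), W.Finite ∧ F.Finite ∧
      Subgroup.closure ((⋃ w ∈ W, (unipotent w).range) ∪ {g | g 1 0 = 0} ∪ F) = ⊤ := by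
  obtain ⟨W, F, hW, hF, ⟨w₁, hw₁⟩, hW0, hlt⟩ := exists_finite_wedge_lt (R := R)
  choose! g₀ hg₀ using fun w hw => exists_inv_mul_apply_one_zero_eq_zero (hW0 w hw)
  refine ⟨W, F ∪ g₀ '' W, hW, hF.union (hW.image g₀), eq_top_iff.2 fun g _ => ?_⟩
  set S : Set SL(2, R) := (⋃ w ∈ W, (unipotent w).range) ∪ {g | g 1 0 = 0} ∪ (F ∪ g₀ '' W)
  obtain ⟨h, hh, w, hw, hzero⟩ := exists_mem_wedge_smul_eq_zero (K := Subgroup.closure S)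
    (fun v w hw hvw => by
      obtain ⟨w', hw', s, hs, q, hq⟩ := hlt v w hw hvw
      exact ⟨w', hw', _, mul_mem
        (Subgroup.subset_closure (.inl (.inl (Set.mem_biUnion hw ⟨ofAdd q, rfl⟩))))
        (Subgroup.subset_closure (.inr (.inl hs))), hq⟩)
    (g • ![1, 0]) hw₁
  rw [wedge_smul_right_eq, ← mul_smul] at hzero
  rw [← mul_inv_cancel_left h g, ← mul_inv_cancel_left (g₀ w) (h⁻¹ * g)]
  exact mul_mem hh (mul_mem (Subgroup.subset_closure (.inr (.inr ⟨w, hw, rfl⟩)))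
    (Subgroup.subset_closure (.inl (.inr (hg₀ w hw _ hzero)))))

theorem IsGromovHyperbolic.bddAbove_range_length [Finite (ClassGroup R)]
    {ℓ : GroupSeminorm SL(2, R)} {δ C : ℝ} (hℓ : IsGromovHyperbolic ℓ δ)
    (hsplit : HasMidpointSplitting ℓ C) {u : Rˣ} (hu : ¬ IsOfFinOrder u) :
    BddAbove (Set.range ℓ) := by
  obtain ⟨B, H⟩ := hℓ.exists_isBoundedOnTransvections hu hsplit
  have hsq := hℓ.length_sq_le_of_isBoundedOnTransvections hu H not_isUnit_two
  obtain ⟨W, F, hW, hF, htop⟩ := exists_closure_unipotent_union_eq_top (R := R)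
  have hunipotent : BddAbove (ℓ '' ⋃ w ∈ W, (unipotent w).range) := by
    rw [Set.image_iUnion₂]
    exact hW.bddAbove_biUnion.2 fun w _ =>
      hℓ.bddAbove_length_of_fg hsplit (fg_range_of_module_finite _) fun h _ => hsq h
  have hborel : BddAbove (ℓ '' {g : SL(2, R) | g 1 0 = 0}) := by
    refine ⟨8 * B, ?_⟩
    rintro _ ⟨g, hg, rfl⟩
    have hdet := SL2_det g
    rw [show g 1 0 = 0 from hg, mul_zero, sub_zero] at hdet
    exact H.length_le_of_isUnit (.of_mul_eq_one _ hdet)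
  have hgen := (hunipotent.union hborel).union (hF.image ℓ).bddAbove
  rw [← Set.image_union, ← Set.image_union] at hgen
  have hclosure := hℓ.bddAbove_length_closure hsplit hgen fun h _ => hsq h
  rwa [htop, Subgroup.coe_top, Set.image_univ] at hclosure

end Norm

end Generation

theorem exists_not_isOfFinOrder_of_infinite_units (K : Type*) [Field K] [NumberField K]
    [Infinite (𝓞 K)ˣ] : ∃ u : (𝓞 K)ˣ, ¬ IsOfFinOrder u := by
  by_contra! hfin
  have htop : NumberField.Units.torsion K = ⊤ := eq_top_iff.2 fun u _ => hfin u
  have : Finite (⊤ : Subgroup (𝓞 K)ˣ) := htop ▸ inferInstanceAs (Finite (Units.torsion K))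
  exact not_finite_iff_infinite.2 ‹_› (Finite.of_equiv _ Subgroup.topEquiv.toEquiv)

theorem sl2_action_on_quasitree_bounded_orbit_general {R : Type*} [CommRing R] [IsDedekindDomain R]
    [CharZero R] [Module.Finite ℤ R] [Finite (ClassGroup R)] {u : Rˣ} (hu : ¬ IsOfFinOrder u)
    {X : Type*} [PseudoMetricSpace X] {V : Type*} {T : SimpleGraph V} (hT : T.IsTree) {q : X → V}
    {K C : ℝ} (hK : 0 < K) (hlower : ∀ a b, dist a b / K - C ≤ T.dist (q a) (q b))
    (hupper : ∀ a b, T.dist (q a) (q b) ≤ K * dist a b + C)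
    (hdense : ∀ v, ∃ x, (T.dist v (q x) : ℝ) ≤ C)
    (ρ : Matrix.SpecialLinearGroup (Fin 2) R →* (X ≃ᵢ X)) (x : X) :
    Bornology.IsBounded (Set.range fun g => ρ g x) := by
  have : Nonempty X := ⟨x⟩
  obtain ⟨r, lam, H⟩ := exists_isTreeModel_ripsGraph hT hK hlower hupper hdense
  let φ := (ripsGraphHom X r).comp ρ
  obtain ⟨B, hB⟩ := (H.isGromovHyperbolic_orbitLength φ x).bddAbove_range_length
    (H.hasMidpointSplitting_orbitLength φ x) hu
  refine (Metric.isBounded_iff_subset_closedBall x).2 ⟨|r| * B, ?_⟩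
  rintro _ ⟨g, rfl⟩
  rw [Metric.mem_closedBall, dist_comm]
  calc dist x (ρ g x) ≤ r * (ripsGraph X r).dist x (ρ g x) :=
        dist_le_mul_ripsGraph_dist H.connected _ _
    _ ≤ |r| * (ripsGraph X r).dist x (ρ g x) := by gcongr; exact le_abs_self r
    _ ≤ |r| * B := by gcongr; exact hB ⟨g, rfl⟩

/-- If the ring of integers `𝓞 K` of a number field `K` has infinitely many
units, then every isometric action of `SL(2, 𝓞 K)` on a metric space `X` admitting a
quasi-isometry to a simplicial tree `T` has bounded orbits. -/
theorem sl2_action_on_quasitree_bounded_orbit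
    (K : Type*) [Field K] [NumberField K]
    (hunits : Infinite (𝓞 K)ˣ)
    (X : Type*) [MetricSpace X]
    -- a simplicial tree `T` on vertex set `V`, with its graph metric
    (V : Type*) (T : SimpleGraph V) (hT : T.IsTree)
    -- a quasi-isometry from `X` to the tree
    (q : X → V) (Kq Cq : ℝ) (hKq : 1 ≤ Kq) (hCq : 0 ≤ Cq)
    (hqi_lower : ∀ x₁ x₂ : X, dist x₁ x₂ / Kq - Cq ≤ (T.dist (q x₁) (q x₂) : ℝ))
    (hqi_upper : ∀ x₁ x₂ : X, (T.dist (q x₁) (q x₂) : ℝ) ≤ Kq * dist x₁ x₂ + Cq)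
    (hdense : ∀ v : V, ∃ x : X, (T.dist v (q x) : ℝ) ≤ Cq)
    -- an action of `SL(2, 𝓞 K)` on `X` by isometries
    (ρ : Matrix.SpecialLinearGroup (Fin 2) (𝓞 K) →* (X ≃ᵢ X))
    (x : X) :
    Bornology.IsBounded (Set.range fun g : Matrix.SpecialLinearGroup (Fin 2) (𝓞 K) => ρ g x) := by
  obtain ⟨u, hu⟩ := exists_not_isOfFinOrder_of_infinite_units K
  exact sl2_action_on_quasitree_bounded_orbit_general hu hT (one_pos.trans_le hKq) hqi_lower
    hqi_upper hdense ρ x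
end

section
/- Let 𝒪 = 𝓞_K be the ring of integers of a number field K and let n ≥ 3. For every action of SL(n, 𝓞_K) by isometries on a geodesic metric space X that is δ-hyperbolic (four-point condition) for some δ ≥ 0, no element of SL(n,𝓞_K) acts hyperbolically: for every g ∈ SL(n,𝓞_K) and every x ∈ X, the map ℤ → X, k ↦ gᵏ·x, is not a quasi-isometric embedding. -/
open NumberField

/-!
Let `R` be a commutative ring all of whose proper quotients are finite, and let `n ≥ 3`. Every
matrix in `SL(n, R)` becomes a `2 × 2` block after boundedly many elementary operations, so if
`SL(n, R)` has an unbounded orbit, then either some one-parameter group of transvections or the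
`2 × 2` blocks move the base point arbitrarily far. Each transvection in suitable positions moves
the points of such a sequence by a bounded amount, hence fixes the limit point at infinity, and
these transvections generate the elementary group `E(n, R)`.

The Busemann function of the fixed point restricts to a quasimorphism on `E(n, R)`. It is bounded on
bounded elementary products, as transvections are commutators. It is also bounded on `2 × 2` blocks:
by Mennicke's identity, a block with first row `(a, b ^ k)` is, up to boundedly many elementary
factors at each step, the `k`-th power of one with first row `(a, b)`, and for some `k > 0` the
power `b ^ k` is a unit modulo `a` that lifts to a unit of `R`. So the Busemann function is bounded
on all of `E(n, R)`, which forces `d(x, h²x) ≤ d(x, hx) + C` for `h ∈ E(n, R)`. Since a power of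
every `g ∈ SL(n, R)` lies in `E(n, R)`, its translation length is zero.
-/

namespace SLRigidity

open Filter Topology
open scoped Pointwise
open Matrix hiding transvection SpecialLinearGroup
open Matrix.SpecialLinearGroup (transvection transvection_coe transvection_inv)

local notation "SL" => Matrix.SpecialLinearGroup

section HyperbolicSpaces

variable {X : Type*} [PseudoMetricSpace X] {x : X} {y z w : ℕ → X} {δ : ℝ}

/-- Gromov's four-point definition of a `δ`-hyperbolic space. -/
def IsFourPointHyperbolic (X : Type*) [PseudoMetricSpace X] (δ : ℝ) : Prop :=
  ∀ p₁ p₂ p₃ p₄ : X, dist p₁ p₄ + dist p₂ p₃ ≤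
    max (dist p₁ p₂ + dist p₃ p₄) (dist p₁ p₃ + dist p₂ p₄) + 2 * δ

/-- The Gromov product of `y` and `z` based at `x`. -/
noncomputable def gromovProduct (x y z : X) : ℝ := (dist x y + dist x z - dist y z) / 2

theorem gromovProduct_comm (x y z : X) : gromovProduct x y z = gromovProduct x z y := by
  simp only [gromovProduct, dist_comm y z, add_comm (dist x y)]

theorem gromovProduct_le_dist_left (x y z : X) : gromovProduct x y z ≤ dist x y := by
  have := dist_triangle x y z
  unfold gromovProduct
  linarith

theorem dist_left_sub_dist_le_gromovProduct (x y z : X) :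
    dist x y - dist y z ≤ gromovProduct x y z := by
  have := dist_triangle_right x y z
  unfold gromovProduct
  linarith

theorem IsFourPointHyperbolic.min_gromovProduct_le (hX : IsFourPointHyperbolic X δ)
    (x p q r : X) :
    min (gromovProduct x p q) (gromovProduct x q r) ≤ gromovProduct x p r + δ := by
  have h := hX p q x r
  rw [dist_comm p x, dist_comm q x] at h
  unfold gromovProduct
  rcases le_max_iff.1 (sub_le_iff_le_add.2 h) with h | h
  · exact min_le_iff.2 (Or.inl (by linarith))
  · exact min_le_iff.2 (Or.inr (by linarith))

/-- The sequences `y` and `z` tend to the same point of the Gromov boundary of a hyperbolic space: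
their Gromov products based at `x` tend to infinity term by term. For `y = z` it says that `y`
leaves every ball, so that several limit points are not excluded. -/
def ConvergeTogether (x : X) (y z : ℕ → X) : Prop :=
  Tendsto (fun m => gromovProduct x (y m) (z m)) atTop atTop

namespace ConvergeTogether

theorem symm (h : ConvergeTogether x y z) : ConvergeTogether x z y := by
  simpa only [ConvergeTogether, gromovProduct_comm x (z _)] using h

theorem trans (hX : IsFourPointHyperbolic X δ) (hyz : ConvergeTogether x y z)
    (hzw : ConvergeTogether x z w) : ConvergeTogether x y w := by
  refine tendsto_atTop.2 fun b => ?_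
  filter_upwards [tendsto_atTop.1 hyz (b + δ), tendsto_atTop.1 hzw (b + δ)] with m hm hm'
  linarith [(le_min hm hm').trans (hX.min_gromovProduct_le x (y m) (z m) (w m))]

theorem tendsto_dist (h : ConvergeTogether x y z) :
    Tendsto (fun m => dist x (y m)) atTop atTop :=
  tendsto_atTop_mono (fun m => gromovProduct_le_dist_left x (y m) (z m)) h

theorem of_dist_le (hy : Tendsto (fun m => dist x (y m)) atTop atTop) {C : ℝ}
    (h : ∀ m, dist (y m) (z m) ≤ C) : ConvergeTogether x y z := by
  refine tendsto_atTop_mono (fun m => ?_) (tendsto_atTop_add_const_right _ (-C) hy)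
  linarith [dist_left_sub_dist_le_gromovProduct x (y m) (z m), h m]

theorem refl (hy : Tendsto (fun m => dist x (y m)) atTop atTop) : ConvergeTogether x y y :=
  of_dist_le hy (C := 0) (by simp)

end ConvergeTogether

end HyperbolicSpaces

section Actions

variable {G X : Type*} [Group G] [PseudoMetricSpace X] [MulAction G X] [IsIsometricSMul G X]
  {x : X} {y z : ℕ → X} {δ : ℝ}

theorem gromovProduct_sub_dist_smul_le (g : G) (x p q : X) :
    gromovProduct x p q - dist x (g • x) ≤ gromovProduct x (g • p) (g • q) := by
  have hp := dist_triangle_left (g • x) (g • p) x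
  have hq := dist_triangle_left (g • x) (g • q) x
  rw [dist_smul] at hp hq
  unfold gromovProduct
  rw [dist_smul]
  linarith

theorem ConvergeTogether.smul (h : ConvergeTogether x y z) (g : G) :
    ConvergeTogether x (g • y) (g • z) :=
  tendsto_atTop_mono (fun m => gromovProduct_sub_dist_smul_le g x (y m) (z m))
    (tendsto_atTop_add_const_right _ (-dist x (g • x)) h)

/-- The stabilizer of the point at infinity to which the sequence `y` tends. -/
def limitStabilizer (G : Type*) [Group G] [MulAction G X] [IsIsometricSMul G X]
    (hX : IsFourPointHyperbolic X δ) (hy : ConvergeTogether x y y) : Subgroup G where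
  carrier := {g | ConvergeTogether x (g • y) y}
  one_mem' := by simpa only [Set.mem_ofPred_eq, one_smul] using hy
  mul_mem' {g h} hg hh := by
    simpa only [Set.mem_ofPred_eq, mul_smul] using (ConvergeTogether.smul hh g).trans hX hg
  inv_mem' {g} hg := by
    simpa only [Set.mem_ofPred_eq, inv_smul_smul] using (ConvergeTogether.smul hg g⁻¹).symm

/-- The subgroup `H` fixes a point at infinity, represented by a sequence `y`. -/
def FixesPointAtInfinity (H : Subgroup G) (x : X) : Prop :=
  ∃ y : ℕ → X, ∀ h ∈ H, ConvergeTogether x (h • y) y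

theorem mem_limitStabilizer_of_dist_smul_le (hX : IsFourPointHyperbolic X δ)
    (hy : ConvergeTogether x y y) (hyz : ConvergeTogether x y z) {g : G} {C : ℝ}
    (h : ∀ m, dist (z m) (g • z m) ≤ C) : g ∈ limitStabilizer G hX hy :=
  have hz : ConvergeTogether x (g • z) z :=
    (ConvergeTogether.of_dist_le hyz.symm.tendsto_dist h).symm
  ((hyz.smul g).trans hX hz).trans hX hyz.symm

/-- The length function on `G` pulled back from the orbit of `x`. -/
noncomputable def displacement (x : X) (g : G) : ℝ := dist x (g • x)

theorem displacement_mul_le (x : X) (g h : G) :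
    displacement x (g * h) ≤ displacement x g + displacement x h := by
  have := dist_triangle x (g • x) (g • h • x)
  rwa [dist_smul, ← mul_smul] at this

theorem dist_smul_smul_eq_displacement (x : X) (g h : G) :
    dist (g • x) (h • x) = displacement x (g⁻¹ * h) := by
  rw [displacement, mul_smul, ← dist_smul g x, smul_inv_smul]

theorem displacement_inv (x : X) (g : G) : displacement x g⁻¹ = displacement x g := by
  rw [displacement, displacement, ← dist_smul g, smul_inv_smul, dist_comm]

theorem displacement_mul_mul_inv_le (x : X) (u g : G) :
    displacement x (u * g * u⁻¹) ≤ displacement x g + 2 * displacement x u := by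
  linarith [displacement_mul_le x (u * g) u⁻¹, displacement_mul_le x u g, displacement_inv x u]

theorem convergeTogether_of_inv_mul_eq_conj {p q : ℕ → G} {u : G}
    (hp : Tendsto (fun m => displacement x (p m)) atTop atTop)
    (hpq : ∀ m, (p m)⁻¹ * q m = u * q m * u⁻¹) :
    ConvergeTogether x (fun m => p m • x) (fun m => q m • x) := by
  refine tendsto_atTop_mono (fun m => ?_)
    ((tendsto_atTop_add_const_right _ (-(2 * displacement x u)) hp).atTop_div_const two_pos)
  have := displacement_mul_mul_inv_le x u (q m)
  rw [gromovProduct, dist_smul_smul_eq_displacement, hpq]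
  change _ ≤ (displacement x (p m) + displacement x (q m) - _) / 2
  linarith

end Actions

section Busemann

variable {X : Type*} [PseudoMetricSpace X] {x : X} {y : ℕ → X} {δ : ℝ}

/-- The Busemann function of the sequence `y`, normalised to vanish at `x`; the limit defining it
is taken along an ultrafilter, so that it exists for every sequence. -/
noncomputable def busemann (x : X) (y : ℕ → X) (p : X) : ℝ :=
  limUnder (hyperfilter ℕ : Filter ℕ) fun m => dist p (y m) - dist x (y m)

theorem tendsto_busemann (x : X) (y : ℕ → X) (p : X) :
    Tendsto (fun m => dist p (y m) - dist x (y m)) (hyperfilter ℕ) (𝓝 (busemann x y p)) := by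
  have hbdd : ∀ m, dist p (y m) - dist x (y m) ∈ Set.Icc (-dist p x) (dist p x) := fun m =>
    abs_le.1 (abs_dist_sub_le p x (y m))
  obtain ⟨b, -, hb⟩ := isCompact_Icc.ultrafilter_le_nhds
    ((hyperfilter ℕ).map fun m => dist p (y m) - dist x (y m))
    (le_principal_iff.2 (mem_map.2 (Eventually.of_forall hbdd)))
  exact tendsto_nhds_limUnder ⟨b, hb⟩

theorem IsFourPointHyperbolic.dist_add_busemann_le (hX : IsFourPointHyperbolic X δ) (x : X)
    (y : ℕ → X) (p q : X) :
    dist x q + busemann x y p ≤ max (dist x p + busemann x y q) (dist p q) + 2 * δ := by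
  refine le_of_tendsto_of_tendsto' ((tendsto_busemann x y p).const_add _)
    ((((tendsto_busemann x y q).const_add _).max tendsto_const_nhds).add_const _) fun m => ?_
  have h := hX x p (y m) q
  rw [dist_comm (y m) q] at h
  rcases le_max_iff.1 (sub_le_iff_le_add.2 h) with h | h
  · linarith [le_max_left (dist x p + (dist q (y m) - dist x (y m))) (dist p q)]
  · linarith [le_max_right (dist x p + (dist q (y m) - dist x (y m))) (dist p q)]

theorem IsFourPointHyperbolic.abs_cross_difference_le (hX : IsFourPointHyperbolic X δ)
    {x p q r : X} (h : dist x p + δ < gromovProduct x q r) :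
    |dist p q + dist x r - dist p r - dist x q| ≤ 2 * δ := by
  have hqr := hX p q x r
  have hrq := hX p r x q
  have := dist_triangle x p q
  have := dist_triangle x p r
  unfold gromovProduct at h
  rw [dist_comm q x, dist_comm p x] at hqr
  rw [dist_comm r x, dist_comm p x, dist_comm r q] at hrq
  rw [abs_le]
  constructor
  · rcases le_max_iff.1 (sub_le_iff_le_add.2 hqr) with h | h <;> linarith
  · rcases le_max_iff.1 (sub_le_iff_le_add.2 hrq) with h | h <;> linarith

theorem IsFourPointHyperbolic.abs_busemann_smul_sub_le {G : Type*} [Group G] [MulAction G X]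
    [IsIsometricSMul G X] (hX : IsFourPointHyperbolic X δ) {g : G}
    (hg : ConvergeTogether x (g⁻¹ • y) y) (p : X) :
    |busemann x y (g • p) - busemann x y (g • x) - busemann x y p| ≤ 2 * δ := by
  refine le_of_tendsto (((tendsto_busemann x y (g • p)).sub (tendsto_busemann x y (g • x))).sub
    (tendsto_busemann x y p)).abs (Nat.hyperfilter_le_atTop ?_)
  filter_upwards [hg.eventually_gt_atTop (dist x p + δ)] with m hm
  have hdist (q : X) : dist (g • q) (y m) = dist q (g⁻¹ • y m) := by
    rw [← dist_smul g q, smul_inv_smul]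
  refine le_of_eq_of_le (congrArg abs ?_) (hX.abs_cross_difference_le hm)
  rw [hdist, hdist, Pi.smul_apply]
  ring

end Busemann

section TranslationLength

variable {G X : Type*} [Group G] [PseudoMetricSpace X] [MulAction G X]

theorem nonpos_of_forall_mul_sub_le_displacement_pow {x : X} {g : G} {a b : ℝ}
    (hlim : Tendsto (fun k : ℕ => displacement x (g ^ k) / k) atTop (𝓝 0))
    (h : ∀ k : ℕ, a * k - b ≤ displacement x (g ^ k)) : a ≤ 0 := by
  have hlower := (tendsto_const_div_atTop_nhds_zero_nat b).const_sub a
  rw [sub_zero] at hlower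
  refine le_of_tendsto_of_tendsto hlower hlim ?_
  filter_upwards [eventually_gt_atTop 0] with k hk
  have hk' : (0 : ℝ) < k := Nat.cast_pos.2 hk
  rw [le_div_iff₀ hk', sub_mul, div_mul_cancel₀ b hk'.ne']
  exact h k

variable [IsIsometricSMul G X]

theorem subadditive_displacement_pow (x : X) (g : G) :
    Subadditive fun k : ℕ => displacement x (g ^ k) := fun k l => by
  simpa only [pow_add] using displacement_mul_le x (g ^ k) (g ^ l)

theorem tendsto_displacement_pow_div_zero {x : X} {g : G} {N : ℕ} (hN : N ≠ 0) {C : ℝ}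
    (hC : ∀ j : ℕ, displacement x (g ^ (N * j) * g ^ (N * j)) ≤
      displacement x (g ^ (N * j)) + C) :
    Tendsto (fun k : ℕ => displacement x (g ^ k) / k) atTop (𝓝 0) := by
  have hsub := subadditive_displacement_pow x g
  have hnonneg (k : ℕ) : 0 ≤ displacement x (g ^ k) / k := div_nonneg dist_nonneg k.cast_nonneg
  have hlim := hsub.tendsto_lim ⟨0, Set.forall_mem_range.2 hnonneg⟩
  have hmul {c : ℕ} (hc : c ≠ 0) : Tendsto (fun j : ℕ => c * j) atTop atTop :=
    tendsto_id.const_mul_atTop' hc.bot_lt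
  have hdouble := hlim.comp (hmul (mul_ne_zero two_ne_zero hN))
  have hsingle := ((hlim.comp (hmul hN)).add
    ((tendsto_const_div_atTop_nhds_zero_nat C).comp (hmul hN))).div_const 2
  suffices hsub.lim ≤ (hsub.lim + 0) / 2 by
    have h0 : hsub.lim = 0 := le_antisymm (by linarith) (ge_of_tendsto' hlim hnonneg)
    exact h0 ▸ hlim
  refine le_of_tendsto_of_tendsto' hdouble hsingle fun j => ?_
  have h := hC j
  rw [← pow_add, ← mul_two] at h
  simp only [Function.comp_apply]
  rw [← add_div, div_div, mul_assoc 2 N j, mul_comm 2 (N * j), Nat.cast_mul (N * j), Nat.cast_two]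
  gcongr

end TranslationLength

section Quasimorphism

variable {G : Type*} [Group G]

/-- `φ` is a quasimorphism of defect at most `c` on the subgroup `H`. -/
def IsQuasimorphismOn (φ : G → ℝ) (H : Subgroup G) (c : ℝ) : Prop :=
  ∀ g ∈ H, ∀ h ∈ H, |φ (g * h) - φ g - φ h| ≤ c

/-- The powers of `g`, modified by inserting elements of `U` at each step, return to `U`. For a set
`U` of boundedly many elementary matrices, this is how bounded elementary generation is used. -/
def PowersReturn (U : Set G) (g : G) : Prop :=
  ∃ (s : ℕ → G) (k : ℕ), 0 < k ∧ s 0 ∈ U ∧ s k ∈ U ∧ ∀ j, s (j + 1) ∈ U * {s j} * U * {g} * U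

variable {φ : G → ℝ} {H : Subgroup G} {U : Set G} {c B : ℝ} {a b g z : G}

theorem IsQuasimorphismOn.abs_mul_le (hφ : IsQuasimorphismOn φ H c) (ha : a ∈ H) (hb : b ∈ H) :
    |φ (a * b)| ≤ |φ a| + |φ b| + c := by
  have h := abs_add_three (φ (a * b) - φ a - φ b) (φ a) (φ b)
  rw [sub_sub, add_assoc, sub_add_cancel, ← sub_sub] at h
  linarith [hφ a ha b hb]

theorem IsQuasimorphismOn.abs_le_of_mul_eq (hφ : IsQuasimorphismOn φ H c) (ha : a ∈ H)
    (hb : b ∈ H) (hz : z ∈ H) (h : a * b = z * b * a) : |φ z| ≤ 3 * c := by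
  have hab := abs_le.1 (hφ a ha b hb)
  have hzb := abs_le.1 (hφ z hz b hb)
  have hzba := abs_le.1 (hφ (z * b) (mul_mem hz hb) a ha)
  rw [h] at hab
  rw [abs_le]
  constructor <;> linarith

theorem IsQuasimorphismOn.abs_sandwich_sub_le (hφ : IsQuasimorphismOn φ H c) (hU : U ⊆ H)
    (hB : ∀ u ∈ U, |φ u| ≤ B) (hg : g ∈ H) (ha : a ∈ H) (hz : z ∈ U * {a} * U * {g} * U) :
    |φ z - φ a - φ g| ≤ 3 * B + 4 * c := by
  obtain ⟨_, ⟨_, ⟨_, ⟨u, hu, _, rfl, rfl⟩, v, hv, rfl⟩, _, rfl, rfl⟩, w, hw, rfl⟩ := hz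
  have hua := mul_mem (hU hu) ha
  have huav := mul_mem hua (hU hv)
  have h₁ := abs_le.1 (hφ _ (hU hu) _ ha)
  have h₂ := abs_le.1 (hφ _ hua _ (hU hv))
  have h₃ := abs_le.1 (hφ _ huav _ hg)
  have h₄ := abs_le.1 (hφ _ (mul_mem huav hg) _ (hU hw))
  have hBu := abs_le.1 (hB u hu)
  have hBv := abs_le.1 (hB v hv)
  have hBw := abs_le.1 (hB w hw)
  rw [abs_le]
  constructor <;> linarith

theorem IsQuasimorphismOn.abs_le_of_powersReturn (hφ : IsQuasimorphismOn φ H c) (hU : U ⊆ H)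
    (hB : ∀ u ∈ U, |φ u| ≤ B) (hg : g ∈ H) (hr : PowersReturn U g) : |φ g| ≤ 5 * B + 4 * c := by
  obtain ⟨s, k, hk, h0, hsk, hs⟩ := hr
  have hsum (j : ℕ) : s j ∈ H ∧ |φ (s j) - φ (s 0) - j * φ g| ≤ j * (3 * B + 4 * c) := by
    induction j with
    | zero => simpa using hU h0
    | succ j ih =>
      refine ⟨?_, ?_⟩
      · obtain ⟨_, ⟨_, ⟨_, ⟨u, hu, _, rfl, rfl⟩, v, hv, rfl⟩, _, rfl, rfl⟩, w, hw, heq⟩ := hs j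
        rw [← heq]
        exact mul_mem (mul_mem (mul_mem (mul_mem (hU hu) ih.1) (hU hv)) hg) (hU hw)
      · have hstep := abs_le.1 (hφ.abs_sandwich_sub_le hU hB hg ih.1 (hs j))
        have hj := abs_le.1 ih.2
        rw [abs_le]
        push_cast
        constructor <;> linarith
  have hk' : (1 : ℝ) ≤ k := mod_cast hk
  have h0' := abs_le.1 (hB _ h0)
  have hsk' := abs_le.1 (hB _ hsk)
  have hBk : B ≤ k * B := le_mul_of_one_le_left (by linarith) hk'
  have hsumk := abs_le.1 (hsum k).2
  have hkφ : |k * φ g| ≤ k * (5 * B + 4 * c) := by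
    rw [abs_le]
    constructor <;> linarith
  rw [abs_mul, Nat.abs_cast] at hkφ
  exact le_of_mul_le_mul_left hkφ (by linarith)

theorem PowersReturn.exists_pow_mem [H.Normal] (hU : U ⊆ H) (hr : PowersReturn U g) :
    ∃ k, 0 < k ∧ g ^ k ∈ H := by
  obtain ⟨s, k, hk, h0, hsk, hs⟩ := hr
  have hone {u : G} (hu : u ∈ U) : (u : G ⧸ H) = 1 := (QuotientGroup.eq_one_iff u).2 (hU hu)
  have hpow (j : ℕ) : (s j : G ⧸ H) = (g : G ⧸ H) ^ j := by
    induction j with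
    | zero => rw [hone h0, pow_zero]
    | succ j ih =>
      obtain ⟨_, ⟨_, ⟨_, ⟨u, hu, _, rfl, rfl⟩, v, hv, rfl⟩, _, rfl, rfl⟩, w, hw, heq⟩ := hs j
      simp only [← heq, QuotientGroup.mk_mul, hone hu, hone hv, hone hw, ih, one_mul, mul_one,
        pow_succ]
  refine ⟨k, hk, (QuotientGroup.eq_one_iff _).1 ?_⟩
  rw [QuotientGroup.mk_pow, ← hpow, hone hsk]

theorem PowersReturn.map {G' : Type*} [Group G'] {V : Set G'} (f : G →* G') (hr : PowersReturn U g)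
    (hUV : Set.MapsTo f U V) : PowersReturn V (f g) := by
  obtain ⟨s, k, hk, h₀, hsk, hs⟩ := hr
  refine ⟨f ∘ s, k, hk, hUV h₀, hUV hsk, fun j => ?_⟩
  have h := Set.mem_image_of_mem f (hs j)
  simp only [Set.image_mul, Set.image_singleton] at h
  have hUV' := Set.image_subset_iff.2 hUV
  exact Set.mul_subset_mul (Set.mul_subset_mul_right (Set.mul_subset_mul (Set.mul_subset_mul_right
    hUV') hUV')) hUV' h

end Quasimorphism

section Elementary

variable {α R : Type*} [Fintype α] [DecidableEq α] [CommRing R]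

/-- The set of all products of at most `m` elementary matrices. -/
def elementaryProducts (α R : Type*) [Fintype α] [DecidableEq α] [CommRing R] (m : ℕ) :
    Set (SL α R) :=
  insert 1 {g | ∃ (i j : α) (h : i ≠ j) (t : R), transvection h t = g} ^ m

theorem transvection_mem_elementaryProducts {i j : α} (h : i ≠ j) (t : R) :
    transvection h t ∈ elementaryProducts α R 1 := by
  rw [elementaryProducts, pow_one]
  exact Or.inr ⟨i, j, h, t, rfl⟩

theorem elementaryProducts_zero : elementaryProducts α R 0 = {1} := pow_zero _

theorem mul_mem_elementaryProducts {m n : ℕ} {g h : SL α R}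
    (hg : g ∈ elementaryProducts α R m) (hh : h ∈ elementaryProducts α R n) :
    g * h ∈ elementaryProducts α R (m + n) := by
  rw [elementaryProducts, pow_add]
  exact Set.mul_mem_mul hg hh

theorem elementaryProducts_mono : Monotone (elementaryProducts α R) := fun _ _ h =>
  Set.pow_subset_pow_right (Set.mem_insert _ _) h

theorem inv_mem_elementaryProducts {m : ℕ} {g : SL α R}
    (hg : g ∈ elementaryProducts α R m) : g⁻¹ ∈ elementaryProducts α R m := by
  rw [elementaryProducts, ← Set.mem_inv, ← inv_pow]
  refine Set.pow_subset_pow_left ?_ hg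
  rintro _ (rfl | ⟨i, j, h, t, rfl⟩)
  · exact Or.inl inv_one
  · exact Or.inr ⟨i, j, h, -t, (transvection_inv h t).symm⟩

/-- The elementary subgroup `E(α, R)` of `SL(α, R)`. -/
def elementarySubgroup (α R : Type*) [Fintype α] [DecidableEq α] [CommRing R] :
    Subgroup (SL α R) :=
  Subgroup.closure {g | ∃ (i j : α) (h : i ≠ j) (t : R), transvection h t = g}

theorem transvection_mem_elementarySubgroup {i j : α} (h : i ≠ j) (t : R) :
    transvection h t ∈ elementarySubgroup α R :=
  Subgroup.subset_closure ⟨i, j, h, t, rfl⟩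

theorem elementarySubgroup_le {H : Subgroup (SL α R)}
    (hH : ∀ (i j : α) (h : i ≠ j) (t : R), transvection h t ∈ H) : elementarySubgroup α R ≤ H := by
  rw [elementarySubgroup, Subgroup.closure_le]
  rintro _ ⟨i, j, h, t, rfl⟩
  exact hH i j h t

theorem elementaryProducts_subset (m : ℕ) :
    elementaryProducts α R m ⊆ elementarySubgroup α R :=
  Subgroup.pow_subset (Set.insert_subset (one_mem _) Subgroup.subset_closure)

theorem exists_mem_elementaryProducts_coe_eq_one_add_sum {ι : Type*} {r c : ι → α} (t : ι → R)
    (s : Finset ι) (hs : ∀ a ∈ s, ∀ b ∈ s, r a ≠ c b) :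
    ∃ g ∈ elementaryProducts α R s.card,
      (g : Matrix α α R) = 1 + ∑ a ∈ s, single (r a) (c a) (t a) := by
  classical
  induction s using Finset.induction_on with
  | empty => exact ⟨1, by simp [elementaryProducts_zero], by simp⟩
  | insert a s ha ih =>
    obtain ⟨g, hg, hgs⟩ := ih fun b hb d hd =>
      hs b (Finset.mem_insert_of_mem hb) d (Finset.mem_insert_of_mem hd)
    have hra := hs a (Finset.mem_insert_self a s) a (Finset.mem_insert_self a s)
    have hzero : single (r a) (c a) (t a) * ∑ b ∈ s, single (r b) (c b) (t b) = 0 := by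
      rw [Finset.mul_sum]
      exact Finset.sum_eq_zero fun b hb => single_mul_single_of_ne _ _ _ _
        (hs b (Finset.mem_insert_of_mem hb) a (Finset.mem_insert_self a s)).symm _
    refine ⟨transvection hra (t a) * g, ?_, ?_⟩
    · rw [Finset.card_insert_of_notMem ha, add_comm]
      exact mul_mem_elementaryProducts (transvection_mem_elementaryProducts hra _) hg
    · rw [Matrix.SpecialLinearGroup.coe_mul, transvection_coe, hgs, Finset.sum_insert ha, add_mul,
        one_mul, mul_add, mul_one, hzero]
      abel

theorem exists_mem_elementaryProducts_coe_eq_column {u : α → R} {l : α} (hu : u l = 0) :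
    ∃ g ∈ elementaryProducts α R (Fintype.card α),
      (g : Matrix α α R) = 1 + vecMulVec u (Pi.single l 1) := by
  obtain ⟨g, hg, hcoe⟩ := exists_mem_elementaryProducts_coe_eq_one_add_sum (r := id)
    (c := fun _ => l) u (Finset.univ.erase l) fun a ha _ _ => Finset.ne_of_mem_erase ha
  refine ⟨g, elementaryProducts_mono (Finset.card_le_univ _) hg, ?_⟩
  rw [hcoe, Finset.sum_erase _ (by simp [hu])]
  ext i j
  simp [vecMulVec_apply, Matrix.sum_apply, single_apply, Pi.single_apply, ite_and, eq_comm]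

theorem exists_mem_elementaryProducts_coe_eq_row {v : α → R} {k : α} (hv : v k = 0) :
    ∃ g ∈ elementaryProducts α R (Fintype.card α),
      (g : Matrix α α R) = 1 + vecMulVec (Pi.single k 1) v := by
  obtain ⟨g, hg, hcoe⟩ := exists_mem_elementaryProducts_coe_eq_one_add_sum (r := fun _ => k)
    (c := id) v (Finset.univ.erase k) fun _ _ b hb => (Finset.ne_of_mem_erase hb).symm
  refine ⟨g, elementaryProducts_mono (Finset.card_le_univ _) hg, ?_⟩
  rw [hcoe, Finset.sum_erase _ (by simp [hv])]
  ext i j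
  simp [vecMulVec_apply, Matrix.sum_apply, single_apply, Pi.single_apply, ite_and, eq_comm]

theorem transvection_mul_transvection {i j k : α} (hij : i ≠ j) (hjk : j ≠ k) (hik : i ≠ k)
    (s t : R) :
    transvection hij s * transvection hjk t =
      transvection hik (s * t) * transvection hjk t * transvection hij s := Subtype.ext <| by
  simp only [Matrix.SpecialLinearGroup.coe_mul, transvection_coe, mul_add, add_mul, mul_one,
    one_mul, single_mul_single_same,
    single_mul_single_of_ne _ _ _ _ hik.symm, single_mul_single_of_ne _ _ _ _ hjk.symm,
    add_zero]
  abel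

end Elementary

section BlockEmbedding

/-- The matrix of the inclusion of coordinate spaces `R^α → R^β` given by `f : α ↪ β`. -/
def inclusionMatrix {α β : Type*} [DecidableEq β] (R : Type*) [CommRing R] (f : α ↪ β) :
    Matrix β α R :=
  (1 : Matrix β β R).submatrix id f

theorem inclusionMatrix_transpose_mul_self {α β R : Type*} [DecidableEq α] [Fintype β]
    [DecidableEq β] [CommRing R] (f : α ↪ β) :
    (inclusionMatrix R f)ᵀ * inclusionMatrix R f = 1 := by
  ext i j
  simp [inclusionMatrix, mul_apply, one_apply, f.injective.eq_iff, eq_comm]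

theorem inclusionMatrix_trans {α β γ R : Type*} [Fintype β] [DecidableEq β] [DecidableEq γ]
    [CommRing R] (f : α ↪ β) (g : β ↪ γ) :
    inclusionMatrix R (f.trans g) = inclusionMatrix R g * inclusionMatrix R f := by
  ext i j
  simp [inclusionMatrix, mul_apply, one_apply]

section

variable {α β R : Type*} [Fintype α] [DecidableEq α] [DecidableEq β] [CommRing R]

/-- The matrix whose block of rows and columns in the range of `f` is `A`, completed by the identity
matrix. -/
def blockMatrix (f : α ↪ β) (A : Matrix α α R) : Matrix β β R :=
  1 + inclusionMatrix R f * (A - 1) * (inclusionMatrix R f)ᵀ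

theorem blockMatrix_apply (f : α ↪ β) (A : Matrix α α R) (i j : α) :
    blockMatrix f A (f i) (f j) = A i j := by
  simp [blockMatrix, inclusionMatrix, mul_apply, one_apply, f.injective.eq_iff]

theorem blockMatrix_apply_of_notMem_range (f : α ↪ β) (A : Matrix α α R) {i j : β}
    (h : i ∉ Set.range f ∨ j ∉ Set.range f) : blockMatrix f A i j = (1 : Matrix β β R) i j := by
  rw [blockMatrix, Matrix.add_apply, add_eq_left, mul_apply]
  refine Finset.sum_eq_zero fun a _ => ?_
  rcases h with h | h
  · have hi (b : α) : i ≠ f b := fun hb => h ⟨b, hb.symm⟩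
    simp [inclusionMatrix, mul_apply, one_apply, hi]
  · have hj : j ≠ f a := fun hb => h ⟨a, hb.symm⟩
    simp [inclusionMatrix, one_apply, hj]

theorem blockMatrix_submatrix {f : α ↪ β} {M : Matrix β β R}
    (hM : ∀ i j, i ∉ Set.range f ∨ j ∉ Set.range f → M i j = (1 : Matrix β β R) i j) :
    blockMatrix f (M.submatrix f f) = M := by
  ext i j
  by_cases h : i ∉ Set.range f ∨ j ∉ Set.range f
  · rw [blockMatrix_apply_of_notMem_range f _ h, hM i j h]
  · push Not at h
    obtain ⟨⟨a, rfl⟩, b, rfl⟩ := h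
    exact blockMatrix_apply f _ a b

end

variable {α β γ R : Type*} [Fintype α] [DecidableEq α] [Fintype β] [DecidableEq β] [Fintype γ]
  [DecidableEq γ] [CommRing R]

theorem blockMatrix_mul (f : α ↪ β) (A B : Matrix α α R) :
    blockMatrix f (A * B) = blockMatrix f A * blockMatrix f B := by
  have hJ (C : Matrix α β R) : (inclusionMatrix R f)ᵀ * (inclusionMatrix R f * C) = C := by
    rw [← Matrix.mul_assoc, inclusionMatrix_transpose_mul_self, Matrix.one_mul]
  simp only [blockMatrix, mul_add, add_mul, Matrix.mul_sub, Matrix.sub_mul, Matrix.mul_assoc, hJ,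
    mul_one, one_mul, Matrix.one_mul]
  abel

theorem det_blockMatrix (f : α ↪ β) (A : Matrix α α R) : (blockMatrix f A).det = A.det := by
  rw [blockMatrix, Matrix.mul_assoc, det_one_add_mul_comm, Matrix.mul_assoc,
    inclusionMatrix_transpose_mul_self, Matrix.mul_one, add_sub_cancel]

/-- The homomorphism `SL(α, R) → SL(β, R)` sending `A` to its block matrix. -/
def blockEmbedding (f : α ↪ β) : SL α R →* SL β R where
  toFun A := ⟨blockMatrix f (A : Matrix α α R), (det_blockMatrix f _).trans A.2⟩
  map_one' := Subtype.ext <| by simp [blockMatrix]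
  map_mul' A B := by
    ext i j
    simp only [Matrix.SpecialLinearGroup.coe_mul, blockMatrix_mul]
    rfl

theorem blockEmbedding_coe (f : α ↪ β) (A : SL α R) :
    (blockEmbedding f A : Matrix β β R) = blockMatrix f A := rfl

theorem blockEmbedding_blockEmbedding (f : α ↪ β) (g : β ↪ γ) (A : SL α R) :
    blockEmbedding g (blockEmbedding f A) = blockEmbedding (f.trans g) A := Subtype.ext <| by
  simp [blockEmbedding_coe, blockMatrix, inclusionMatrix_trans, Matrix.mul_assoc]

theorem blockEmbedding_transvection (f : α ↪ β) {i j : α} (h : i ≠ j) (t : R) :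
    blockEmbedding f (transvection h t) = transvection (f.injective.ne h) t := Subtype.ext <| by
  rw [blockEmbedding_coe, blockMatrix, transvection_coe, transvection_coe, add_sub_cancel_left]
  ext a b
  rw [Matrix.add_apply, Matrix.add_apply, mul_apply, Finset.sum_eq_single j]
  · simp only [inclusionMatrix, mul_apply, single_apply, one_apply, ite_and, submatrix_apply, id_eq,
      mul_ite, mul_one, mul_zero, Finset.sum_ite_eq, Finset.mem_univ, if_true,
      transpose_apply, zero_mul, ite_mul, one_mul, @eq_comm _ (f _)]
    split_ifs <;> rfl
  · simp +contextual [mul_apply, eq_comm]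
  · simp

theorem blockEmbedding_mem_elementaryProducts (f : α ↪ β) {m : ℕ} {g : SL α R}
    (hg : g ∈ elementaryProducts α R m) : blockEmbedding f g ∈ elementaryProducts β R m := by
  have h := Set.mem_image_of_mem (blockEmbedding f) hg
  rw [elementaryProducts, Set.image_pow] at h
  refine Set.pow_subset_pow_left ?_ h
  rintro _ ⟨_, rfl | ⟨i, j, hij, t, rfl⟩, rfl⟩
  · exact Or.inl (map_one _)
  · exact Or.inr ⟨f i, f j, f.injective.ne hij, t, (blockEmbedding_transvection f hij t).symm⟩

theorem mem_range_blockEmbedding {f : α ↪ β} {g : SL β R}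
    (hg : ∀ i j, i ∉ Set.range f ∨ j ∉ Set.range f → g i j = (1 : Matrix β β R) i j) :
    g ∈ (blockEmbedding (R := R) f).range :=
  have hblock := blockMatrix_submatrix hg
  ⟨⟨(g : Matrix β β R).submatrix f f, by rw [← det_blockMatrix f, hblock, g.2]⟩, Subtype.ext hblock⟩

theorem conj_coe {g : SL α R} {u v : α → R} (A : SL α R)
    (hg : (g : Matrix α α R) = 1 + vecMulVec u v) :
    ((A * g * A⁻¹ : SL α R) : Matrix α α R) =
      1 + vecMulVec ((A : Matrix α α R) *ᵥ u) (v ᵥ* ((A⁻¹ : SL α R) : Matrix α α R)) := by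
  rw [Matrix.SpecialLinearGroup.coe_mul, Matrix.SpecialLinearGroup.coe_mul, hg, mul_add, add_mul,
    mul_one, ← Matrix.SpecialLinearGroup.coe_mul, mul_inv_cancel, Matrix.SpecialLinearGroup.coe_one,
    mul_vecMulVec, vecMulVec_mul]

theorem blockEmbedding_mulVec_single {f : α ↪ β} {k : β} (hk : k ∉ Set.range f) (A : SL α R) :
    (blockEmbedding f A : Matrix β β R) *ᵥ Pi.single k 1 = Pi.single k 1 := by
  ext i
  simp [blockEmbedding_coe, blockMatrix_apply_of_notMem_range f _ (Or.inr hk), one_apply,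
    Pi.single_apply]

theorem single_vecMul_blockEmbedding {f : α ↪ β} {l : β} (hl : l ∉ Set.range f) (A : SL α R) :
    Pi.single l 1 ᵥ* (blockEmbedding f A : Matrix β β R) = Pi.single l 1 := by
  ext j
  simp [blockEmbedding_coe, blockMatrix_apply_of_notMem_range f _ (Or.inl hl), one_apply,
    Pi.single_apply, eq_comm]

theorem blockEmbedding_conj_transvection_mem {f : α ↪ β} {k l : β} (hkl : k ≠ l)
    (h : k ∉ Set.range f ∨ l ∉ Set.range f) (A : SL α R) (t : R) :
    blockEmbedding f A * transvection hkl t * (blockEmbedding f A)⁻¹ ∈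
      elementaryProducts β R (Fintype.card β) := by
  have hkl' (a b : R) : single k l (a * b) = vecMulVec (Pi.single k a) (Pi.single l b) := by
    ext i j
    simp [vecMulVec_apply, single_apply, Pi.single_apply, ← ite_and, and_comm, eq_comm]
  rcases h with hk | hl
  · have hconj := conj_coe (blockEmbedding f A) (g := transvection hkl t)
      (by rw [transvection_coe, ← hkl' 1 t, one_mul])
    rw [blockEmbedding_mulVec_single hk] at hconj
    obtain ⟨h, hh, hcoe⟩ := exists_mem_elementaryProducts_coe_eq_row (k := k)
      (v := Pi.single l t ᵥ* (((blockEmbedding f A)⁻¹ : SL β R) : Matrix β β R)) (by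
        rw [← map_inv, blockEmbedding_coe, single_vecMul]
        simp [blockMatrix_apply_of_notMem_range f _ (Or.inr hk), hkl.symm])
    rwa [Subtype.ext (hconj.trans hcoe.symm)]
  · have hconj := conj_coe (blockEmbedding f A) (g := transvection hkl t)
      (by rw [transvection_coe, ← hkl' t 1, mul_one])
    rw [← map_inv, single_vecMul_blockEmbedding hl] at hconj
    obtain ⟨h, hh, hcoe⟩ := exists_mem_elementaryProducts_coe_eq_column (l := l)
      (u := (blockEmbedding f A : Matrix β β R) *ᵥ Pi.single k t) (by
        rw [blockEmbedding_coe, mulVec_single]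
        simp [blockMatrix_apply_of_notMem_range f _ (Or.inl hl), hkl.symm])
    rwa [← map_inv, Subtype.ext (hconj.trans hcoe.symm)]

end BlockEmbedding

section StableRange

variable {R : Type*} [CommRing R]

theorem exists_dvd_pow_mul_one_sub_pow [Ring.HasFiniteQuotients R] {x : R} (hx : x ≠ 0) (a : R) :
    ∃ m q, 0 < q ∧ x ∣ a ^ m * (1 - a ^ q) := by
  have : Finite (R ⧸ Ideal.span {x}) :=
    Ring.HasFiniteQuotients.finiteQuotient (by simpa using hx)
  obtain ⟨m, n, hmn, heq⟩ := Set.finite_univ.exists_lt_map_eq_of_forall_mem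
    (f := fun m : ℕ => Ideal.Quotient.mk (Ideal.span {x}) a ^ m) fun _ => Set.mem_univ _
  refine ⟨m, n - m, Nat.sub_pos_of_lt hmn, ?_⟩
  rw [← Ideal.mem_span_singleton, ← Ideal.Quotient.eq_zero_iff_mem, mul_sub, mul_one, ← pow_add,
    Nat.add_sub_cancel' hmn.le, map_sub, map_pow, map_pow, sub_eq_zero]
  exact heq

theorem mem_of_add_mul_one_sub_pow_mem {P : Ideal R} [hP : P.IsPrime] {b c x : R} {m q : ℕ}
    (hq : 0 < q) (hdvd : x ∣ b ^ m * (1 - b ^ q)) (hx : x ∈ P)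
    (hb : b + c * (1 - b ^ q) ∈ P) : c ∈ P := by
  have hbP : b ∈ P := (hP.mem_or_mem (P.mem_of_dvd hdvd hx)).elim (hP.mem_of_pow_mem m) fun h =>
    (P.add_mem_iff_left (P.mul_mem_left c h)).1 hb
  have hbq : c * b ^ q ∈ P := P.mul_mem_left c (P.pow_mem_of_mem hbP q hq)
  rwa [P.add_mem_iff_right hbP, mul_sub, mul_one, P.sub_mem_iff_left hbq] at hb

variable [Ring.HasFiniteQuotients R] {ι : Type*} [Fintype ι]

theorem exists_span_image_add_smul_eq_top {a r : ι → R} {i j l : ι} (hij : i ≠ j) (hil : i ≠ l)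
    (hjl : j ≠ l) (h : a ⬝ᵥ r = 1) :
    ∃ v : ι → R, v l = 0 ∧ Ideal.span ((a + a l • v) '' {l}ᶜ) = ⊤ := by
  classical
  obtain ⟨s, m, q, hq, hs⟩ :
      ∃ s m q, 0 < q ∧ (a l = 0 ∨ a i + a l * s ∣ a j ^ m * (1 - a j ^ q)) := by
    by_cases hl : a l = 0
    · exact ⟨0, 0, 1, one_pos, Or.inl hl⟩
    · obtain ⟨s, hs⟩ : ∃ s, a i + a l * s ≠ 0 := by
        by_cases hi : a i = 0
        · exact ⟨1, by simpa [hi] using hl⟩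
        · exact ⟨0, by simpa using hi⟩
      obtain ⟨m, q, hq, hdvd⟩ := exists_dvd_pow_mul_one_sub_pow hs (a j)
      exact ⟨s, m, q, hq, Or.inr hdvd⟩
  set v : ι → R := Pi.single i s + Pi.single j (1 - a j ^ q) with hv
  have hvi : v i = s := by simp [hv, hij]
  have hvj : v j = 1 - a j ^ q := by simp [hv, hij.symm]
  refine ⟨v, by simp [hv, hil.symm, hjl.symm], ?_⟩
  by_contra hne
  obtain ⟨P, hP, hle⟩ := Ideal.exists_le_maximal _ hne
  have hprime := hP.isPrime
  have hmem (k : ι) (hk : k ≠ l) : a k + a l * v k ∈ P :=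
    hle (Ideal.subset_span ⟨k, hk, rfl⟩)
  have hl : a l ∈ P := hs.elim (fun h0 => h0 ▸ P.zero_mem) fun hdvd =>
    mem_of_add_mul_one_sub_pow_mem hq hdvd (hvi ▸ hmem i hil) (hvj ▸ hmem j hjl)
  have ha (k : ι) : a k ∈ P := by
    rcases eq_or_ne k l with rfl | hk
    · exact hl
    · exact (P.add_mem_iff_left (P.mul_mem_right (v k) hl)).1 (hmem k hk)
  exact hP.ne_top (P.eq_top_iff_one.2 (h ▸ P.sum_mem fun k _ => P.mul_mem_right (r k) (ha k)))

theorem exists_add_smul_dotProduct_eq_one {a r : ι → R} {i j l : ι} (hij : i ≠ j) (hil : i ≠ l)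
    (hjl : j ≠ l) (h : a ⬝ᵥ r = 1) :
    ∃ u v : ι → R, u l = 0 ∧ v l = 0 ∧ (a + a l • v) ⬝ᵥ u = 1 := by
  classical
  obtain ⟨v, hv, htop⟩ := exists_span_image_add_smul_eq_top hij hil hjl h
  set b := a + a l • v
  have hrange : b '' {l}ᶜ ⊆ Set.range (Function.update b l 0) := by
    rintro _ ⟨k, hk, rfl⟩
    exact ⟨k, Function.update_of_ne hk _ _⟩
  have hone := Ideal.span_mono hrange (htop ▸ Submodule.mem_top : (1 : R) ∈ _)
  obtain ⟨t, ht⟩ := Ideal.mem_span_range_iff_exists_fun.1 hone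
  refine ⟨Function.update t l 0, v, Function.update_self .., hv, ?_⟩
  rw [← ht]
  refine Finset.sum_congr rfl fun k _ => ?_
  rcases eq_or_ne k l with rfl | hk
  · simp
  · rw [Function.update_of_ne hk, Function.update_of_ne hk, mul_comm]

end StableRange

section Reduction

variable {α β R : Type*} [Fintype α] [DecidableEq α] [Fintype β] [DecidableEq β] [CommRing R]

theorem vecMul_one_add_vecMulVec (a u v : α → R) :
    a ᵥ* (1 + vecMulVec u v) = a + (a ⬝ᵥ u) • v := by
  rw [vecMul_add, vecMul_one, vecMul_vecMulVec]

theorem one_add_vecMulVec_mulVec (a u v : α → R) :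
    (1 + vecMulVec u v) *ᵥ a = a + (v ⬝ᵥ a) • u := by
  rw [add_mulVec, one_mulVec, vecMulVec_mulVec, op_smul_eq_smul]

theorem exists_vecMul_eq_single [Ring.HasFiniteQuotients R] {a r : α → R} {i j l : α}
    (hij : i ≠ j) (hil : i ≠ l) (hjl : j ≠ l) (h : a ⬝ᵥ r = 1) :
    ∃ e ∈ elementaryProducts α R (3 * Fintype.card α),
      a ᵥ* (e : Matrix α α R) = Pi.single l 1 := by
  obtain ⟨u, v, hu, hv, huv⟩ := exists_add_smul_dotProduct_eq_one hij hil hjl h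
  obtain ⟨e₁, he₁, hcoe₁⟩ := exists_mem_elementaryProducts_coe_eq_row hv
  obtain ⟨e₂, he₂, hcoe₂⟩ := exists_mem_elementaryProducts_coe_eq_column (l := l)
    (u := (1 - a l) • u) (by simp [hu])
  set d := a + a l • v + (1 - a l) • Pi.single l 1 with hd
  have hdl : d l = 1 := by simp [hd, hv]
  obtain ⟨e₃, he₃, hcoe₃⟩ := exists_mem_elementaryProducts_coe_eq_row (k := l)
    (v := Pi.single l 1 - d) (by simp [hdl])
  have ha₁ : a ᵥ* (e₁ : Matrix α α R) = a + a l • v := by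
    rw [hcoe₁, vecMul_one_add_vecMulVec, dotProduct_single_one]
  have ha₂ : (a + a l • v) ᵥ* (e₂ : Matrix α α R) = d := by
    rw [hcoe₂, vecMul_one_add_vecMulVec, dotProduct_smul, huv, smul_eq_mul, mul_one]
  have ha₃ : d ᵥ* (e₃ : Matrix α α R) = Pi.single l 1 := by
    rw [hcoe₃, vecMul_one_add_vecMulVec, dotProduct_single_one, hdl, one_smul, add_sub_cancel]
  refine ⟨e₁ * e₂ * e₃, ?_, ?_⟩
  · rw [show 3 * Fintype.card α = Fintype.card α + Fintype.card α + Fintype.card α by ring]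
    exact mul_mem_elementaryProducts (mul_mem_elementaryProducts he₁ he₂) he₃
  · rw [Matrix.SpecialLinearGroup.coe_mul, Matrix.SpecialLinearGroup.coe_mul, ← vecMul_vecMul,
      ← vecMul_vecMul, ha₁, ha₂, ha₃]

theorem mem_range_blockEmbedding_of_row_of_column {f : α ↪ β} {l : β} (hf : {l}ᶜ ⊆ Set.range f)
    {g : SL β R} (hrow : Pi.single l 1 ᵥ* (g : Matrix β β R) = Pi.single l 1)
    (hcol : (g : Matrix β β R) *ᵥ Pi.single l 1 = Pi.single l 1) :
    g ∈ (blockEmbedding (R := R) f).range := by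
  have hl {k : β} (hk : k ∉ Set.range f) : k = l := not_not.1 fun h => hk (hf h)
  refine mem_range_blockEmbedding fun i j hij => ?_
  rcases hij with hi | hj
  · simpa [hl hi, one_apply, Pi.single_apply, eq_comm] using congrFun hrow j
  · simpa [hl hj, one_apply, Pi.single_apply] using congrFun hcol i

theorem exists_eq_mul_blockEmbedding_mul_of_compl_subset [Ring.HasFiniteQuotients R] {f : α ↪ β}
    {l : β} (hf : {l}ᶜ ⊆ Set.range f) {i j : β} (hij : i ≠ j) (hil : i ≠ l) (hjl : j ≠ l)
    (g : SL β R) :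
    ∃ e ∈ elementaryProducts β R (3 * Fintype.card β), ∃ A : SL α R,
      ∃ e' ∈ elementaryProducts β R (3 * Fintype.card β), g = e * blockEmbedding f A * e' := by
  have hunimodular : (Pi.single l 1 ᵥ* (g : Matrix β β R)) ⬝ᵥ
      (((g⁻¹ : SL β R) : Matrix β β R) *ᵥ Pi.single l 1) = 1 := by
    rw [← dotProduct_mulVec, mulVec_mulVec, ← Matrix.SpecialLinearGroup.coe_mul, mul_inv_cancel]
    simp
  obtain ⟨e, he, hrow⟩ := exists_vecMul_eq_single hij hil hjl hunimodular
  rw [vecMul_vecMul, ← Matrix.SpecialLinearGroup.coe_mul] at hrow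
  set c := ((g * e : SL β R) : Matrix β β R) *ᵥ Pi.single l 1 with hc
  have hcl : c l = 1 := by
    rw [← single_one_dotProduct l c, hc, dotProduct_mulVec, hrow]
    simp
  obtain ⟨e', he', hcoe⟩ := exists_mem_elementaryProducts_coe_eq_column (l := l)
    (u := Pi.single l 1 - c) (by simp [hcl])
  obtain ⟨A, hA⟩ := mem_range_blockEmbedding_of_row_of_column hf (g := e' * (g * e))
    (by
      rw [Matrix.SpecialLinearGroup.coe_mul, ← vecMul_vecMul, hcoe, vecMul_one_add_vecMulVec]
      simpa [hcl] using hrow)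
    (by
      rw [Matrix.SpecialLinearGroup.coe_mul, ← mulVec_mulVec, ← hc, hcoe, one_add_vecMulVec_mulVec]
      simp [hcl])
  refine ⟨e'⁻¹, elementaryProducts_mono (by lia) (inv_mem_elementaryProducts he'), A, e⁻¹,
    inv_mem_elementaryProducts he, ?_⟩
  rw [hA]
  group

theorem exists_forall_eq_mul_blockEmbedding_mul [Ring.HasFiniteQuotients R] {n : ℕ} (hn : 2 ≤ n) :
    ∃ N, ∀ g : SL (Fin n) R, ∃ e ∈ elementaryProducts (Fin n) R N, ∃ M : SL (Fin 2) R,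
      ∃ e' ∈ elementaryProducts (Fin n) R N,
        g = e * blockEmbedding (Fin.castLEEmb hn) M * e' := by
  induction n, hn using Nat.le_induction with
  | base =>
    refine ⟨0, fun g => ⟨1, by simp [elementaryProducts_zero], g, 1,
      by simp [elementaryProducts_zero], ?_⟩⟩
    rw [one_mul, mul_one]
    ext i j
    exact (blockMatrix_apply (Fin.castLEEmb le_rfl) _ i j).symm
  | succ n hn ih =>
    obtain ⟨N, hN⟩ := ih
    refine ⟨3 * Fintype.card (Fin (n + 1)) + N, fun g => ?_⟩
    obtain ⟨e, he, A, e', he', rfl⟩ := exists_eq_mul_blockEmbedding_mul_of_compl_subset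
      (f := Fin.castSuccEmb) (l := Fin.last n) (i := ⟨0, by lia⟩) (j := ⟨1, by lia⟩)
      (fun k hk => ⟨k.castPred hk, Fin.castSucc_castPred k hk⟩) (by simp)
      (by simp [Fin.ext_iff]; lia) (by simp [Fin.ext_iff]; lia) g
    obtain ⟨e₁, he₁, M, e₁', he₁', rfl⟩ := hN A
    refine ⟨e * blockEmbedding Fin.castSuccEmb e₁,
      mul_mem_elementaryProducts he (blockEmbedding_mem_elementaryProducts _ he₁), M,
      blockEmbedding Fin.castSuccEmb e₁' * e', ?_, ?_⟩
    · rw [add_comm (3 * _)]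
      exact mul_mem_elementaryProducts (blockEmbedding_mem_elementaryProducts _ he₁') he'
    · rw [map_mul, map_mul, blockEmbedding_blockEmbedding]
      simp only [mul_assoc]
      rfl

end Reduction

section Mennicke

variable {R : Type*} [CommRing R]

theorem coe_transvection_zero_one (t : R) :
    (transvection (zero_ne_one (α := Fin 2)) t : Matrix (Fin 2) (Fin 2) R) = !![1, t; 0, 1] := by
  ext i j
  fin_cases i <;> fin_cases j <;> simp [transvection_coe]

theorem coe_transvection_one_zero (t : R) :
    (transvection (one_ne_zero (α := Fin 2)) t : Matrix (Fin 2) (Fin 2) R) = !![1, 0; t, 1] := by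
  ext i j
  fin_cases i <;> fin_cases j <;> simp [transvection_coe]

theorem exists_mem_elementaryProducts_coe_eq_corners (s t : R) :
    ∃ g ∈ elementaryProducts (Fin 3) R 2,
      (g : Matrix (Fin 3) (Fin 3) R) = !![1, 0, t; 0, 1, 0; s, 0, 1 + s * t] := by
  have h : (2 : Fin 3) ≠ 0 := by decide
  refine ⟨transvection h s * transvection h.symm t, mul_mem_elementaryProducts
    (transvection_mem_elementaryProducts _ _) (transvection_mem_elementaryProducts _ _), ?_⟩
  rw [Matrix.SpecialLinearGroup.coe_mul, transvection_coe, transvection_coe]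
  ext i j
  fin_cases i <;> fin_cases j <;> simp [Matrix.mul_apply, Fin.sum_univ_three, one_apply, add_comm]

theorem det_eq_one_fin_two (M : SL (Fin 2) R) : M 0 0 * M 1 1 - M 0 1 * M 1 0 = 1 := by
  rw [← Matrix.det_fin_two]
  exact M.2

/-- The rows and columns of the upper left `2 × 2` block of a `3 × 3` matrix. -/
def upperLeft : Fin 2 ↪ Fin 3 := Fin.castSuccEmb

/-- The rows and columns of the lower right `2 × 2` block of a `3 × 3` matrix. -/
def lowerRight : Fin 2 ↪ Fin 3 := Fin.succEmb 2

theorem blockMatrix_upperLeft (A : Matrix (Fin 2) (Fin 2) R) :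
    blockMatrix upperLeft A =
      !![A 0 0, A 0 1, 0; A 1 0, A 1 1, 0; 0, 0, 1] := by
  have h2 : (2 : Fin 3) ∉ Set.range upperLeft := by simp [upperLeft]
  ext i j
  fin_cases i <;> fin_cases j <;> dsimp only [Fin.zero_eta, Fin.mk_one, Fin.reduceFinMk]
  all_goals first
    | exact (blockMatrix_apply_of_notMem_range _ A (Or.inl h2)).trans (by simp)
    | exact (blockMatrix_apply_of_notMem_range _ A (Or.inr h2)).trans (by simp)
    | exact blockMatrix_apply upperLeft A 0 0
    | exact blockMatrix_apply upperLeft A 0 1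
    | exact blockMatrix_apply upperLeft A 1 0
    | exact blockMatrix_apply upperLeft A 1 1

theorem blockMatrix_lowerRight (A : Matrix (Fin 2) (Fin 2) R) :
    blockMatrix lowerRight A =
      !![1, 0, 0; 0, A 0 0, A 0 1; 0, A 1 0, A 1 1] := by
  have h0 : (0 : Fin 3) ∉ Set.range lowerRight := by simp [lowerRight]
  ext i j
  fin_cases i <;> fin_cases j <;> dsimp only [Fin.zero_eta, Fin.mk_one, Fin.reduceFinMk]
  all_goals first
    | exact (blockMatrix_apply_of_notMem_range _ A (Or.inl h0)).trans (by simp)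
    | exact (blockMatrix_apply_of_notMem_range _ A (Or.inr h0)).trans (by simp)
    | exact blockMatrix_apply lowerRight A 0 0
    | exact blockMatrix_apply lowerRight A 0 1
    | exact blockMatrix_apply lowerRight A 1 0
    | exact blockMatrix_apply lowerRight A 1 1

/-- The quarter turn in `SL(2, R)`, which represents the nontrivial Weyl group element. -/
def quarterTurn (R : Type*) [CommRing R] : SL (Fin 2) R :=
  ⟨!![0, -1; 1, 0], by simp⟩

theorem quarterTurn_coe : (quarterTurn R : Matrix (Fin 2) (Fin 2) R) = !![0, -1; 1, 0] := rfl

theorem quarterTurn_mem_elementaryProducts : quarterTurn R ∈ elementaryProducts (Fin 2) R 3 := by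
  have h : quarterTurn R = transvection zero_ne_one (-1) * transvection one_ne_zero 1 *
      transvection zero_ne_one (-1) := Subtype.ext <| by
    simp [quarterTurn_coe, coe_transvection_zero_one, coe_transvection_one_zero]
  rw [h]
  exact mul_mem_elementaryProducts (mul_mem_elementaryProducts
    (transvection_mem_elementaryProducts _ _) (transvection_mem_elementaryProducts _ _))
    (transvection_mem_elementaryProducts _ _)

theorem exists_lowerRight_eq_mul_upperLeft_mul (M : SL (Fin 2) R) :
    ∃ e ∈ elementaryProducts (Fin 3) R 6, ∃ e' ∈ elementaryProducts (Fin 3) R 6,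
      blockEmbedding lowerRight M = e * blockEmbedding upperLeft M * e' := by
  let w : SL (Fin 3) R := blockEmbedding upperLeft (quarterTurn R) *
    blockEmbedding lowerRight (quarterTurn R)
  have hw : w ∈ elementaryProducts (Fin 3) R 6 := mul_mem_elementaryProducts (m := 3) (n := 3)
    (blockEmbedding_mem_elementaryProducts _ quarterTurn_mem_elementaryProducts)
    (blockEmbedding_mem_elementaryProducts _ quarterTurn_mem_elementaryProducts)
  refine ⟨w, hw, w⁻¹, inv_mem_elementaryProducts hw, ?_⟩
  rw [eq_mul_inv_iff_mul_eq]
  apply Subtype.ext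
  simp only [w, Matrix.SpecialLinearGroup.coe_mul, blockEmbedding_coe, blockMatrix_upperLeft,
    blockMatrix_lowerRight, quarterTurn_coe]
  ext i j
  fin_cases i <;> fin_cases j <;> simp [Matrix.mul_apply, Fin.sum_univ_three]

-- Mennicke's identity: the symbol `[a, b]` is multiplicative in `b`.
theorem exists_upperLeft_mul_lowerRight_eq {A B : SL (Fin 2) R} (h : A 0 0 = B 0 0) :
    ∃ e ∈ elementaryProducts (Fin 3) R 6, ∃ e' ∈ elementaryProducts (Fin 3) R 6,
      ∃ M : SL (Fin 2) R, M 0 0 = A 0 0 ∧ M 0 1 = A 0 1 * B 0 1 ∧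
        blockEmbedding upperLeft A * blockEmbedding lowerRight B =
          e * blockEmbedding upperLeft M * e' := by
  have hA := det_eq_one_fin_two A
  have hB := det_eq_one_fin_two B
  obtain ⟨M, hM⟩ : ∃ M : SL (Fin 2) R, (M : Matrix (Fin 2) (Fin 2) R) =
      !![A 0 0, A 0 1 * B 0 1; -(A 1 0 * B 1 0), B 1 1 - B 1 0 * A 1 1 * B 0 1] := by
    refine ⟨⟨_, ?_⟩, rfl⟩
    rw [Matrix.det_fin_two_of]
    linear_combination hB - B 0 1 * B 1 0 * hA + B 1 1 * h
  let w : SL (Fin 3) R := blockEmbedding lowerRight (quarterTurn R)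
  have hw : w ∈ elementaryProducts (Fin 3) R 3 :=
    blockEmbedding_mem_elementaryProducts _ quarterTurn_mem_elementaryProducts
  let lower (t : R) : SL (Fin 3) R :=
    blockEmbedding lowerRight (transvection one_ne_zero t)
  have hlower (t : R) : lower t ∈ elementaryProducts (Fin 3) R 1 :=
    blockEmbedding_mem_elementaryProducts _ (transvection_mem_elementaryProducts _ t)
  obtain ⟨q, hq, hqcoe⟩ := exists_mem_elementaryProducts_coe_eq_corners (-A 1 0) (-A 0 1)
  refine ⟨lower (B 1 0) * w,
    elementaryProducts_mono (by simp) (mul_mem_elementaryProducts (hlower _) hw),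
    lower (-(A 1 1 * B 0 1)) * q * w⁻¹,
    mul_mem_elementaryProducts (mul_mem_elementaryProducts (hlower _) hq)
      (inv_mem_elementaryProducts hw),
    M, by simp [hM], by simp [hM], ?_⟩
  rw [← mul_assoc, eq_mul_inv_iff_mul_eq]
  ext i j
  simp only [w, lower, Matrix.SpecialLinearGroup.coe_mul, blockEmbedding_coe, blockMatrix_upperLeft,
    blockMatrix_lowerRight, quarterTurn_coe, coe_transvection_one_zero, hqcoe, hM]
  fin_cases i <;> fin_cases j <;>
    simp [Matrix.mul_apply, Fin.sum_univ_three] <;> grind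

theorem mem_elementaryProducts_of_mul_eq_one {M : SL (Fin 2) R} {u c : R}
    (h : (M 0 1 + M 0 0 * c) * u = 1) : M ∈ elementaryProducts (Fin 2) R 4 := by
  have hM : M = transvection one_ne_zero (M 1 0 + u * (1 - M 0 0) * (M 1 1 + M 1 0 * c)) *
      transvection zero_ne_one (M 0 1 + M 0 0 * c) *
      transvection one_ne_zero (-(u * (1 - M 0 0))) * transvection zero_ne_one (-c) := by
    have hdet := det_eq_one_fin_two M
    ext i j
    simp only [Matrix.SpecialLinearGroup.coe_mul, coe_transvection_zero_one,
      coe_transvection_one_zero, Matrix.mul_fin_two]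
    fin_cases i <;> fin_cases j <;> simp <;> grind
  rw [hM]
  exact mul_mem_elementaryProducts (mul_mem_elementaryProducts (mul_mem_elementaryProducts
    (transvection_mem_elementaryProducts _ _) (transvection_mem_elementaryProducts _ _))
    (transvection_mem_elementaryProducts _ _)) (transvection_mem_elementaryProducts _ _)

theorem exists_eq_transvection_mul {A B : SL (Fin 2) R} (h₀ : A 0 0 = B 0 0)
    (h₁ : A 0 1 = B 0 1) : ∃ t, A = transvection one_ne_zero t * B := by
  have hA := det_eq_one_fin_two A
  have hB := det_eq_one_fin_two B
  refine ⟨A 1 0 * B 1 1 - A 1 1 * B 1 0, ?_⟩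
  ext i j
  rw [Matrix.SpecialLinearGroup.coe_mul, coe_transvection_one_zero, Matrix.mul_apply]
  fin_cases i <;> fin_cases j <;> simp <;> grind

theorem blockEmbedding_upperLeft_mem_of_row_eq_mul {A B C : SL (Fin 2) R}
    (hA : A 0 0 = C 0 0) (hB : B 0 0 = C 0 0) (hC : C 0 1 = A 0 1 * B 0 1) :
    blockEmbedding upperLeft C ∈ elementaryProducts (Fin 3) R 12 *
      {blockEmbedding upperLeft A} * elementaryProducts (Fin 3) R 12 *
      {blockEmbedding upperLeft B} * elementaryProducts (Fin 3) R 12 := by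
  obtain ⟨e, he, e', he', M, hM₀, hM₁, hprod⟩ :=
    exists_upperLeft_mul_lowerRight_eq (hA.trans hB.symm)
  obtain ⟨v, hv, v', hv', hconj⟩ := exists_lowerRight_eq_mul_upperLeft_mul B
  obtain ⟨t, rfl⟩ := exists_eq_transvection_mul (hA.symm.trans hM₀.symm) (hC.trans hM₁.symm)
  have ht : blockEmbedding upperLeft (transvection one_ne_zero t) ∈
      elementaryProducts (Fin 3) R 1 :=
    blockEmbedding_mem_elementaryProducts _ (transvection_mem_elementaryProducts _ t)
  rw [hconj, ← mul_assoc, ← mul_assoc, ← mul_inv_eq_iff_eq_mul, ← inv_mul_eq_iff_eq_mul] at hprod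
  rw [map_mul, ← hprod]
  simp only [← mul_assoc]
  rw [mul_assoc _ v']
  refine Set.mul_mem_mul (Set.mul_mem_mul (Set.mul_mem_mul (Set.mul_mem_mul ?_ rfl) ?_) rfl) ?_
  · exact elementaryProducts_mono (by simp)
      (mul_mem_elementaryProducts ht (inv_mem_elementaryProducts he))
  · exact elementaryProducts_mono (by simp) hv
  · exact mul_mem_elementaryProducts hv' (inv_mem_elementaryProducts he')

theorem exists_pow_add_mul_mul_eq_one [Ring.HasFiniteQuotients R] {a b : R} (h : IsCoprime a b) :
    ∃ k c u, 0 < k ∧ (b ^ k + a * c) * u = 1 := by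
  rcases eq_or_ne a 0 with rfl | ha
  · obtain ⟨u, hu⟩ := isUnit_iff_exists_inv.1 (isCoprime_zero_left.1 h)
    exact ⟨1, 0, u, one_pos, by simpa using hu⟩
  · obtain ⟨m, k, hk, hdvd⟩ := exists_dvd_pow_mul_one_sub_pow ha b
    obtain ⟨c, hc⟩ := (h.pow_right (n := m)).dvd_of_dvd_mul_left hdvd
    exact ⟨k, c, 1, hk, by rw [mul_one, ← hc, add_sub_cancel]⟩

theorem powersReturn_blockEmbedding_upperLeft [Ring.HasFiniteQuotients R] (M : SL (Fin 2) R) :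
    PowersReturn (elementaryProducts (Fin 3) R 12) (blockEmbedding upperLeft M) := by
  have hM : IsCoprime (M 0 0) (M 0 1) :=
    ⟨M 1 1, -M 1 0, by linear_combination det_eq_one_fin_two M⟩
  choose s hs₀ hs₁ using fun j : ℕ => (hM.pow_right (n := j)).exists_SL2_row 0
  obtain ⟨k, c, u, hk, hu⟩ := exists_pow_add_mul_mul_eq_one hM
  have hmem {j : ℕ} {c u : R} (h : (M 0 1 ^ j + M 0 0 * c) * u = 1) :
      blockEmbedding upperLeft (s j) ∈ elementaryProducts (Fin 3) R 12 :=
    elementaryProducts_mono (by simp) (blockEmbedding_mem_elementaryProducts _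
      (mem_elementaryProducts_of_mul_eq_one (by rwa [hs₀, hs₁])))
  refine ⟨fun j => blockEmbedding upperLeft (s j), k, hk, hmem (c := 0) (u := 1) (by simp),
    hmem hu, fun j => blockEmbedding_upperLeft_mem_of_row_eq_mul ?_ ?_ ?_⟩
  · rw [hs₀, hs₀]
  · rw [hs₀]
  · rw [hs₁, hs₁, pow_succ]

end Mennicke

section Normality

theorem elementarySubgroup_le_of_notMem_range {α β R : Type*} [Fintype β] [DecidableEq β]
    [CommRing R] {f : α ↪ β} (hf : ¬ Function.Surjective f) {H : Subgroup (SL β R)}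
    (hH : ∀ (k l : β) (h : k ≠ l), k ∉ Set.range f ∨ l ∉ Set.range f →
      ∀ t : R, transvection h t ∈ H) :
    elementarySubgroup β R ≤ H := by
  obtain ⟨j, hj⟩ := not_forall.1 hf
  refine elementarySubgroup_le fun k l hkl t => ?_
  by_cases h : k ∉ Set.range f ∨ l ∉ Set.range f
  · exact hH k l hkl h t
  push Not at h
  have hkj : k ≠ j := fun e => hj (e ▸ h.1)
  have hjl : j ≠ l := fun e => hj (e ▸ h.2)
  have hleft := hH k j hkj (Or.inr hj) t
  have hright := hH j l hjl (Or.inl hj) 1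
  have hprod := mul_mem hleft hright
  rwa [transvection_mul_transvection hkj hjl hkl, mul_one, mul_assoc,
    H.mul_mem_cancel_right (mul_mem hright hleft)] at hprod

theorem blockEmbedding_mem_normalizer {α β R : Type*} [Fintype α] [DecidableEq α] [Fintype β]
    [DecidableEq β] [CommRing R] {f : α ↪ β} (hf : ¬ Function.Surjective f) (A : SL α R) :
    blockEmbedding f A ∈ Subgroup.normalizer (elementarySubgroup β R : Set (SL β R)) := by
  have hconj (A : SL α R) {g : SL β R} (hg : g ∈ elementarySubgroup β R) :
      blockEmbedding f A * g * (blockEmbedding f A)⁻¹ ∈ elementarySubgroup β R :=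
    elementarySubgroup_le_of_notMem_range (H := (elementarySubgroup β R).comap
      (MulAut.conj (blockEmbedding f A)).toMonoidHom) hf
      (fun _ _ hkl h t => elementaryProducts_subset _
        (blockEmbedding_conj_transvection_mem hkl h A t)) hg
  refine Subgroup.mem_normalizer_iff.2 fun g => ⟨hconj A, fun hg => ?_⟩
  simpa [mul_assoc] using hconj A⁻¹ hg

variable {n : ℕ} {R : Type*} [CommRing R] [Ring.HasFiniteQuotients R]

theorem not_surjective_castLEEmb (hn : 3 ≤ n) :
    ¬ Function.Surjective (Fin.castLEEmb (Nat.le_of_succ_le hn)) := fun h => by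
  simpa [Nat.not_le.2 hn] using Fintype.card_le_of_surjective _ h

theorem elementarySubgroup_normal (hn : 3 ≤ n) : (elementarySubgroup (Fin n) R).Normal := by
  rw [← Subgroup.normalizer_eq_top_iff, eq_top_iff]
  intro g _
  obtain ⟨N, hN⟩ := exists_forall_eq_mul_blockEmbedding_mul (R := R) (Nat.le_of_succ_le hn)
  obtain ⟨e, he, M, e', he', rfl⟩ := hN g
  exact mul_mem (mul_mem (Subgroup.le_normalizer (elementaryProducts_subset N he))
    (blockEmbedding_mem_normalizer (not_surjective_castLEEmb hn) M))
    (Subgroup.le_normalizer (elementaryProducts_subset N he'))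

theorem powersReturn_blockEmbedding_castLEEmb (hn : 3 ≤ n) (M : SL (Fin 2) R) :
    PowersReturn (elementaryProducts (Fin n) R 12)
      (blockEmbedding (Fin.castLEEmb (Nat.le_of_succ_le hn)) M) := by
  have h := (powersReturn_blockEmbedding_upperLeft M).map (blockEmbedding (Fin.castLEEmb hn))
    fun _ => blockEmbedding_mem_elementaryProducts (Fin.castLEEmb hn)
  rwa [blockEmbedding_blockEmbedding] at h

theorem exists_pow_mem_elementarySubgroup (hn : 3 ≤ n) (g : SL (Fin n) R) :
    ∃ k, 0 < k ∧ g ^ k ∈ elementarySubgroup (Fin n) R := by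
  have := elementarySubgroup_normal (R := R) hn
  obtain ⟨N, hN⟩ := exists_forall_eq_mul_blockEmbedding_mul (R := R) (Nat.le_of_succ_le hn)
  obtain ⟨e, he, M, e', he', rfl⟩ := hN g
  obtain ⟨k, hk, hmem⟩ := (powersReturn_blockEmbedding_castLEEmb hn M).exists_pow_mem
    (elementaryProducts_subset 12)
  refine ⟨k, hk, ?_⟩
  rw [← QuotientGroup.eq_one_iff] at hmem ⊢
  have h₁ := (QuotientGroup.eq_one_iff _).2 (elementaryProducts_subset N he)
  have h₂ := (QuotientGroup.eq_one_iff _).2 (elementaryProducts_subset N he')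
  rwa [QuotientGroup.mk_pow, QuotientGroup.mk_mul, QuotientGroup.mk_mul, h₁, h₂, one_mul, mul_one,
    ← QuotientGroup.mk_pow]

end Normality

section FixedPoint

variable {α R X : Type*} [Fintype α] [DecidableEq α] [CommRing R] [PseudoMetricSpace X]

theorem exists_forall_mem_elementaryProducts_le {φ : SL α R → ℝ} {c B : ℝ}
    (hmul : ∀ g ∈ elementarySubgroup α R, ∀ h ∈ elementarySubgroup α R,
      φ (g * h) ≤ φ g + φ h + c)
    (hB : ∀ (i j : α) (h : i ≠ j) (t : R), φ (transvection h t) ≤ B) (m : ℕ) :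
    ∃ C, ∀ g ∈ elementaryProducts α R m, φ g ≤ C := by
  induction m with
  | zero => exact ⟨φ 1, fun g hg => by rw [elementaryProducts_zero] at hg; rw [hg]⟩
  | succ m ih =>
    obtain ⟨C, hC⟩ := ih
    refine ⟨max C (C + B + c), fun g hg => ?_⟩
    rw [elementaryProducts, pow_succ] at hg
    obtain ⟨a, ha, _, rfl | ⟨i, j, h, t, rfl⟩, rfl⟩ := hg
    · exact le_max_of_le_left (by simpa only [mul_one] using hC a ha)
    · have := hmul a (elementaryProducts_subset m ha) _ (transvection_mem_elementarySubgroup h t)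
      exact le_max_of_le_right (by linarith [hC a ha, hB i j h t])

theorem fixesPointAtInfinity_of_not_bddAbove_blockEmbedding {β : Type*} [Fintype β]
    [DecidableEq β] [MulAction (SL β R) X] [IsIsometricSMul (SL β R) X] {x : X} {δ : ℝ}
    (hX : IsFourPointHyperbolic X δ) {f : α ↪ β} (hf : ¬ Function.Surjective f) {B : ℝ}
    (hB : ∀ (i j : β) (h : i ≠ j) (t : R), displacement x (transvection h t) ≤ B)
    (hunbdd : ¬ BddAbove (Set.range fun A : SL α R => displacement x (blockEmbedding f A))) :
    FixesPointAtInfinity (elementarySubgroup β R) x := by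
  obtain ⟨C, hC⟩ := exists_forall_mem_elementaryProducts_le (c := 0)
    (fun g _ h _ => by simpa only [add_zero] using displacement_mul_le x g h) hB (Fintype.card β)
  simp only [not_bddAbove_iff, Set.exists_range_iff] at hunbdd
  choose A hA using fun m : ℕ => hunbdd m
  set y : ℕ → X := fun m => (blockEmbedding f (A m))⁻¹ • x
  have hy : ConvergeTogether x y y := .refl <| tendsto_atTop_mono
    (fun m => (hA m).le.trans_eq (displacement_inv x _).symm) tendsto_natCast_atTop_atTop
  refine ⟨y, elementarySubgroup_le_of_notMem_range (H := limitStabilizer _ hX hy) hf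
    fun k l hkl h t => mem_limitStabilizer_of_dist_smul_le hX hy hy (C := C) fun m => ?_⟩
  refine le_of_eq_of_le ?_ (hC _ (blockEmbedding_conj_transvection_mem hkl h (A m) t))
  rw [← mul_smul, dist_smul_smul_eq_displacement, inv_inv, mul_assoc]

theorem transvection_commute {i j k l : α} (hij : i ≠ j) (hkl : k ≠ l) (hjk : j ≠ k) (hil : i ≠ l)
    (s t : R) : Commute (transvection hij s) (transvection hkl t) := Subtype.ext <| by
  simp only [Matrix.SpecialLinearGroup.coe_mul, transvection_coe, mul_add, add_mul, mul_one,
    one_mul, single_mul_single_of_ne _ _ _ _ hjk, single_mul_single_of_ne _ _ _ _ hil.symm,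
    add_zero]
  abel

variable [MulAction (SL α R) X] [IsIsometricSMul (SL α R) X] {x : X} {y : ℕ → X} {δ : ℝ}

/-- The sequence `y` tends to the same point at infinity as a sequence of elementary matrices in
position `(k, l)`, applied to `x`. -/
def IsTransvectionLimit (R : Type*) [CommRing R] [MulAction (SL α R) X] (x : X) (y : ℕ → X)
    (k l : α) : Prop :=
  ∃ (h : k ≠ l) (σ : ℕ → R), ConvergeTogether x (fun m => transvection h (σ m) • x) y

theorem IsTransvectionLimit.change_row (hX : IsFourPointHyperbolic X δ) {k l m : α}
    (h : IsTransvectionLimit R x y k l) (hml : m ≠ l) : IsTransvectionLimit R x y m l := by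
  obtain rfl | hkm := eq_or_ne k m
  · exact h
  obtain ⟨hkl, σ, hσ⟩ := h
  refine ⟨hml, fun r => -σ r, (convergeTogether_of_inv_mul_eq_conj (u := transvection hkm 1)
    hσ.tendsto_dist fun r => ?_).symm.trans hX hσ⟩
  rw [transvection_mul_transvection hkm hml hkl, mul_inv_cancel_right, one_mul, transvection_inv]

theorem IsTransvectionLimit.change_column (hX : IsFourPointHyperbolic X δ) {k l m : α}
    (h : IsTransvectionLimit R x y k l) (hkm : k ≠ m) : IsTransvectionLimit R x y k m := by
  obtain rfl | hml := eq_or_ne m l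
  · exact h
  obtain ⟨hkl, σ, hσ⟩ := h
  refine ⟨hkm, fun r => -σ r, (convergeTogether_of_inv_mul_eq_conj
    (u := (transvection hml 1)⁻¹) hσ.tendsto_dist fun r => ?_).symm.trans hX hσ⟩
  rw [inv_inv, mul_assoc, transvection_mul_transvection hkm hml hkl, mul_one, ← mul_assoc,
    ← mul_assoc, (transvection_commute hml hkl hkl.symm hml 1 _).inv_mul_cancel,
    transvection_inv hkl]

theorem IsTransvectionLimit.transvection_mem_limitStabilizer (hX : IsFourPointHyperbolic X δ)
    (hy : ConvergeTogether x y y) {k l : α} (h : IsTransvectionLimit R x y k l) (hkl : k ≠ l)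
    (t : R) : transvection hkl t ∈ limitStabilizer (SL α R) hX hy := by
  obtain ⟨hkl', σ, hσ⟩ := h
  refine mem_limitStabilizer_of_dist_smul_le hX hy hσ.symm
    (C := displacement x (transvection hkl t)) fun m => ?_
  have hcomm := transvection_commute hkl hkl' hkl'.symm hkl t (σ m)
  rw [← mul_smul, hcomm.eq, mul_smul, dist_smul, displacement]

theorem fixesPointAtInfinity_of_not_bddAbove_transvection {n : ℕ} (hn : 3 ≤ n)
    [MulAction (SL (Fin n) R) X] [IsIsometricSMul (SL (Fin n) R) X]
    (hX : IsFourPointHyperbolic X δ) {i j : Fin n} (hij : i ≠ j)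
    (hunbdd : ¬ BddAbove (Set.range fun t : R => displacement x (transvection hij t))) :
    FixesPointAtInfinity (elementarySubgroup (Fin n) R) x := by
  simp only [not_bddAbove_iff, Set.exists_range_iff] at hunbdd
  choose τ hτ using fun m : ℕ => hunbdd m
  set y : ℕ → X := fun m => transvection hij (τ m) • x
  have hy : ConvergeTogether x y y := .refl <|
    tendsto_atTop_mono (fun m => (hτ m).le) tendsto_natCast_atTop_atTop
  have hlim : IsTransvectionLimit R x y i j := ⟨hij, τ, hy⟩
  refine ⟨y, elementarySubgroup_le (H := limitStabilizer _ hX hy) fun k l hkl t => ?_⟩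
  obtain ⟨m, hmj, hml⟩ := Fin.exists_ne_and_ne_of_two_lt j l hn
  exact (((hlim.change_row hX hmj).change_column hX hml).change_row hX
    hkl).transvection_mem_limitStabilizer hX hy hkl t

end FixedPoint

section Rigidity

variable {n : ℕ} {R X : Type*} [CommRing R] [Ring.HasFiniteQuotients R] [PseudoMetricSpace X]

theorem IsQuasimorphismOn.exists_abs_le {φ : SL (Fin n) R → ℝ} {c : ℝ} (hn : 3 ≤ n)
    (hφ : IsQuasimorphismOn φ (elementarySubgroup (Fin n) R) c) :
    ∃ B, ∀ g ∈ elementarySubgroup (Fin n) R, |φ g| ≤ B := by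
  have htransvection (i j : Fin n) (h : i ≠ j) (t : R) : |φ (transvection h t)| ≤ 3 * c := by
    obtain ⟨k, hki, hkj⟩ := Fin.exists_ne_and_ne_of_two_lt i j hn
    have hcomm := transvection_mul_transvection hki.symm hkj h t 1
    rw [mul_one] at hcomm
    exact hφ.abs_le_of_mul_eq (transvection_mem_elementarySubgroup _ _)
      (transvection_mem_elementarySubgroup _ _) (transvection_mem_elementarySubgroup _ _) hcomm
  have hproducts := exists_forall_mem_elementaryProducts_le (φ := fun g => |φ g|)
    (fun _ hg _ hh => hφ.abs_mul_le hg hh) htransvection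
  obtain ⟨B, hB⟩ := hproducts 12
  obtain ⟨N, hN⟩ := exists_forall_eq_mul_blockEmbedding_mul (R := R) (Nat.le_of_succ_le hn)
  obtain ⟨C, hC⟩ := hproducts N
  refine ⟨C + (5 * B + 4 * c) + c + C + c, fun g hg => ?_⟩
  obtain ⟨e, he, M, e', he', rfl⟩ := hN g
  have heE := elementaryProducts_subset N he
  have heE' := elementaryProducts_subset N he'
  rw [Subgroup.mul_mem_cancel_right _ heE'] at hg
  have hM := (Subgroup.mul_mem_cancel_left _ heE).1 hg
  have hφM := hφ.abs_le_of_powersReturn (elementaryProducts_subset 12) hB hM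
    (powersReturn_blockEmbedding_castLEEmb hn M)
  linarith [hφ.abs_mul_le hg heE', hφ.abs_mul_le heE hM, hC e he, hC e' he']

variable [MulAction (SL (Fin n) R) X] [IsIsometricSMul (SL (Fin n) R) X] {δ : ℝ}

theorem bddAbove_displacement_or_fixesPointAtInfinity (hn : 3 ≤ n)
    (hX : IsFourPointHyperbolic X δ) (x : X) :
    BddAbove (Set.range (displacement x : SL (Fin n) R → ℝ)) ∨
      FixesPointAtInfinity (elementarySubgroup (Fin n) R) x := by
  refine or_iff_not_imp_right.2 fun hfix => ?_
  have htransvection (p : Fin n × Fin n) :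
      ∃ B, ∀ (h : p.1 ≠ p.2) (t : R), displacement x (transvection h t) ≤ B := by
    by_cases h : p.1 = p.2
    · exact ⟨0, fun h' => absurd h h'⟩
    · obtain ⟨B, hB⟩ := not_not.1
        (mt (fixesPointAtInfinity_of_not_bddAbove_transvection hn hX h) hfix)
      exact ⟨B, fun _ t => hB ⟨t, rfl⟩⟩
  choose b hb using htransvection
  obtain ⟨B, hB⟩ := Finite.exists_le b
  have hB' (i j : Fin n) (h : i ≠ j) (t : R) : displacement x (transvection h t) ≤ B :=
    (hb (i, j) h t).trans (hB (i, j))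
  obtain ⟨C, hC⟩ := not_not.1 (mt (fixesPointAtInfinity_of_not_bddAbove_blockEmbedding hX
    (not_surjective_castLEEmb hn) hB') hfix)
  obtain ⟨N, hN⟩ := exists_forall_eq_mul_blockEmbedding_mul (R := R) (Nat.le_of_succ_le hn)
  obtain ⟨D, hD⟩ := exists_forall_mem_elementaryProducts_le (c := 0)
    (fun g _ h _ => by simpa only [add_zero] using displacement_mul_le x g h) hB' N
  refine ⟨D + C + D, Set.forall_mem_range.2 fun g => ?_⟩
  obtain ⟨e, he, M, e', he', rfl⟩ := hN g
  exact (displacement_mul_le x _ e').trans (add_le_add ((displacement_mul_le x e _).trans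
    (add_le_add (hD e he) (hC ⟨M, rfl⟩))) (hD e' he'))

theorem FixesPointAtInfinity.exists_displacement_mul_self_le (hn : 3 ≤ n)
    (hX : IsFourPointHyperbolic X δ) {x : X}
    (hfix : FixesPointAtInfinity (elementarySubgroup (Fin n) R) x) :
    ∃ C, ∀ g ∈ elementarySubgroup (Fin n) R,
      displacement x (g * g) ≤ displacement x g + C := by
  obtain ⟨y, hy⟩ := hfix
  have hquasi : IsQuasimorphismOn (fun g : SL (Fin n) R => busemann x y (g • x))
      (elementarySubgroup (Fin n) R) (2 * δ) := fun g hg h _ => by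
    simp only [mul_smul]
    exact hX.abs_busemann_smul_sub_le (hy _ (inv_mem hg)) (h • x)
  obtain ⟨B, hB⟩ := hquasi.exists_abs_le hn
  refine ⟨2 * B + 2 * δ, fun g hg => ?_⟩
  have hle := hX.dist_add_busemann_le x y (g • x) ((g * g) • x)
  have hg₁ := abs_le.1 (hB g hg)
  have hg₂ := abs_le.1 (hB (g * g) (mul_mem hg hg))
  have hmax : max (dist x (g • x) + busemann x y ((g * g) • x)) (dist (g • x) ((g * g) • x)) ≤
      displacement x g + B := by
    refine max_le (add_le_add_right hg₂.2 _) ?_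
    rw [dist_smul_smul_eq_displacement, inv_mul_cancel_left]
    linarith
  rw [displacement]
  linarith

theorem tendsto_displacement_pow_div_zero_of_three_le (hn : 3 ≤ n)
    (hX : IsFourPointHyperbolic X δ) (x : X) (g : SL (Fin n) R) :
    Tendsto (fun k : ℕ => displacement x (g ^ k) / k) atTop (𝓝 0) := by
  obtain ⟨C, hC⟩ | hfix := bddAbove_displacement_or_fixesPointAtInfinity (R := R) hn hX x
  · exact tendsto_displacement_pow_div_zero one_ne_zero (C := C) fun j =>
      (hC ⟨_, rfl⟩).trans (le_add_of_nonneg_left dist_nonneg)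
  · obtain ⟨N, hN, hmem⟩ := exists_pow_mem_elementarySubgroup hn g
    obtain ⟨C, hC⟩ := hfix.exists_displacement_mul_self_le hn hX
    exact tendsto_displacement_pow_div_zero hN.ne' fun j =>
      hC _ (by simpa only [pow_mul] using pow_mem hmem j)

end Rigidity

end SLRigidity

theorem sln_no_hyperbolic_elements_general {R : Type*} [CommRing R] [Ring.HasFiniteQuotients R]
    {n : ℕ} (hn : 3 ≤ n) {X : Type*} [PseudoMetricSpace X] {δ : ℝ}
    (hX : SLRigidity.IsFourPointHyperbolic X δ)
    (ρ : Matrix.SpecialLinearGroup (Fin n) R →* (X ≃ᵢ X))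
    (g : Matrix.SpecialLinearGroup (Fin n) R) (x : X) :
    ¬ ∃ Kq Cq : ℝ, 1 ≤ Kq ∧ 0 ≤ Cq ∧
      ∀ k l : ℤ, dist k l / Kq - Cq ≤ dist (ρ (g ^ k) x) (ρ (g ^ l) x) ∧
        dist (ρ (g ^ k) x) (ρ (g ^ l) x) ≤ Kq * dist k l + Cq := by
  rintro ⟨Kq, Cq, hKq, -, hqi⟩
  let _ : MulAction (Matrix.SpecialLinearGroup (Fin n) R) X :=
    { smul := fun g x => ρ g x
      one_smul := fun x => by change ρ 1 x = x; rw [map_one]; rfl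
      mul_smul := fun g h x => by change ρ (g * h) x = ρ g (ρ h x); rw [map_mul]; rfl }
  have : IsIsometricSMul (Matrix.SpecialLinearGroup (Fin n) R) X := ⟨fun g => (ρ g).isometry⟩
  have hzero := SLRigidity.tendsto_displacement_pow_div_zero_of_three_le hn hX x g
  have hlower (k : ℕ) : 1 / Kq * k - Cq ≤ SLRigidity.displacement x (g ^ k) := by
    have h := (hqi 0 k).1
    rwa [zpow_zero, zpow_natCast, map_one, dist_comm (0 : ℤ), Int.dist_eq, Int.cast_natCast,
      Int.cast_zero, sub_zero, Nat.abs_cast, div_eq_mul_one_div, mul_comm] at h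
  exact (one_div_pos.2 (zero_lt_one.trans_le hKq)).not_ge
    (SLRigidity.nonpos_of_forall_mul_sub_le_displacement_pow hzero hlower)

/-- For `n ≥ 3`, in any isometric action of `SL(n, 𝓞 K)` on a geodesic
δ-hyperbolic space, no element acts hyperbolically: no orbit map `k ↦ gᵏ·x` of `ℤ` is a
quasi-isometric embedding. -/
theorem sln_no_hyperbolic_elements
    (K : Type*) [Field K] [NumberField K]
    (n : ℕ) (hn : 3 ≤ n)
    (X : Type*) [MetricSpace X]
    -- `X` is geodesic
    (hgeo : ∀ x y : X, ∃ f : ℝ → X, f 0 = x ∧ f (dist x y) = y ∧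
      ∀ s ∈ Set.Icc (0 : ℝ) (dist x y), ∀ t ∈ Set.Icc (0 : ℝ) (dist x y),
        dist (f s) (f t) = |s - t|)
    -- `X` is δ-hyperbolic (four-point condition)
    (δ : ℝ) (hδ : 0 ≤ δ)
    (hhyp : ∀ p₁ p₂ p₃ p₄ : X,
      dist p₁ p₄ + dist p₂ p₃ ≤
        max (dist p₁ p₂ + dist p₃ p₄) (dist p₁ p₃ + dist p₂ p₄) + 2 * δ)
    -- an action of `SL(n, 𝓞 K)` on `X` by isometries
    (ρ : Matrix.SpecialLinearGroup (Fin n) (𝓞 K) →* (X ≃ᵢ X))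
    (g : Matrix.SpecialLinearGroup (Fin n) (𝓞 K)) (x : X) :
    ¬ ∃ Kq Cq : ℝ, 1 ≤ Kq ∧ 0 ≤ Cq ∧
      ∀ k l : ℤ, dist k l / Kq - Cq ≤ dist (ρ (g ^ k) x) (ρ (g ^ l) x) ∧
        dist (ρ (g ^ k) x) (ρ (g ^ l) x) ≤ Kq * dist k l + Cq := by
  exact sln_no_hyperbolic_elements_general hn hhyp ρ g x
end
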